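/- Let n ≥ 1 be an 'odd' integer (i.e., q−1 does not divide n). Then at least one of the following holds: (i) π̃, ζ(n) and ζ(n,n) are algebraically independent over k̄; or (ii) there exists c ∈ k^× such that ζ(n)² − 2ζ(n,n) = c·π̃^{2n}. -/

import Mathlib

/-!
Let `L = k_∞(η)`, a complete ultrametric field, and consider entire power series in `t` over `L`
together with the Frobenius twist `τ`, which raises the coefficients to the power `q`. There are
entire series `Ω`, `X₀`, `Y₀` (`exists_period_functions`) and a polynomial `U` in `t` and `θ` with

* `Ω = (t - θ^q) Ω^τ` and `Ω(θ) = 1 / π̃`,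
* `X₀ = X₀^τ + U Ωⁿ` and `Y₀ = Y₀^τ + U Ωⁿ X₀^τ`,
* `X₀(θ) = Γ ζ(n) / π̃ⁿ` and `Y₀(θ) = Γ² ζ(n,n) / π̃²ⁿ`, with `Γ ∈ 𝔽_q[θ]` nonzero.

The polynomial `U` interpolates the power sums `S_d(n)`; it comes from the logarithmic derivative of
the Carlitz polynomials (`sum_powerSum_recursion`).

A criterion of Anderson–Brownawell–Papanikolas type shows that algebraic relations over `𝔽_q[θ]`
between the values `Ω(θ)`, `X₀(θ)`, `Y₀(θ)` come from algebraic relations between the functions over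
`𝔽_q(t, θ)`. Its linear form, `linear_independence_criterion`, is a transcendence argument with an
auxiliary function obtained from Siegel's lemma, whose leading coefficient is bounded above by the
Schwarz lemma and below by a linear dependence between its twists. Applied to monomials of bounded
weight it gives `algebraic_independence_criterion`.

A relation between the functions of minimal lexicographic degree is an eigenvector of a twisted
operator (`algIndep_of_no_solutions`). With `β = t - θ^q` this forces, for some power `P` of the
characteristic, a rational solution of `f^τ = β^(nP) (f - U^P)` or of
`f^τ = β^(2nP) (f - U^(2P))`. Then `v X₀^P - g Ω^(nP)`, respectively the analogous combination with
`X₀² - 2 Y₀`, is fixed by the twist for suitable polynomials `v`, `g`, so it is a polynomial over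
`𝔽_q`. Evaluation at `t = θ` (`value_of_twist_solution`) shows that `(ζ(n) / π̃ⁿ)^P` or
`((ζ(n)² - 2 ζ(n,n)) / π̃²ⁿ)^P` lies in `k`.

The first case contradicts `q - 1 ∤ n` by comparison of absolute values (`dvd_of_norm_eq`). In the
second case the same comparison gives `q - 1 ∣ 2n`, so that the quotient
`c = (ζ(n)² - 2 ζ(n,n)) / π̃²ⁿ` lies in `k_∞`; since it has a power `c^P` in `k`, it lies in `k`
(`rational_of_pow`). It is nonzero because `ζ(n)² - 2 ζ(n,n)` has absolute value one (`norm_zeta`).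
Finally, algebraic independence over `𝔽_q[θ]` extends to `k̄` (`algIndep_algebraicClosure`).
-/

/-!
Setting: `Fq` is a finite field with `q = Fintype.card Fq` elements and characteristic
`p = ringChar Fq`.  The field `k_∞ = 𝔽_q((1/θ))` is realized as `Kinf Fq`, the field of
formal Laurent series over `Fq` in the variable `u = θ⁻¹`; thus `theta Fq = u⁻¹` plays
the role of `θ` (it is the single Hahn series supported in degree `-1`), and polynomials
in `θ` are evaluated in `Kinf Fq` via `Polynomial.aeval (theta Fq)`.  `KinfBar Fq` is a
fixed algebraic closure `k̄_∞` of `k_∞`.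
-/

set_option synthInstance.maxHeartbeats 1000000
set_option maxHeartbeats 1000000

noncomputable section

variable (Fq : Type) [Field Fq] [Fintype Fq]

/-- `k_∞ = 𝔽_q((1/θ))`, with its `1/θ`-adic (valued) topology. -/
abbrev Kinf := LaurentSeries Fq

/-- `θ ∈ k_∞`, the inverse of the Laurent-series variable. -/
def theta : Kinf Fq := HahnSeries.single (-1 : ℤ) (1 : Fq)

/-- The multizeta value `ζ(n 0, …, n (d-1))`: the sum, over all `d`-tuples of monic
polynomials `a i ∈ 𝔽_q[θ]` with `deg (a 0) > deg (a 1) > … > deg (a (d-1)) ≥ 0`, of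
`1 / (a 0 ^ n 0 ⋯ a (d-1) ^ n (d-1))`, computed in `k_∞`. -/
def mzv (d : ℕ) (n : Fin d → ℕ) : Kinf Fq :=
  ∑' a : {a : Fin d → Polynomial Fq //
      (∀ i, (a i).Monic) ∧ ∀ i j : Fin d, i < j → (a j).degree < (a i).degree},
    (∏ i, Polynomial.aeval (theta Fq) (a.1 i) ^ n i)⁻¹

/-- A fixed algebraic closure `k̄_∞` of `k_∞`. -/
abbrev KinfBar := AlgebraicClosure (Kinf Fq)

/-- The image of `θ` in `k̄_∞`. -/
def thetaBar : KinfBar Fq := algebraMap (Kinf Fq) (KinfBar Fq) (theta Fq)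

/-- The fundamental period `π̃ = (−θ)^{q/(q−1)} ∏_{i≥1} (1−θ^{1−qⁱ})⁻¹` of the Carlitz
module, relative to a chosen `(q−1)`-st root `η` of `−θ` (so `(−θ)^{q/(q−1)} = η ^ q`);
the convergent product is computed in `k_∞` and mapped into `k̄_∞`. -/
def pitilde (η : KinfBar Fq) : KinfBar Fq :=
  η ^ Fintype.card Fq *
    algebraMap (Kinf Fq) (KinfBar Fq)
      (∏' i : ℕ, (1 - theta Fq ^ ((1 : ℤ) - (Fintype.card Fq : ℤ) ^ (i + 1)))⁻¹)

/-- `k = 𝔽_q(θ)`, as a subfield of `k̄_∞`. -/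
def kSub : Subfield (KinfBar Fq) :=
  Subfield.closure
    (Set.range (fun a : Fq => algebraMap (Kinf Fq) (KinfBar Fq) (algebraMap Fq (Kinf Fq) a)) ∪
      {thetaBar Fq})

/-- `k̄`, the algebraic closure of `k` inside `k̄_∞`. -/
def kbar : IntermediateField (kSub Fq) (KinfBar Fq) :=
  algebraicClosure (kSub Fq) (KinfBar Fq)

/-! ### Rational solutions of twisted difference equations -/

section DifferenceRational

open Polynomial

variable {K B : Type*} [Field K] [Field B] [Algebra K[X] B] [IsFractionRing K[X] B]

/-- The denominator `v` of a rational solution of a twisted equation is a unit, because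
`expand` multiplies degrees by `q`. -/
theorem isUnit_of_expand_dvd {q : ℕ} (hq : 2 ≤ q) {u v : K[X]} (hv : v ≠ 0)
    (h : IsCoprime u v) (hd : expand K q v ∣ expand K q u * v) : IsUnit v := by
  have h' : IsCoprime (expand K q v) (expand K q u) := (h.symm).map (expand K q).toRingHom
  have h2 := natDegree_le_of_dvd (h'.dvd_of_dvd_mul_left hd) hv
  rw [natDegree_expand] at h2
  have h3 : v.natDegree = 0 := by nlinarith
  rw [Polynomial.isUnit_iff_degree_eq_zero, degree_eq_natDegree hv, h3]; rfl

theorem eval_eq_zero_of_expand {q : ℕ} (hq : 2 ≤ q) {t : K} {e : ℕ} (he : 1 ≤ e) {g w : K[X]}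
    (h : expand K q g = (C t - X ^ q) ^ e * w) : g.eval t = 0 := by
  obtain ⟨s, hs⟩ := IsAlgClosed.exists_pow_nat_eq (algebraMap K (AlgebraicClosure K) t)
    (show 0 < q by omega)
  have h1 := congrArg (aeval s) h
  rw [expand_aeval, hs, aeval_algebraMap_apply] at h1
  simp only [map_mul, map_pow, map_sub, aeval_C, aeval_X, hs, sub_self] at h1
  rw [zero_pow (by omega), zero_mul] at h1
  simpa using h1

/-- A nonzero polynomial solution of `u(X^q) = (t - X^q)^e u(X)` is constant, with `e = 0`: for
`e ≥ 1` it would vanish at every `t^(q^j)`. -/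
theorem eq_const_of_expand_eq {q : ℕ} (hq : 2 ≤ q) {t : K}
    (ht : Function.Injective fun j : ℕ => t ^ q ^ j) {e : ℕ} {u : K[X]} (hu : u ≠ 0)
    (h : expand K q u = (C t - X ^ q) ^ e * u) : e = 0 ∧ ∃ c : K, u = C c := by
  have he : e = 0 := by
    by_contra he
    have h0 := eval_eq_zero_of_expand hq (Nat.one_le_iff_ne_zero.2 he) h
    have hr : ∀ j : ℕ, u.eval (t ^ q ^ j) = 0 := by
      intro j
      induction j with
      | zero => simpa using h0
      | succ j ih =>
        have := congrArg (eval (t ^ q ^ j)) h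
        rw [expand_eval, ← pow_mul, ← pow_succ] at this
        rw [this, eval_mul, ih, mul_zero]
    exact hu (Polynomial.eq_zero_of_infinite_isRoot u
      ((Set.infinite_range_of_injective ht).mono (by rintro _ ⟨j, rfl⟩; exact hr j)))
  refine ⟨he, ?_⟩
  subst he
  rw [pow_zero, one_mul] at h
  have h2 := congrArg natDegree h
  rw [natDegree_expand] at h2
  have h3 : u.natDegree = 0 := by nlinarith
  exact ⟨_, eq_C_of_natDegree_eq_zero h3⟩

theorem exists_coprime_fraction (f : B) : ∃ u v : K[X], v ≠ 0 ∧ IsCoprime u v ∧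
    f * algebraMap K[X] B v = algebraMap K[X] B u := by
  obtain ⟨u, v, h, rfl⟩ := IsFractionRing.exists_reduced_fraction (A := K[X]) f
  exact ⟨u, v, nonZeroDivisors.ne_zero v.2, h.isCoprime, IsLocalization.mk'_spec _ _ _⟩

/-- A rational solution of `τ f = (t - θ^q)^e (f - V)` with `V` polynomial in `θ` is itself a
polynomial in `θ`, and it vanishes at `θ = t`. Here `θ` is the variable `X`. -/
theorem mem_polynomial_of_twist {q : ℕ} (hq : 2 ≤ q) {t : K} {τ : B →+* B}
    (hτ : ∀ p : K[X], τ (algebraMap K[X] B p) = algebraMap K[X] B (expand K q p))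
    {e : ℕ} (he : 1 ≤ e) {f : B} {V : K[X]}
    (h : τ f = algebraMap K[X] B (C t - X ^ q) ^ e * (f - algebraMap K[X] B V)) :
    ∃ g : K[X], f = algebraMap K[X] B g ∧ g.eval t = 0 := by
  have hinj := IsFractionRing.injective K[X] B
  obtain ⟨u, v, hv, huv, hf⟩ := exists_coprime_fraction (K := K) f
  have h1 : expand K q u * v = (C t - X ^ q) ^ e * (u - V * v) * expand K q v := by
    apply hinj
    have := congrArg τ hf
    rw [map_mul, hτ, hτ, h] at this
    simp only [map_mul, map_pow, map_sub (algebraMap K[X] B) u, ← this, ← hf]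
    ring
  obtain ⟨w, hw⟩ := isUnit_of_expand_dvd hq hv huv (h1 ▸ dvd_mul_left _ _)
  have hfg : f = algebraMap K[X] B (u * ((w⁻¹ : K[X]ˣ) : K[X])) := by
    rw [map_mul, ← hf, mul_assoc, ← map_mul, ← hw, Units.mul_inv, map_one, mul_one]
  refine ⟨_, hfg, ?_⟩
  apply eval_eq_zero_of_expand hq he (w := u * ((w⁻¹ : K[X]ˣ) : K[X]) - V)
  apply hinj
  rw [← hτ, ← hfg, h, map_mul, map_pow, map_sub _ (u * _), ← hfg]

theorem twist_eigenvector_aux {q : ℕ} (hq : 2 ≤ q) {t : K} {τ : B →+* B}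
    (hτ : ∀ p : K[X], τ (algebraMap K[X] B p) = algebraMap K[X] B (expand K q p))
    (ht : Function.Injective fun j : ℕ => t ^ q ^ j) {e : ℕ} {r : B}
    (hr : r ≠ 0) (h : τ r = algebraMap K[X] B (C t - X ^ q) ^ e * r) :
    e = 0 ∧ ∃ c : K, r = algebraMap K[X] B (C c) := by
  have hinj := IsFractionRing.injective K[X] B
  obtain ⟨u, v, hv, huv, hf⟩ := exists_coprime_fraction (K := K) r
  have h1 : expand K q u * v = (C t - X ^ q) ^ e * u * expand K q v := by
    apply hinj
    have := congrArg τ hf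
    rw [map_mul, hτ, hτ, h] at this
    simp only [map_mul, map_pow, ← this, ← hf]
    ring
  obtain ⟨w, hw⟩ := isUnit_of_expand_dvd hq hv huv (h1 ▸ dvd_mul_left _ _)
  have hfg : r = algebraMap K[X] B (u * ((w⁻¹ : K[X]ˣ) : K[X])) := by
    rw [map_mul, ← hf, mul_assoc, ← map_mul, ← hw, Units.mul_inv, map_one, mul_one]
  have := eq_const_of_expand_eq hq ht (e := e) (u := u * ((w⁻¹ : K[X]ˣ) : K[X]))
    (by rintro h0; rw [h0, map_zero] at hfg; exact hr hfg)
    (by apply hinj; rw [← hτ, ← hfg, h, map_mul, map_pow, ← hfg])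
  refine ⟨this.1, ?_⟩
  obtain ⟨c, hc⟩ := this.2
  exact ⟨c, by rw [hfg, hc]⟩

/-- The only rational eigenvectors of the twist whose eigenvalue is a power (of any sign) of
`t - θ^q` are the elements of `K`. -/
theorem twist_eigenvector {q : ℕ} (hq : 2 ≤ q) {t : K} {τ : B →+* B}
    (hτ : ∀ p : K[X], τ (algebraMap K[X] B p) = algebraMap K[X] B (expand K q p))
    (ht : Function.Injective fun j : ℕ => t ^ q ^ j) {a b : ℕ} {r : B}
    (hr : r ≠ 0)
    (h : τ r * algebraMap K[X] B (C t - X ^ q) ^ a = algebraMap K[X] B (C t - X ^ q) ^ b * r) :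
    a = b ∧ ∃ c : K, r = algebraMap K[X] B (C c) := by
  have hβ : algebraMap K[X] B (C t - X ^ q) ≠ 0 := by
    intro h0
    have h1 := IsFractionRing.injective K[X] B (h0.trans (map_zero _).symm)
    have := congrArg (fun p => coeff p q) h1
    simp [coeff_C, show q ≠ 0 by omega] at this
  set β := algebraMap K[X] B (C t - X ^ q)
  rcases le_total a b with hab | hab
  · obtain ⟨e, rfl⟩ := Nat.exists_eq_add_of_le hab
    have := twist_eigenvector_aux hq hτ ht (e := e) hr (by
      apply mul_right_cancel₀ (pow_ne_zero a hβ)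
      rw [h, pow_add]; ring)
    exact ⟨by omega, this.2⟩
  · obtain ⟨e, rfl⟩ := Nat.exists_eq_add_of_le hab
    have hτr : τ r ≠ 0 := by simpa using hr
    have := twist_eigenvector_aux hq hτ ht (e := e) (r := r⁻¹) (inv_ne_zero hr) (by
      rw [map_inv₀]
      field_simp
      apply mul_right_cancel₀ (pow_ne_zero b hβ)
      rw [pow_add] at h
      linear_combination -h)
    refine ⟨by omega, ?_⟩
    obtain ⟨c, hc⟩ := this.2
    refine ⟨c⁻¹, ?_⟩
    have h1 : r * algebraMap K[X] B (C c) = 1 := by rw [← hc, mul_inv_cancel₀ hr]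
    have hc0 : c ≠ 0 := by rintro rfl; simp at h1
    apply mul_right_cancel₀ (b := algebraMap K[X] B (C c))
    · intro h0; rw [h0] at h1; simp at h1
    · rw [h1, ← map_mul, ← C_mul, inv_mul_cancel₀ hc0]; simp

end DifferenceRational

/-! ### Eigenvectors of affine twists -/

section Eigenvectors

open Polynomial

/-- The endomorphism of `S[X]` acting as `σ` on coefficients and by `X ↦ a (X - v)`. -/
noncomputable def affineTwist {S : Type*} [CommRing S] (σ : S →+* S) (a v : S) : S[X] →+* S[X] :=
  eval₂RingHom (C.comp σ) (C a * (X - C v))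

/-- Every `σ`-eigenvector in `S` whose eigenvalue is a power (of any sign) of `β` is a constant
from `K`, with eigenvalue `1`. -/
def TrivialEigenvectors {K S : Type*} [Field K] [CommRing S] (σ : S →+* S) (β : S)
    (c : K →+* S) : Prop :=
  ∀ s : S, s ≠ 0 → ∀ i j : ℕ, σ s * β ^ i = β ^ j * s → i = j ∧ ∃ κ : K, s = c κ

variable {K S : Type*} [Field K] [CommRing S]

theorem affineTwist_C (σ : S →+* S) (a v s : S) : affineTwist σ a v (C s) = C (σ s) := by
  simp [affineTwist]

theorem affineTwist_X (σ : S →+* S) (a v : S) : affineTwist σ a v X = C a * (X - C v) := by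
  simp [affineTwist]

theorem affineTwist_monomial (σ : S →+* S) (a v s : S) (i : ℕ) :
    affineTwist σ a v (monomial i s) = C (σ s * a ^ i) * (X - C v) ^ i := by
  rw [← C_mul_X_pow_eq_monomial, map_mul, map_pow, affineTwist_C, affineTwist_X, mul_pow]
  simp only [C_mul, C_pow]; ring

theorem natDegree_affineTwist_le (σ : S →+* S) (a v : S) (R : S[X]) :
    (affineTwist σ a v R).natDegree ≤ R.natDegree := by
  conv_lhs => rw [R.as_sum_range' _ (Nat.lt_succ_self _), map_sum]
  refine natDegree_sum_le_of_forall_le _ _ fun i hi => ?_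
  rw [affineTwist_monomial]
  refine natDegree_mul_le_of_le (m := 0) (natDegree_C _).le (natDegree_pow_le_of_le i
    (natDegree_X_sub_C_le v)) |>.trans ?_
  have := Finset.mem_range.1 hi
  omega

theorem coeff_affineTwist_of_le (σ : S →+* S) (a v : S) (R : S[X]) {N : ℕ}
    (hN : R.natDegree ≤ N) : (affineTwist σ a v R).coeff N = σ (R.coeff N) * a ^ N := by
  have hR := R.as_sum_range' (N + 1) (by omega)
  conv_lhs => rw [hR, map_sum]
  rw [Finset.sum_range_succ, coeff_add, finsetSum_coeff, Finset.sum_eq_zero, zero_add,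
    affineTwist_monomial, coeff_C_mul]
  · have : ((X - C v) ^ N).coeff N = 1 := by
      have := coeff_X_add_C_pow (-v) N N
      simpa [sub_eq_add_neg] using this
    rw [this, mul_one]
  · intro i hi
    rw [affineTwist_monomial, coeff_C_mul,
      coeff_eq_zero_of_natDegree_lt (p := (X - C v) ^ i), mul_zero]
    exact (natDegree_pow_le_of_le i (natDegree_X_sub_C_le v)).trans_lt
      (by have := Finset.mem_range.1 hi; omega)

theorem X_sub_C_pow_eq_expand {p : ℕ} [hp : Fact p.Prime] [CharP S p] (v : S) (i b' : ℕ) :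
    (X - C v) ^ (p ^ i * b') = expand S (p ^ i) ((X - C (v ^ p ^ i)) ^ b') := by
  rw [pow_mul, sub_pow_char_pow, map_pow, map_sub, expand_X, expand_C, C_pow]

theorem coeff_X_sub_C_pow_gap {p : ℕ} [hp : Fact p.Prime] [CharP S p] (v : S) {i b' j : ℕ}
    (hb : 1 ≤ b') (h1 : p ^ i * b' - p ^ i < j) (h2 : j < p ^ i * b') :
    ((X - C v) ^ (p ^ i * b')).coeff j = 0 := by
  rw [X_sub_C_pow_eq_expand, coeff_expand (pow_pos hp.out.pos i)]
  rw [if_neg]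
  rintro ⟨m, rfl⟩
  have hP := pow_pos hp.out.pos i
  have h3 : m < b' := lt_of_mul_lt_mul_left h2 (Nat.zero_le _)
  have h4 : p ^ i * (b' - 1) < p ^ i * m := by rwa [Nat.mul_sub, mul_one]
  have := lt_of_mul_lt_mul_left h4 (Nat.zero_le _)
  omega

theorem coeff_X_sub_C_pow_next {p : ℕ} [hp : Fact p.Prime] [CharP S p] (v : S) {i b' : ℕ}
    (hb : 1 ≤ b') :
    ((X - C v) ^ (p ^ i * b')).coeff (p ^ i * b' - p ^ i) = - (b' * v ^ p ^ i) := by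
  have hP := pow_pos hp.out.pos i
  have h4 : p ^ i * b' - p ^ i = (b' - 1) * p ^ i := by rw [mul_comm, Nat.sub_mul, one_mul]
  rw [X_sub_C_pow_eq_expand, h4, coeff_expand_mul hP]
  obtain ⟨m, rfl⟩ := Nat.exists_eq_add_of_le' hb
  have := coeff_X_add_C_pow (-(v ^ p ^ i)) (m + 1) m
  rw [C_neg, ← sub_eq_add_neg] at this
  rw [Nat.add_sub_cancel, this]
  simp only [Nat.add_sub_cancel_left, pow_one, Nat.choose_succ_self_right]
  push_cast
  ring

/-- Triviality of eigenvectors passes from `S` to `S[X]` with the affine twist, unless some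
equation `σ f = β^(e p^i) (f - v^(p^i))` is solvable in `S`. If an eigenvector had degree
`b = p^i b'` with `p ∤ b'` and `b' ≥ 1`, comparing its coefficients at `b` and `b - p^i` would
produce such an `f`. -/
theorem trivialEigenvectors_polynomial [IsDomain S] {p : ℕ} [hp : Fact p.Prime] [CharP S p]
    [CharP K p] {σ : S →+* S} {β : S} (hβ : β ≠ 0) {c : K →+* S} (hc : ∀ x, σ (c x) = c x)
    (hS : TrivialEigenvectors σ β c) {e : ℕ} (he : 1 ≤ e) (v : S)
    (hno : ∀ i : ℕ, ∀ f : S, σ f ≠ β ^ (e * p ^ i) * (f - v ^ p ^ i)) :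
    TrivialEigenvectors (affineTwist σ (β ^ e) v) (C β) (C.comp c) := by
  intro R hR A D h
  have hσ0 : ∀ (j : ℕ), (affineTwist σ (β ^ e) v R).coeff j * β ^ A = β ^ D * R.coeff j := by
    intro j
    have := congrArg (fun P => coeff P j) h
    simpa only [← C_pow, coeff_mul_C, coeff_C_mul] using this
  set b := R.natDegree with hb
  have hlead := hσ0 b
  rw [coeff_affineTwist_of_le _ _ _ _ hb.ge, mul_assoc, ← pow_mul, ← pow_add] at hlead
  obtain ⟨hAD, κ, hκ⟩ := hS _ (by simpa [hb] using hR) _ _ hlead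
  rcases Nat.eq_zero_or_pos b with hb0 | hb0
  · refine ⟨by rw [hb0] at hAD; simpa using hAD, κ, ?_⟩
    rw [hb0] at hκ
    rw [eq_C_of_natDegree_eq_zero (p := R) (hb ▸ hb0), hκ]; rfl
  exfalso
  have hκ0 : κ ≠ 0 := by
    rintro rfl
    rw [map_zero] at hκ
    exact hR (leadingCoeff_eq_zero.1 hκ)
  obtain ⟨i, b', hpb, hbb⟩ := Nat.exists_eq_pow_mul_and_not_dvd hb0.ne' p hp.out.ne_one
  have hb' : 1 ≤ b' := Nat.one_le_iff_ne_zero.2 (by rintro rfl; simp at hpb)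
  have hP := pow_pos hp.out.pos i
  set P := p ^ i with hPdef
  have hPb : P ≤ b := by rw [hbb]; exact Nat.le_mul_of_pos_right _ hb'
  have hsplit : affineTwist σ (β ^ e) v R = affineTwist σ (β ^ e) v R.eraseLead +
      C (c κ * (β ^ e) ^ b) * (X - C v) ^ (P * b') := by
    conv_lhs => rw [← eraseLead_add_monomial_natDegree_leadingCoeff R]
    rw [map_add, affineTwist_monomial, ← hb, leadingCoeff, ← hb, hκ, hc, ← hbb]
  have hcoeff_ne : ∀ j, j ≠ b → R.eraseLead.coeff j = R.coeff j := fun j hj =>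
    eraseLead_coeff_of_ne j hj
  have hdeg : R.eraseLead.natDegree ≤ b - P := by
    by_contra hcon
    push Not at hcon
    set j := R.eraseLead.natDegree with hj
    have hne : R.eraseLead ≠ 0 := by
      intro h0; rw [h0] at hj; simp at hj; omega
    have hjb : j < b := by
      have := eraseLead_natDegree_le R
      omega
    have h1 := hσ0 j
    rw [hsplit, coeff_add, coeff_C_mul, coeff_X_sub_C_pow_gap v hb' (by rw [← hbb]; exact hcon)
      (by rw [← hbb]; exact hjb), mul_zero, add_zero, coeff_affineTwist_of_le _ _ _ _ hj.ge,
      mul_assoc, ← pow_mul, ← pow_add, ← hcoeff_ne j hjb.ne] at h1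
    have h2 := (hS _ (by simpa [hj] using hne) _ _ h1).1
    have h3 : e * j < e * b := Nat.mul_lt_mul_of_pos_left hjb he
    omega
  have h1 := hσ0 (b - P)
  rw [hsplit, coeff_add, coeff_affineTwist_of_le _ _ _ _ hdeg, coeff_C_mul] at h1
  conv at h1 => lhs; arg 1; arg 2; rw [hbb]
  rw [coeff_X_sub_C_pow_next v hb', hcoeff_ne _ (by omega)] at h1
  set r := R.coeff (b - P)
  have hbK : (b' : K) ≠ 0 := by
    rw [Ne, CharP.cast_eq_zero_iff K p]; exact hpb
  refine hno i (c (-(b' * κ)⁻¹) * r) ?_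
  have hσr : σ r = β ^ (e * P) * (r + b' * v ^ P * c κ) := by
    apply mul_right_cancel₀ (pow_ne_zero (e * (b - P) + A) hβ)
    have e1 : β ^ D = β ^ (e * P) * β ^ (e * (b - P) + A) := by
      rw [← pow_add, ← add_assoc, ← mul_add, Nat.add_sub_cancel' hPb, hAD]
    have e2 : (β ^ e) ^ (P * b') * β ^ A = β ^ (e * P) * β ^ (e * (b - P) + A) := by
      rw [← e1, ← hbb, ← pow_mul, ← pow_add, hAD]
    rw [e1, add_mul, ← pow_mul, mul_assoc, ← pow_add] at h1
    linear_combination h1 + c κ * (b' * v ^ P) * e2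
  have hcc : c (-(b' * κ)⁻¹) * (b' * c κ) = -1 := by
    rw [← map_natCast c b', ← map_mul, ← map_mul, neg_mul, inv_mul_cancel₀ (mul_ne_zero hbK hκ0)]
    simp
  rw [map_mul, hc, hσr]
  linear_combination β ^ (e * P) * v ^ P * hcc

end Eigenvectors

/-! ### The equation for the second variable -/

section Eigenvectors2

open Polynomial

variable {K S : Type*} [Field K] [CommRing S]

/-- A solution `s ∈ S[X]` of the equation attached to the second variable yields a solution in
`S` of a one-variable equation, by comparison of the coefficients of `s` at `2 p^i`, `p^i`
and `0`. -/
theorem quadratic_reduction [IsDomain S] {p : ℕ} [hp : Fact p.Prime] [CharP S p]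
    [CharP K p] {σ : S →+* S} {β : S} (hβ : β ≠ 0) {c : K →+* S} (hc : ∀ x, σ (c x) = c x)
    (hS : TrivialEigenvectors σ β c) {n : ℕ} (hn : 1 ≤ n) (u : S)
    (hno : ∀ i : ℕ, ∀ f : S, σ f ≠ β ^ (n * p ^ i) * (f - u ^ p ^ i)) {i : ℕ} {s : S[X]}
    (hs : affineTwist σ (β ^ n) u s =
      (C β) ^ (2 * n * p ^ i) * (s - (C u * X - C (u ^ 2)) ^ p ^ i)) :
    ∃ W : S, σ W = β ^ (2 * n * p ^ i) * (W - (u ^ 2) ^ p ^ i) := by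
  have hP := pow_pos hp.out.pos i
  have hco : ∀ j, (affineTwist σ (β ^ n) u s).coeff j = β ^ (2 * n * p ^ i) *
      (s.coeff j - (if j = p ^ i then u ^ p ^ i else 0) +
        (if j = 0 then (u ^ 2) ^ p ^ i else 0)) := by
    intro j
    rw [hs, ← C_pow, coeff_C_mul, sub_pow_char_pow, mul_pow, ← C_pow, ← C_pow]
    simp only [coeff_sub, coeff_C_mul, coeff_X_pow, coeff_C, mul_ite, mul_one, mul_zero]
    ring
  set P := p ^ i with hPdef
  -- the degree of `s` exceeds `P`, for otherwise its coefficient at `P` would be such an `f`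
  have hdeg : P < s.natDegree := by
    by_contra hcon
    push Not at hcon
    have h1 := hco P
    rw [coeff_affineTwist_of_le _ _ _ _ hcon, if_pos rfl, if_neg hP.ne', add_zero] at h1
    refine hno i (s.coeff P) (mul_right_cancel₀ (pow_ne_zero (n * P) hβ) ?_)
    rw [← pow_mul] at h1
    rw [h1, show 2 * n * P = n * P + n * P by ring, pow_add]; ring
  have hs0 : s ≠ 0 := by rintro rfl; simp at hdeg
  have hlead : ∀ (r : S[X]) (N : ℕ), r.natDegree ≤ N → r.coeff N ≠ 0 → 
      (affineTwist σ (β ^ n) u r).coeff N = β ^ (2 * n * P) * r.coeff N → N = 2 * P ∧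
        ∃ κ : K, r.coeff N = c κ := by
    intro r N hr hr0 h1
    rw [coeff_affineTwist_of_le _ _ _ _ hr, ← pow_mul] at h1
    obtain ⟨h2, h3⟩ := hS _ hr0 _ _ h1
    refine ⟨?_, h3⟩
    have : n * N = n * (2 * P) := by rw [h2]; ring
    exact Nat.eq_of_mul_eq_mul_left hn this
  obtain ⟨hN, κ, hκ⟩ := hlead s s.natDegree le_rfl (by simpa using hs0) (by
    rw [hco, if_neg hdeg.ne', if_neg (by omega)]; ring)
  set Q := s.eraseLead with hQ
  have hsQ : s = Q + monomial (2 * P) (c κ) := by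
    rw [hQ, ← hκ, ← hN]
    exact (eraseLead_add_monomial_natDegree_leadingCoeff s).symm
  have hQdeg : Q.natDegree < 2 * P := by
    have := eraseLead_natDegree_le s
    rw [← hQ] at this
    omega
  have hcoQ : ∀ j, (affineTwist σ (β ^ n) u Q).coeff j = β ^ (2 * n * P) *
      (Q.coeff j + (if j = P then (2 * c κ - 1) * u ^ P else 0) +
        (if j = 0 then (1 - c κ) * (u ^ 2) ^ P else 0)) := by
    intro j
    have h1 := hco j
    have hexp : (X - C u) ^ (2 * P) = X ^ (2 * P) - C (2 * u ^ P) * X ^ P + C ((u ^ 2) ^ P) := by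
      rw [mul_comm, pow_mul, sub_pow_char_pow]
      simp only [C_mul, C_pow, map_ofNat]
      ring
    rw [hsQ, map_add, affineTwist_monomial, hexp, coeff_add, coeff_C_mul, hc, ← pow_mul,
      show n * (2 * P) = 2 * n * P by ring] at h1
    simp only [coeff_add, coeff_sub, coeff_C_mul, coeff_X_pow, coeff_C, coeff_monomial] at h1
    simp only [eq_comm (a := 2 * P) (b := j)] at h1
    rw [eq_sub_of_add_eq h1]
    split_ifs <;> ring
  have hQP : Q.natDegree ≤ P := by
    by_contra hcon
    push Not at hcon
    have hQ0 : Q ≠ 0 := by intro h0; rw [h0] at hcon; simp at hcon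
    have := (hlead Q Q.natDegree le_rfl (by simpa using hQ0) (by
      rw [hcoQ, if_neg hcon.ne', if_neg (by omega)]; ring)).1
    omega
  have hP1 := hcoQ P
  rw [coeff_affineTwist_of_le _ _ _ _ hQP, if_pos rfl, if_neg hP.ne', add_zero, ← pow_mul] at hP1
  have hPσ : σ (Q.coeff P) = β ^ (n * P) * (Q.coeff P + (2 * c κ - 1) * u ^ P) := by
    refine mul_right_cancel₀ (pow_ne_zero (n * P) hβ) ?_
    rw [hP1, show 2 * n * P = n * P + n * P by ring, pow_add]; ring
  have h2κ : 2 * κ - 1 = 0 := by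
    by_contra hne
    refine hno i (c (-(2 * κ - 1)⁻¹) * Q.coeff P) ?_
    have hcc : c (-(2 * κ - 1)⁻¹) * (2 * c κ - 1) = -1 := by
      have : 2 * c κ - 1 = c (2 * κ - 1) := by
        rw [map_sub, map_mul, map_one, map_ofNat]
      rw [this, ← map_mul, neg_mul, inv_mul_cancel₀ hne]; simp
    rw [map_mul, hc, hPσ]
    linear_combination β ^ (n * p ^ i) * u ^ P * hcc
  have h2c : 2 * c κ - 1 = 0 := by
    have : 2 * c κ - 1 = c (2 * κ - 1) := by
      rw [map_sub, map_mul, map_one, map_ofNat]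
    rw [this, h2κ, map_zero]
  have hQPz : Q.coeff P = 0 := by
    by_contra h0
    have := (hlead Q P hQP h0 (by rw [hcoQ, if_pos rfl, if_neg hP.ne', h2c]; ring)).1
    omega
  have hQz : Q.natDegree = 0 := by
    by_contra h0
    have hQ0 : Q ≠ 0 := by intro h; rw [h] at h0; simp at h0
    have hne : Q.natDegree ≠ P := by
      intro h; rw [← h] at hQPz; exact hQ0 (leadingCoeff_eq_zero.1 hQPz)
    have := (hlead Q Q.natDegree le_rfl (by simpa using hQ0) (by
      rw [hcoQ, if_neg hne, if_neg h0]; ring)).1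
    omega
  have h0 := hcoQ 0
  rw [coeff_affineTwist_of_le _ _ _ _ hQz.le, if_neg hP.ne, if_pos rfl, pow_zero, mul_one,
    add_zero] at h0
  refine ⟨-2 * Q.coeff 0, ?_⟩
  rw [map_mul, h0, map_neg, map_ofNat]
  linear_combination β ^ (2 * n * P) * (u ^ 2) ^ P * h2c

end Eigenvectors2

/-! ### Minimal algebraic relations -/

section MinimalRelation

open Polynomial

theorem natDegree_sub_lex {S : Type*} [CommRing S] {R R' : S[X]} (h : R.natDegree = R'.natDegree) :
    (R - R').natDegree < R.natDegree ∨ ((R - R').natDegree = R.natDegree ∧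
      (R - R').leadingCoeff = R.leadingCoeff - R'.leadingCoeff) := by
  rcases lt_or_eq_of_le ((natDegree_sub_le R R').trans (max_le le_rfl h.ge)) with h1 | h1
  · exact Or.inl h1
  · refine Or.inr ⟨h1, ?_⟩
    rw [leadingCoeff, h1, coeff_sub, leadingCoeff, leadingCoeff, ← h]

theorem affineTwist_natDegree {S : Type*} [CommRing S] [IsDomain S] {σ : S →+* S}
    (hσ : Function.Injective σ) {a : S} (ha : a ≠ 0) (v : S) (R : S[X]) :
    (affineTwist σ a v R).natDegree = R.natDegree ∧
      (affineTwist σ a v R).leadingCoeff = σ R.leadingCoeff * a ^ R.natDegree := by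
  have h1 := coeff_affineTwist_of_le σ a v R le_rfl
  have h2 : (affineTwist σ a v R).natDegree = R.natDegree := by
    by_cases hR : R = 0
    · simp [hR]
    refine le_antisymm (natDegree_affineTwist_le σ a v R) (le_natDegree_of_ne_zero ?_)
    rw [h1]
    refine mul_ne_zero ?_ (pow_ne_zero _ ha)
    rw [map_ne_zero_iff σ hσ]
    simpa using hR
  exact ⟨h2, by rw [leadingCoeff, h2, h1]; rfl⟩

theorem affineTwist_injective {S : Type*} [CommRing S] [IsDomain S] {σ : S →+* S}
    (hσ : Function.Injective σ) {a : S} (ha : a ≠ 0) (v : S) :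
    Function.Injective (affineTwist σ a v) := by
  rw [injective_iff_map_eq_zero]
  intro R hR
  have := (affineTwist_natDegree hσ ha v R).2
  rw [hR, leadingCoeff_zero, eq_comm, mul_eq_zero, or_iff_left (pow_ne_zero _ ha),
    map_eq_zero_iff σ hσ, leadingCoeff_eq_zero] at this
  exact this

theorem coeff_affineTwist_zero {S : Type*} [CommRing S] (σ : S →+* S) (a : S) (R : S[X]) (j : ℕ) :
    (affineTwist σ a 0 R).coeff j = σ (R.coeff j) * a ^ j := by
  conv_lhs => rw [R.as_sum_range, map_sum]
  simp only [affineTwist_monomial, C_0, sub_zero, finsetSum_coeff, coeff_C_mul, coeff_X_pow,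
    mul_ite, mul_one, mul_zero]
  rw [Finset.sum_ite_eq]
  split_ifs with h
  · rfl
  · rw [coeff_eq_zero_of_natDegree_lt (by simpa using h)]; simp

theorem eval₂_affineTwist {S F : Type*} [CommRing S] [CommRing F] {σ : S →+* S} {φ : F →+* F}
    {ε : S →+* F} (h : ∀ s, ε (σ s) = φ (ε s)) {a v : S} {x : F} (hx : φ x = ε a * (x - ε v))
    (R : S[X]) : eval₂RingHom ε x (affineTwist σ a v R) = φ (eval₂RingHom ε x R) := by
  have : (eval₂RingHom ε x).comp (affineTwist σ a v) = φ.comp (eval₂RingHom ε x) := by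
    apply Polynomial.ringHom_ext
    · intro s
      simp [affineTwist_C, h]
    · simp [affineTwist_X, hx]
  exact congrArg (fun f => f R) this

/-- Degree in the outermost variable, then the degrees of the successive leading coefficients. -/
noncomputable def lexDegree {B : Type*} [CommRing B] (R : B[X][X][X]) : ℕ ×ₗ ℕ ×ₗ ℕ :=
  toLex (R.natDegree, toLex (R.leadingCoeff.natDegree, R.leadingCoeff.leadingCoeff.natDegree))

/-- The coefficient in `B` of the lexicographically leading monomial. -/
noncomputable def lexLeadingCoeff {B : Type*} [CommRing B] (R : B[X][X][X]) : B :=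
  R.leadingCoeff.leadingCoeff.leadingCoeff

theorem lexDegree_C_mul {B : Type*} [Field B] {x : B} (hx : x ≠ 0) (R : B[X][X][X]) :
    lexDegree (C (C (C x)) * R) = lexDegree R := by
  simp only [lexDegree, leadingCoeff_mul, leadingCoeff_C]
  rw [natDegree_C_mul (by simpa using hx), natDegree_C_mul (by simpa using hx),
    natDegree_C_mul (by simpa using hx)]

theorem lexDegree_sub_lt {B : Type*} [Field B] {R R' : B[X][X][X]}
    (h : lexDegree R = lexDegree R') (h' : lexLeadingCoeff R = lexLeadingCoeff R')
    (hne : R ≠ R') : lexDegree (R - R') < lexDegree R := by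
  simp only [lexDegree, EmbeddingLike.apply_eq_iff_eq, Prod.mk.injEq] at h
  obtain ⟨h1, h2, h3⟩ := h
  have hne3 : lexLeadingCoeff (R - R') ≠ 0 := by
    have := sub_ne_zero.2 hne
    simpa [lexLeadingCoeff] using this
  unfold lexDegree
  rw [Prod.Lex.toLex_lt_toLex]
  rcases natDegree_sub_lex h1 with hh | ⟨hh, hl⟩
  · exact Or.inl hh
  refine Or.inr ⟨hh, ?_⟩
  simp only [Prod.Lex.toLex_lt_toLex, hl]
  rcases natDegree_sub_lex h2 with hh | ⟨hh, hl2⟩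
  · exact Or.inl hh
  refine Or.inr ⟨hh, ?_⟩
  rw [hl2]
  rcases natDegree_sub_lex h3 with hh | ⟨hh, hl3⟩
  · exact hh
  · unfold lexLeadingCoeff at h' hne3
    rw [hl, hl2, hl3, h', sub_self] at hne3
    exact absurd rfl hne3

/-- The functions `L₁, L₂, Ω` are algebraically independent over `B` when neither of the two
families of twisted equations is solvable in `B`. A monic relation of minimal lexicographic degree
is an eigenvector of the induced twist, so its coefficients are constants and it is a single
monomial in `Ω`, which is absurd. -/
theorem algIndep_of_no_solutions {K B 𝓕 : Type*} [Field K] [Field B] [Field 𝓕]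
    {p : ℕ} [hp : Fact p.Prime] [CharP B p] [CharP K p]
    {τ : B →+* B} {β : B} (hβ : β ≠ 0) {c : K →+* B} (hc : ∀ x, τ (c x) = c x)
    (hB : TrivialEigenvectors τ β c) {n : ℕ} (hn : 1 ≤ n) (u : B)
    (hno : ∀ i : ℕ, ∀ f : B, τ f ≠ β ^ (n * p ^ i) * (f - u ^ p ^ i))
    (hno2 : ∀ i : ℕ, ∀ f : B, τ f ≠ β ^ (2 * n * p ^ i) * (f - (u ^ 2) ^ p ^ i))
    {ι : B →+* 𝓕} {φ : 𝓕 →+* 𝓕} (hι : ∀ b, ι (τ b) = φ (ι b)) {Ω L₁ L₂ : 𝓕}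
    (hΩ0 : Ω ≠ 0) (hΩ : Ω = ι β * φ Ω) (hL₁ : φ L₁ = ι β ^ n * (L₁ - ι u))
    (hL₂ : φ L₂ = ι β ^ (2 * n) * (L₂ - ι u * L₁ + ι u ^ 2)) :
    Function.Injective (eval₂RingHom (eval₂RingHom (eval₂RingHom ι L₁) L₂) Ω) := by
  set Tx := affineTwist τ (β ^ n) u with hTx
  have hTxe : TrivialEigenvectors Tx (C β) (C.comp c) :=
    trivialEigenvectors_polynomial hβ hc hB hn u hno
  have hβx : (C β : B[X]) ≠ 0 := by simpa using hβ
  have hβy : (C (C β) : B[X][X]) ≠ 0 := by simpa using hβ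
  set v : B[X] := C u * X - C (u ^ 2) with hv
  set Ty := affineTwist Tx ((C β) ^ (2 * n)) v with hTy
  have hcx : ∀ x, Tx ((C.comp c) x) = (C.comp c) x := fun x => by
    simp [hTx, affineTwist_C, hc]
  have hTye : TrivialEigenvectors Ty (C (C β)) (C.comp (C.comp c)) := by
    refine trivialEigenvectors_polynomial (p := p) hβx hcx hTxe (by omega) v ?_
    intro i f hf
    obtain ⟨W, hW⟩ := quadratic_reduction hβ hc hB hn u hno hf
    exact hno2 i W hW
  have hTxi : Function.Injective Tx := affineTwist_injective τ.injective (pow_ne_zero _ hβ) u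
  have hTyi : Function.Injective Ty := affineTwist_injective hTxi (pow_ne_zero _ hβx) v
  set Tw := affineTwist Ty (C (C β⁻¹)) 0 with hTw
  set ev := eval₂RingHom (eval₂RingHom (eval₂RingHom ι L₁) L₂) Ω with hev
  have hιβ : ι β ≠ 0 := by simpa using hβ
  have hevT : ∀ R, ev (Tw R) = φ (ev R) := by
    refine eval₂_affineTwist (eval₂_affineTwist (eval₂_affineTwist hι ?_) ?_) ?_
    · rw [hL₁, map_pow]
    · rw [hL₂, hv]
      rw [← C_pow, coe_eval₂RingHom, eval₂_C, eval₂_sub, eval₂_mul, eval₂_C, eval₂_C, eval₂_X,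
        map_pow, map_pow]
      ring
    · simp only [map_zero, sub_zero]
      conv_rhs => rw [hΩ]
      simp [hιβ]
  rw [injective_iff_map_eq_zero]
  by_contra! hcon
  obtain ⟨R₀, hR₀, hR₀0⟩ := hcon
  obtain ⟨R₁, ⟨hR₁, hR₁0⟩, hmin⟩ := (wellFounded_lt (α := ℕ ×ₗ ℕ ×ₗ ℕ)).onFun
    (f := lexDegree (B := B)) |>.has_min {R | ev R = 0 ∧ R ≠ 0} ⟨R₀, hR₀, hR₀0⟩
  simp only [Function.onFun, Set.mem_ofPred_eq, and_imp, not_lt] at hmin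
  have hl0 : lexLeadingCoeff R₁ ≠ 0 := by simpa [lexLeadingCoeff] using hR₁0
  set R := C (C (C (lexLeadingCoeff R₁)⁻¹)) * R₁ with hR
  have hRdeg : lexDegree R = lexDegree R₁ := lexDegree_C_mul (inv_ne_zero hl0) _
  have hRl : lexLeadingCoeff R = 1 := by
    rw [hR, lexLeadingCoeff, leadingCoeff_mul, leadingCoeff_C, leadingCoeff_mul, leadingCoeff_C,
      leadingCoeff_mul, leadingCoeff_C]
    exact inv_mul_cancel₀ hl0
  have hRev : ev R = 0 := by rw [hR, map_mul, hR₁, mul_zero]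
  clear_value R
  set d := R.natDegree with hd
  set E := 2 * n * R.leadingCoeff.natDegree + n * R.leadingCoeff.leadingCoeff.natDegree with hE
  set χ : B := β ^ E * β⁻¹ ^ d with hχ
  have hχ0 : χ ≠ 0 := mul_ne_zero (pow_ne_zero _ hβ) (pow_ne_zero _ (inv_ne_zero hβ))
  have hβi : (C (C β⁻¹) : B[X][X]) ≠ 0 := by simpa using hβ
  obtain ⟨hw1, hw2⟩ := affineTwist_natDegree hTyi hβi 0 R
  obtain ⟨hy1, hy2⟩ := affineTwist_natDegree hTxi (pow_ne_zero (2 * n) hβx) v R.leadingCoeff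
  obtain ⟨hx1, hx2⟩ := affineTwist_natDegree τ.injective (pow_ne_zero n hβ) u
    R.leadingCoeff.leadingCoeff
  rw [← hTw] at hw1 hw2
  rw [← hTy] at hy1 hy2
  rw [← hTx] at hx1 hx2
  have hTdeg : lexDegree (Tw R) = lexDegree R := by
    unfold lexDegree
    have e1 : ∀ k : ℕ, (C (C β⁻¹) : B[X][X]) ^ k = C (C (β⁻¹ ^ k)) := fun k => by
      simp only [C_pow]
    have e2 : ∀ k : ℕ, ((C β : B[X]) ^ (2 * n)) ^ k = C ((β ^ (2 * n)) ^ k) := fun k => by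
      simp only [C_pow]
    rw [hw1, hw2, e1, natDegree_mul_C (by simp [hβ]), hy1, leadingCoeff_mul, leadingCoeff_C,
      hy2, e2, natDegree_mul_C (by simp [hβ]), natDegree_mul_C (by simp [hβ]), hx1]
  have hTl : lexLeadingCoeff (Tw R) = χ := by
    have hRl' : R.leadingCoeff.leadingCoeff.leadingCoeff = 1 := hRl
    have e1 : ∀ k : ℕ, (C (C β⁻¹) : B[X][X]) ^ k = C (C (β⁻¹ ^ k)) := fun k => by
      simp only [C_pow]
    have e2 : ∀ k : ℕ, ((C β : B[X]) ^ (2 * n)) ^ k = C ((β ^ (2 * n)) ^ k) := fun k => by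
      simp only [C_pow]
    rw [lexLeadingCoeff, hw2, leadingCoeff_mul, e1, leadingCoeff_C, leadingCoeff_mul,
      leadingCoeff_C, hy2, leadingCoeff_mul, e2, leadingCoeff_C, hx2, hRl', map_one, one_mul,
      hχ, hE, pow_add, pow_mul, pow_mul]
    ring
  -- otherwise the difference would be a relation of smaller lexicographic degree
  have heig : C (C (C χ⁻¹)) * Tw R = R := by
    by_contra hne
    have h1 : lexDegree R = lexDegree (C (C (C χ⁻¹)) * Tw R) := by
      rw [lexDegree_C_mul (inv_ne_zero hχ0), hTdeg]
    have h2 : lexLeadingCoeff R = lexLeadingCoeff (C (C (C χ⁻¹)) * Tw R) := by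
      rw [hRl, lexLeadingCoeff, leadingCoeff_mul, leadingCoeff_C, leadingCoeff_mul, leadingCoeff_C,
        leadingCoeff_mul, leadingCoeff_C]
      have : (Tw R).leadingCoeff.leadingCoeff.leadingCoeff = χ := hTl
      rw [this, inv_mul_cancel₀ hχ0]
    have h3 := lexDegree_sub_lt h1 h2 (Ne.symm hne)
    refine absurd (hmin (R - C (C (C χ⁻¹)) * Tw R) ?_ (sub_ne_zero.2 (Ne.symm hne))) ?_
    · refine (map_sub ev R _).trans ?_
      rw [RingHom.map_mul, hevT, hRev, map_zero, mul_zero, sub_zero]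
    · rw [not_le, ← hRdeg]; exact h3
  have hcoef : ∀ a, R.coeff a ≠ 0 → d = E + a ∧ ∃ κ : K, R.coeff a = C (C (c κ)) := by
    intro a ha
    refine hTye _ ha d (E + a) ?_
    have h1 := congrArg (fun P => coeff P a) heig
    simp only [coeff_C_mul] at h1
    rw [hTw, coeff_affineTwist_zero] at h1
    conv_rhs => rw [← h1]
    have h2 : β ^ d = β ^ (E + a) * (χ⁻¹ * β⁻¹ ^ a) := by
      rw [hχ, pow_add, mul_inv, inv_pow, inv_pow, inv_inv]
      field_simp
    rw [← C_pow, ← C_pow, h2]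
    simp only [C_mul, C_pow]
    ring
  have hR0 : R ≠ 0 := by
    intro h0; rw [h0] at hRl; simp [lexLeadingCoeff] at hRl
  obtain ⟨hdE, κ, hκ⟩ := hcoef d (by simpa [hd] using hR0)
  have hmono : R = monomial d (C (C (c κ))) := by
    ext1 a
    rw [coeff_monomial]
    split_ifs with h
    · rw [← h, hκ]
    · by_contra h0
      exact h (by have := (hcoef a h0).1; omega)
  have hκ0 : c κ ≠ 0 := by
    intro h0; rw [h0] at hmono; simp at hmono; exact hR0 hmono
  rw [hmono, hev] at hRev
  simp only [coe_eval₂RingHom, eval₂_monomial, eval₂_C, mul_eq_zero, pow_eq_zero_iff', hΩ0,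
    false_and, or_false, map_eq_zero] at hRev
  exact hκ0 (by rw [hRev, map_zero])

end MinimalRelation

/-! ### Entire power series over an ultrametric field -/

section EntireSeries

set_option linter.unusedSectionVars false

open PowerSeries Finset

variable {L : Type*} [NormedField L]

/-- The Gauss norm of `f` at radius `R` is at most `M`. -/
def GaussLE (R M : ℝ) (f : L⟦X⟧) : Prop := ∀ j, ‖coeff j f‖ * R ^ j ≤ M

/-- A power series is entire when its Gauss norm is finite at every radius. -/
def Entire (f : L⟦X⟧) : Prop := ∀ R : ℝ, 0 < R → ∃ M, GaussLE R M f

/-- The value of a power series at `z`, as an infinite sum. -/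
noncomputable def evalAt (z : L) (f : L⟦X⟧) : L := ∑' j, coeff j f * z ^ j

lemma GaussLE.nonneg {R M : ℝ} {f : L⟦X⟧} (h : GaussLE R M f) : 0 ≤ M := by
  have := h 0
  simp only [pow_zero, mul_one] at this
  exact (norm_nonneg _).trans this

lemma GaussLE.mono {R M M' : ℝ} {f : L⟦X⟧} (h : GaussLE R M f) (hM : M ≤ M') : GaussLE R M' f :=
  fun j => (h j).trans hM

lemma GaussLE.C {R : ℝ} (a : L) : GaussLE R ‖a‖ (PowerSeries.C a) := by
  intro j
  rw [coeff_C]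
  split_ifs with h
  · simp [h]
  · simp

lemma GaussLE.X {R : ℝ} (hR : 0 ≤ R) : GaussLE R R (PowerSeries.X : L⟦X⟧) := by
  intro j
  rw [coeff_X]
  split_ifs with h
  · simp [h]
  · simpa

section Ultra
variable [IsUltrametricDist L]

lemma GaussLE.add {R M : ℝ} (hR : 0 ≤ R) {f g : L⟦X⟧} (hf : GaussLE R M f) (hg : GaussLE R M g) :
    GaussLE R M (f + g) := by
  intro j
  rw [map_add]
  have h := IsUltrametricDist.norm_add_le_max (coeff j f) (coeff j g)
  have hp : 0 ≤ R ^ j := pow_nonneg hR j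
  rcases le_max_iff.mp h with h | h
  · exact (mul_le_mul_of_nonneg_right h hp).trans (hf j)
  · exact (mul_le_mul_of_nonneg_right h hp).trans (hg j)

lemma GaussLE.zero {R M : ℝ} (hM : 0 ≤ M) : GaussLE R M (0 : L⟦X⟧) := by
  intro j; simpa

lemma GaussLE.sum {ι : Type*} {R M : ℝ} (hR : 0 ≤ R) (hM : 0 ≤ M) (s : Finset ι) (f : ι → L⟦X⟧)
    (hf : ∀ i ∈ s, GaussLE R M (f i)) : GaussLE R M (∑ i ∈ s, f i) := by
  classical
  induction s using Finset.induction_on with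
  | empty => simpa using GaussLE.zero hM
  | insert a s ha ih =>
    rw [Finset.sum_insert ha]
    exact (hf a (mem_insert_self _ _)).add hR (ih fun i hi => hf i (mem_insert_of_mem hi))

lemma GaussLE.neg {R M : ℝ} {f : L⟦X⟧} (hf : GaussLE R M f) : GaussLE R M (-f) := by
  intro j; rw [map_neg, norm_neg]; exact hf j

lemma GaussLE.mul {R M N : ℝ} (hR : 0 ≤ R) {f g : L⟦X⟧} (hf : GaussLE R M f)
    (hg : GaussLE R N g) : GaussLE R (M * N) (f * g) := by
  intro j
  rw [coeff_mul]
  have hMN := mul_nonneg hf.nonneg hg.nonneg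
  rcases (pow_nonneg hR j).eq_or_lt with h0 | h0
  · rw [← h0, mul_zero]; exact hMN
  rw [← le_div_iff₀ h0]
  refine IsUltrametricDist.norm_sum_le_of_forall_le_of_nonneg (div_nonneg hMN h0.le) ?_
  rintro ⟨a, b⟩ hab
  rw [le_div_iff₀ h0, norm_mul, ← mem_antidiagonal.mp hab, pow_add]
  calc _ = (‖coeff a f‖ * R ^ a) * (‖coeff b g‖ * R ^ b) := by ring
    _ ≤ M * N := mul_le_mul (hf a) (hg b) (by positivity) hf.nonneg

lemma Entire.C (a : L) : Entire (PowerSeries.C a) := fun _ _ => ⟨_, GaussLE.C a⟩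
lemma Entire.X : Entire (PowerSeries.X : L⟦X⟧) := fun _ h => ⟨_, GaussLE.X h.le⟩
lemma Entire.one : Entire (1 : L⟦X⟧) := by simpa using Entire.C (1 : L)
lemma Entire.zero : Entire (0 : L⟦X⟧) := by simpa using Entire.C (0 : L)
lemma Entire.add {f g : L⟦X⟧} (hf : Entire f) (hg : Entire g) : Entire (f + g) := fun R hR => by
  obtain ⟨M, hM⟩ := hf R hR
  obtain ⟨N, hN⟩ := hg R hR
  exact ⟨_, (hM.mono (le_max_left M N)).add hR.le (hN.mono (le_max_right M N))⟩
lemma Entire.mul {f g : L⟦X⟧} (hf : Entire f) (hg : Entire g) : Entire (f * g) := fun R hR => by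
  obtain ⟨M, hM⟩ := hf R hR
  obtain ⟨N, hN⟩ := hg R hR
  exact ⟨_, hM.mul hR.le hN⟩
lemma Entire.neg {f : L⟦X⟧} (hf : Entire f) : Entire (-f) := fun R hR => by
  obtain ⟨M, hM⟩ := hf R hR
  exact ⟨_, hM.neg⟩
lemma Entire.sub {f g : L⟦X⟧} (hf : Entire f) (hg : Entire g) : Entire (f - g) := by
  rw [sub_eq_add_neg]; exact hf.add hg.neg

/-- The subring of entire power series. -/
def entireSubring (L : Type*) [NormedField L] [IsUltrametricDist L] : Subring L⟦X⟧ where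
  carrier := {f | Entire f}
  mul_mem' := Entire.mul
  add_mem' := Entire.add
  one_mem' := Entire.one
  zero_mem' := Entire.zero
  neg_mem' := Entire.neg

lemma Entire.pow {f : L⟦X⟧} (hf : Entire f) (m : ℕ) : Entire (f ^ m) :=
  (entireSubring L).pow_mem hf m

lemma Entire.sum {ι : Type*} (s : Finset ι) (f : ι → L⟦X⟧) (hf : ∀ i ∈ s, Entire (f i)) :
    Entire (∑ i ∈ s, f i) :=
  (entireSubring L).sum_mem hf

lemma Entire.polynomial (p : Polynomial L) : Entire (p : L⟦X⟧) := by
  induction p using Polynomial.induction_on' with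
  | add p q hp hq => rw [Polynomial.coe_add]; exact hp.add hq
  | monomial n a =>
    rw [← Polynomial.C_mul_X_pow_eq_monomial, Polynomial.coe_mul, Polynomial.coe_C,
      Polynomial.coe_pow, Polynomial.coe_X]
    exact (Entire.C a).mul (Entire.X.pow n)

lemma Entire.summable_norm {f : L⟦X⟧} (hf : Entire f) (z : L) :
    Summable fun j => ‖coeff j f * z ^ j‖ := by
  obtain ⟨M, hM⟩ := hf (‖z‖ + 1) (by positivity)
  have hr : ‖z‖ / (‖z‖ + 1) < 1 := by rw [div_lt_one (by positivity)]; linarith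
  refine Summable.of_nonneg_of_le (fun _ => norm_nonneg _) (fun j => ?_)
    ((summable_geometric_of_lt_one (by positivity) hr).mul_left M)
  rw [norm_mul, norm_pow, div_pow, ← mul_div_assoc, le_div_iff₀ (by positivity)]
  calc _ = (‖coeff j f‖ * (‖z‖ + 1) ^ j) * ‖z‖ ^ j := by ring
    _ ≤ _ := mul_le_mul_of_nonneg_right (hM j) (by positivity)

variable [CompleteSpace L]

lemma Entire.summable {f : L⟦X⟧} (hf : Entire f) (z : L) :
    Summable fun j => coeff j f * z ^ j := (hf.summable_norm z).of_norm

lemma evalAt_add {f g : L⟦X⟧} (hf : Entire f) (hg : Entire g) (z : L) :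
    evalAt z (f + g) = evalAt z f + evalAt z g := by
  unfold evalAt
  rw [← (hf.summable z).tsum_add (hg.summable z)]
  simp [add_mul]

lemma evalAt_mul {f g : L⟦X⟧} (hf : Entire f) (hg : Entire g) (z : L) :
    evalAt z (f * g) = evalAt z f * evalAt z g := by
  unfold evalAt
  rw [tsum_mul_tsum_eq_tsum_sum_antidiagonal_of_summable_norm (hf.summable_norm z)
    (hg.summable_norm z)]
  refine tsum_congr fun j => ?_
  rw [coeff_mul, Finset.sum_mul]
  refine Finset.sum_congr rfl fun ab hab => ?_
  rw [← mem_antidiagonal.mp hab, pow_add]; ring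

lemma evalAt_C (z a : L) : evalAt z (PowerSeries.C a) = a := by
  unfold evalAt
  rw [tsum_eq_single 0]
  · simp
  · intro j hj; simp [coeff_C, hj]

lemma evalAt_X (z : L) : evalAt z (PowerSeries.X) = z := by
  unfold evalAt
  rw [tsum_eq_single 1]
  · simp
  · intro j hj; simp [coeff_X, hj]

/-- Evaluation at `z` as a ring homomorphism on entire series. -/
noncomputable def evalEntire (z : L) : entireSubring L →+* L where
  toFun f := evalAt z f.1
  map_one' := by simpa using evalAt_C z (1 : L)
  map_zero' := by simpa using evalAt_C z (0 : L)
  map_add' f g := evalAt_add f.2 g.2 z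
  map_mul' f g := evalAt_mul f.2 g.2 z

lemma evalAt_pow {f : L⟦X⟧} (hf : Entire f) (z : L) (m : ℕ) :
    evalAt z (f ^ m) = evalAt z f ^ m :=
  map_pow (evalEntire z) ⟨f, hf⟩ m

lemma evalAt_sub {f g : L⟦X⟧} (hf : Entire f) (hg : Entire g) (z : L) :
    evalAt z (f - g) = evalAt z f - evalAt z g :=
  map_sub (evalEntire z) ⟨f, hf⟩ ⟨g, hg⟩

lemma evalAt_sum {ι : Type*} (s : Finset ι) (f : ι → L⟦X⟧) (hf : ∀ i, Entire (f i)) (z : L) :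
    evalAt z (∑ i ∈ s, f i) = ∑ i ∈ s, evalAt z (f i) := by
  have := map_sum (evalEntire z) (fun i => (⟨f i, hf i⟩ : entireSubring L)) s
  refine Eq.trans ?_ this
  change _ = evalAt z (∑ i ∈ s, (⟨f i, hf i⟩ : entireSubring L) : entireSubring L).1
  congr 1
  simp

lemma evalAt_polynomial (p : Polynomial L) (z : L) : evalAt z (p : L⟦X⟧) = p.eval z := by
  induction p using Polynomial.induction_on' with
  | add p q hp hq =>
    rw [Polynomial.coe_add, evalAt_add (Entire.polynomial p) (Entire.polynomial q), hp, hq,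
      Polynomial.eval_add]
  | monomial n a =>
    rw [← Polynomial.C_mul_X_pow_eq_monomial, Polynomial.coe_mul, Polynomial.coe_C,
      Polynomial.coe_pow, Polynomial.coe_X, evalAt_mul (Entire.C a) (Entire.X.pow n),
      evalAt_pow Entire.X, evalAt_C, evalAt_X]
    simp

lemma norm_evalAt_le {f : L⟦X⟧} {R M : ℝ} {z : L} (hz : ‖z‖ ≤ R) (hf : GaussLE R M f) :
    ‖evalAt z f‖ ≤ M := by
  refine IsUltrametricDist.norm_tsum_le_of_forall_le_of_nonneg hf.nonneg fun j => ?_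
  rw [norm_mul, norm_pow]
  exact (mul_le_mul_of_nonneg_left (pow_le_pow_left₀ (norm_nonneg _) hz j)
    (norm_nonneg _)).trans (hf j)

/-- Division of an entire series by a linear factor `1 - X / z` at a zero `z`. The quotient gains
the factor `‖z‖ / R` in Gauss norm at every radius `R ≥ ‖z‖`. -/
lemma exists_div_zero {f : L⟦X⟧} (hf : Entire f) {z : L} (hz : z ≠ 0) (h0 : evalAt z f = 0) :
    ∃ g : L⟦X⟧, f = (1 - PowerSeries.C z⁻¹ * PowerSeries.X) * g ∧ Entire g ∧
      ∀ R M, ‖z‖ ≤ R → GaussLE R M f → GaussLE R (M * (‖z‖ / R)) g := by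
  let a : ℕ → L := fun i => coeff i f * z ^ i
  have ha : Summable a := hf.summable z
  let g : L⟦X⟧ := PowerSeries.mk fun j => (∑ i ∈ range (j + 1), a i) * (z⁻¹) ^ j
  have hg : f = (1 - PowerSeries.C z⁻¹ * PowerSeries.X) * g := by
    ext j
    rw [sub_mul, one_mul, map_sub, mul_assoc, coeff_C_mul]
    cases j with
    | zero => simp [g, a]
    | succ j =>
      rw [coeff_succ_X_mul, coeff_mk, coeff_mk, sum_range_succ _ (j + 1)]
      simp only [a]
      rw [add_mul, pow_succ z⁻¹ j, ← mul_assoc, mul_comm z⁻¹]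
      have h1 : coeff (j + 1) f * z ^ (j + 1) * (z⁻¹ ^ j * z⁻¹) = coeff (j + 1) f := by
        rw [mul_assoc, ← pow_succ, ← mul_pow, mul_inv_cancel₀ hz, one_pow, mul_one]
      rw [mul_assoc _ _ z⁻¹] 
      rw [h1]
      ring
  have htail : ∀ j, ∑ i ∈ range (j + 1), a i = - ∑' i, a (i + (j + 1)) := by
    intro j
    have h1 := ha.sum_add_tsum_nat_add (j + 1)
    have h2 : ∑' i, a i = 0 := h0
    rw [h2] at h1
    exact eq_neg_of_add_eq_zero_left h1
  have hbd : ∀ R M, ‖z‖ ≤ R → GaussLE R M f → GaussLE R (M * (‖z‖ / R)) g := by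
    intro R M hR hM j
    have hz0 : 0 < ‖z‖ := norm_pos_iff.mpr hz
    have hR0 : 0 < R := hz0.trans_le hR
    rw [coeff_mk, htail, neg_mul, norm_neg, norm_mul, norm_pow, norm_inv]
    have hle : ‖∑' i, a (i + (j + 1))‖ ≤ M * (‖z‖ / R) ^ (j + 1) := by
      have := hM.nonneg
      refine IsUltrametricDist.norm_tsum_le_of_forall_le_of_nonneg (by positivity) fun i => ?_
      have h3 : ‖a (i + (j + 1))‖ ≤ M * (‖z‖ / R) ^ (i + (j + 1)) := by
        simp only [a]
        rw [norm_mul, norm_pow, div_pow, ← mul_div_assoc, le_div_iff₀ (by positivity)]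
        calc _ = (‖coeff (i + (j + 1)) f‖ * R ^ (i + (j + 1))) * ‖z‖ ^ (i + (j + 1)) := by ring
          _ ≤ _ := mul_le_mul_of_nonneg_right (hM _) (by positivity)
      refine h3.trans (mul_le_mul_of_nonneg_left ?_ this)
      exact pow_le_pow_of_le_one (by positivity) ((div_le_one hR0).mpr hR) (by omega)
    calc _ ≤ M * (‖z‖ / R) ^ (j + 1) * ‖z‖⁻¹ ^ j * R ^ j := by gcongr
      _ = M * (‖z‖ / R) := by
        rw [pow_succ, div_pow, inv_pow]; field_simp
  refine ⟨g, hg, fun R hR => ?_, hbd⟩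
  obtain ⟨M, hM⟩ := hf (max R ‖z‖) (lt_max_of_lt_left hR)
  refine ⟨_, fun j => le_trans ?_ (hbd _ M (le_max_right _ _) hM j)⟩
  gcongr
  exact le_max_left _ _

/-- Schwarz lemma: an entire series of order at least `h` with many nonzero zeros in the disc of
radius `R` has a small coefficient of index `h`. -/
lemma schwarz {R : ℝ} (hR : 0 < R) (h : ℕ) (s : Finset L) :
    ∀ (f : L⟦X⟧) (M : ℝ), Entire f → GaussLE R M f → (∀ j < h, coeff j f = 0) →
      (∀ z ∈ s, z ≠ 0 ∧ ‖z‖ ≤ R ∧ evalAt z f = 0) →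
      ‖coeff h f‖ * R ^ h ≤ M * ∏ z ∈ s, (‖z‖ / R) := by
  classical
  induction s using Finset.induction_on with
  | empty => intro f M _ hM _ _; simpa using hM h
  | insert z s hz ih =>
    intro f M hf hM hord hs
    obtain ⟨hz0, hzR, hev⟩ := hs z (mem_insert_self _ _)
    obtain ⟨g, hfg, hg, hbd⟩ := exists_div_zero hf hz0 hev
    have hc : ∀ j, coeff j f = coeff j g - z⁻¹ * coeff j (PowerSeries.X * g) := by
      intro j
      rw [hfg, sub_mul, one_mul, map_sub, mul_assoc, coeff_C_mul]
    have hgo : ∀ j < h, coeff j g = 0 := by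
      intro j
      induction j with
      | zero => intro h0; have := hord 0 h0; rw [hc] at this; simpa using this
      | succ j ihj =>
        intro h0; have := hord _ h0
        rw [hc, coeff_succ_X_mul, ihj (by omega)] at this; simpa using this
    have hch : coeff h f = coeff h g := by
      rw [hc]
      cases h with
      | zero => simp
      | succ h => rw [coeff_succ_X_mul, hgo h (by omega)]; simp
    rw [hch, prod_insert hz, ← mul_assoc]
    refine ih g _ hg (hbd R M hzR hM) hgo fun w hw => ?_
    obtain ⟨hw0, hwR, hwe⟩ := hs w (mem_insert_of_mem hw)
    refine ⟨hw0, hwR, ?_⟩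
    have h1 : Entire (1 - PowerSeries.C z⁻¹ * PowerSeries.X : L⟦X⟧) :=
      Entire.one.sub ((Entire.C _).mul Entire.X)
    rw [hfg, evalAt_mul h1 hg] at hwe
    refine (mul_eq_zero.mp hwe).resolve_left ?_
    rw [evalAt_sub Entire.one ((Entire.C _).mul Entire.X), evalAt_mul (Entire.C _) Entire.X,
      evalAt_C, evalAt_X, show (1 : L⟦X⟧) = PowerSeries.C 1 by simp, evalAt_C, sub_eq_zero]
    intro h2
    apply hz
    have : z = w := by
      field_simp at h2; exact h2
    rw [this]; exact hw

end Ultra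

section Twist

variable {σ : L →+* L} {q : ℕ}

lemma GaussLE.twist {R M : ℝ} (hR : 0 ≤ R) (hσ : ∀ x, σ x = x ^ q) {f : L⟦X⟧}
    (hf : GaussLE R M f) : GaussLE (R ^ q) (M ^ q) (PowerSeries.map σ f) := by
  intro j
  rw [coeff_map, hσ, norm_pow, ← pow_mul, mul_comm q j, pow_mul, ← mul_pow]
  exact pow_le_pow_left₀ (by positivity) (hf j) q

lemma Entire.twist (hq : 1 ≤ q) (hσ : ∀ x, σ x = x ^ q) {f : L⟦X⟧}
    (hf : Entire f) : Entire (PowerSeries.map σ f) := by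
  intro R hR
  obtain ⟨M, hM⟩ := hf (max R 1) (by positivity)
  refine ⟨M ^ q, fun j => le_trans ?_ ((hM.twist (by positivity) hσ) j)⟩
  gcongr
  exact (le_max_left R 1).trans (le_self_pow₀ (le_max_right R 1) (by omega))

/-- Evaluation commutes with the twist up to raising the point to the `q`-th power. -/
lemma evalAt_twist [IsUltrametricDist L] [CompleteSpace L] (hq : 1 ≤ q) (hσ : ∀ x, σ x = x ^ q)
    {f : L⟦X⟧} (hf : Entire f) (z : L) :
    evalAt (z ^ q) (PowerSeries.map σ f) = evalAt z f ^ q := by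
  have hcont : Continuous σ := by
    rw [show (σ : L → L) = fun x => x ^ q from funext hσ]; fun_prop
  rw [← hσ (evalAt z f)]
  unfold evalAt
  rw [(hf.summable z).map_tsum σ hcont]
  refine tsum_congr fun j => ?_
  rw [coeff_map, map_mul, hσ (z ^ j), ← pow_mul, ← pow_mul, mul_comm q j]

end Twist

end EntireSeries

/-! ### Polynomials in `t` and `θ` as series -/

section TwoVariablePolynomials

set_option linter.unusedSectionVars false

open Polynomial

variable {F : Type*} [Field F] {L : Type*} [NormedField L] [Algebra F L]

/-- Polynomials in `t` over `F`, viewed as power series over `L`. -/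
noncomputable def tSeries (F L : Type*) [Field F] [NormedField L] [Algebra F L] :
    F[X] →+* PowerSeries L :=
  (Polynomial.coeToPowerSeries.ringHom (R := L)).comp (Polynomial.mapRingHom (algebraMap F L))

/-- The ring `F[t][θ]` (outer variable `θ`, inner variable `t`) mapped to power series in `t`
over `L`, where `θ` is an element of `L`. -/
noncomputable def toSeries (F : Type*) [Field F] [Algebra F L] (θ : L) :
    F[X][X] →+* PowerSeries L :=
  eval₂RingHom (tSeries F L) (PowerSeries.C θ)

/-- The specialization `t ↦ θ ^ m` on `F[t][θ]`. -/
noncomputable def spec (F : Type*) [Field F] (m : ℕ) : F[X][X] →+* F[X] :=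
  eval₂RingHom (expand F m : F[X] →+* F[X]) X

lemma tSeries_apply (p : F[X]) : tSeries F L p = ((p.map (algebraMap F L) : L[X]) : PowerSeries L) :=
  rfl

lemma coeff_tSeries (p : F[X]) (e : ℕ) :
    PowerSeries.coeff e (tSeries F L p) = algebraMap F L (p.coeff e) := by
  rw [tSeries_apply, Polynomial.coeff_coe, coeff_map]

variable (θ : L)

lemma toSeries_C (p : F[X]) : toSeries F θ (C p) = tSeries F L p := by
  simp [toSeries]

lemma toSeries_X : toSeries F θ X = PowerSeries.C θ := by
  simp [toSeries]

lemma toSeries_eq_sum (h : F[X][X]) {D : ℕ} (hD : h.natDegree ≤ D) :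
    toSeries F θ h = ∑ a ∈ Finset.range (D + 1), tSeries F L (h.coeff a) * PowerSeries.C θ ^ a := by
  rw [toSeries, coe_eval₂RingHom, eval₂_eq_sum_range' _ (Nat.lt_succ_of_le hD)]

/-- The coefficient of `t ^ e` of an element of `F[t][θ]` of degree at most `D` in `θ`. -/
noncomputable def tCoeff (D : ℕ) (h : F[X][X]) (e : ℕ) : F[X] :=
  ∑ a ∈ Finset.range (D + 1), C ((h.coeff a).coeff e) * X ^ a

lemma coeff_toSeries (h : F[X][X]) {D : ℕ} (hD : h.natDegree ≤ D) (e : ℕ) :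
    PowerSeries.coeff e (toSeries F θ h) = aeval θ (tCoeff D h e) := by
  rw [toSeries_eq_sum θ h hD, tCoeff, map_sum, map_sum]
  refine Finset.sum_congr rfl fun a _ => ?_
  rw [← map_pow, PowerSeries.coeff_mul_C, coeff_tSeries, map_mul, aeval_C, map_pow, aeval_X]

lemma natDegree_tCoeff (D : ℕ) (h : F[X][X]) (e : ℕ) : (tCoeff D h e).natDegree ≤ D := by
  refine natDegree_sum_le_of_forall_le _ _ fun a ha => ?_
  exact (natDegree_C_mul_X_pow_le _ _).trans (by have := Finset.mem_range.mp ha; omega)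

lemma coeff_tCoeff (D : ℕ) (h : F[X][X]) (e a : ℕ) (ha : a ≤ D) :
    (tCoeff D h e).coeff a = (h.coeff a).coeff e := by
  rw [tCoeff, finsetSum_coeff, Finset.sum_eq_single a]
  · simp
  · intro b _ hb; rw [coeff_C_mul, coeff_X_pow, if_neg hb.symm, mul_zero]
  · intro h; exact absurd (Finset.mem_range.mpr (by omega)) h

lemma norm_algebraMap_eq_one {q : ℕ} (hq : 2 ≤ q) (hF : ∀ a : F, algebraMap F L a ^ q = algebraMap F L a)
    {a : F} (ha : a ≠ 0) : ‖algebraMap F L a‖ = 1 := by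
  have h0 : ‖algebraMap F L a‖ ≠ 0 := by
    simpa using ha
  have h1 : ‖algebraMap F L a‖ ^ (q - 1) = 1 := by
    have := congrArg norm (hF a)
    rw [norm_pow] at this
    obtain ⟨k, rfl⟩ : ∃ k, q = k + 1 := ⟨q - 1, by omega⟩
    rw [pow_succ] at this
    simpa using mul_right_cancel₀ h0 (this.trans (one_mul _).symm)
  exact (pow_eq_one_iff_of_nonneg (norm_nonneg _) (by omega)).mp h1

variable {θ} [IsUltrametricDist L]

lemma norm_algebraMap_le_one {q : ℕ} (hq : 2 ≤ q)
    (hF : ∀ a : F, algebraMap F L a ^ q = algebraMap F L a) (a : F) : ‖algebraMap F L a‖ ≤ 1 := by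
  by_cases ha : a = 0
  · simp [ha]
  · exact (norm_algebraMap_eq_one hq hF ha).le

lemma norm_aeval_le {q : ℕ} (hq : 2 ≤ q) (hF : ∀ a : F, algebraMap F L a ^ q = algebraMap F L a)
    (hθ : 1 < ‖θ‖) {p : F[X]} {D : ℕ} (hp : p.natDegree ≤ D) : ‖aeval θ p‖ ≤ ‖θ‖ ^ D := by
  rw [aeval_eq_sum_range' (Nat.lt_succ_of_le hp)]
  refine IsUltrametricDist.norm_sum_le_of_forall_le_of_nonneg (by positivity) fun i hi => ?_
  rw [Algebra.smul_def, norm_mul, norm_pow]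
  calc _ ≤ 1 * ‖θ‖ ^ D := by
        gcongr
        · exact norm_algebraMap_le_one hq hF _
        · exact hθ.le
        · have := Finset.mem_range.mp hi; omega
    _ = _ := one_mul _

lemma norm_aeval {q : ℕ} (hq : 2 ≤ q) (hF : ∀ a : F, algebraMap F L a ^ q = algebraMap F L a)
    (hθ : 1 < ‖θ‖) {p : F[X]} (hp : p ≠ 0) : ‖aeval θ p‖ = ‖θ‖ ^ p.natDegree := by
  rcases Nat.eq_zero_or_pos p.natDegree with h0 | h0
  · obtain ⟨a, rfl⟩ := natDegree_eq_zero.mp h0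
    rw [aeval_C, natDegree_C, pow_zero, norm_algebraMap_eq_one hq hF (by simpa using hp)]
  conv_lhs => rw [← eraseLead_add_C_mul_X_pow p]
  have h1 : ‖aeval θ (C p.leadingCoeff * X ^ p.natDegree)‖ = ‖θ‖ ^ p.natDegree := by
    rw [map_mul, aeval_C, map_pow, aeval_X, norm_mul, norm_pow,
      norm_algebraMap_eq_one hq hF (leadingCoeff_ne_zero.mpr hp), one_mul]
  have h2 : ‖aeval θ p.eraseLead‖ < ‖θ‖ ^ p.natDegree := by
    refine (norm_aeval_le hq hF hθ (eraseLead_natDegree_le p)).trans_lt ?_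
    exact pow_lt_pow_right₀ hθ (by omega)
  rw [map_add, IsUltrametricDist.norm_add_eq_max_of_norm_ne_norm (by rw [h1]; exact h2.ne), h1]
  exact max_eq_right h2.le

lemma one_le_norm_aeval {q : ℕ} (hq : 2 ≤ q)
    (hF : ∀ a : F, algebraMap F L a ^ q = algebraMap F L a)
    (hθ : 1 < ‖θ‖) {p : F[X]} (hp : p ≠ 0) : 1 ≤ ‖aeval θ p‖ := by
  rw [norm_aeval hq hF hθ hp]; exact one_le_pow₀ hθ.le

lemma aeval_injective {q : ℕ} (hq : 2 ≤ q)
    (hF : ∀ a : F, algebraMap F L a ^ q = algebraMap F L a)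
    (hθ : 1 < ‖θ‖) : Function.Injective (aeval θ : F[X] →ₐ[F] L) := by
  rw [injective_iff_map_eq_zero]
  intro p hp
  by_contra h
  have := one_le_norm_aeval hq hF hθ h
  rw [hp, norm_zero] at this
  linarith

lemma toSeries_injective {q : ℕ} (hq : 2 ≤ q)
    (hF : ∀ a : F, algebraMap F L a ^ q = algebraMap F L a)
    (hθ : 1 < ‖θ‖) : Function.Injective (toSeries F θ) := by
  rw [injective_iff_map_eq_zero]
  intro h hh
  have h1 : ∀ e, tCoeff h.natDegree h e = 0 := by
    intro e
    apply aeval_injective hq hF hθ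
    rw [← coeff_toSeries θ h le_rfl, hh, map_zero, map_zero]
  ext a e
  rcases le_or_gt a h.natDegree with ha | ha
  · rw [← coeff_tCoeff _ _ _ _ ha, h1]; simp
  · rw [coeff_eq_zero_of_natDegree_lt ha]; simp

lemma entire_tSeries (p : F[X]) : Entire (tSeries F L p) := Entire.polynomial _

lemma entire_toSeries (h : F[X][X]) : Entire (toSeries F θ h) := by
  rw [toSeries_eq_sum θ h le_rfl]
  exact Entire.sum _ _ fun a _ => (entire_tSeries _).mul ((Entire.C θ).pow a)

lemma evalAt_toSeries [CompleteSpace L] (h : F[X][X]) (m : ℕ) :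
    evalAt (θ ^ m) (toSeries F θ h) = aeval θ (spec F m h) := by
  rw [toSeries_eq_sum θ h le_rfl,
    evalAt_sum _ _ fun a => (entire_tSeries _).mul ((Entire.C θ).pow a)]
  rw [spec, coe_eval₂RingHom, eval₂_eq_sum_range, map_sum]
  refine Finset.sum_congr rfl fun a _ => ?_
  rw [evalAt_mul (entire_tSeries _) ((Entire.C θ).pow a), evalAt_pow (Entire.C θ), evalAt_C,
    map_mul, map_pow, aeval_X, tSeries_apply, evalAt_polynomial, eval_map_algebraMap]
  congr 1
  exact (expand_aeval m _ θ).symm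

lemma evalAt_toSeries_self [CompleteSpace L] (h : F[X][X]) :
    evalAt θ (toSeries F θ h) = aeval θ (spec F 1 h) := by
  rw [← evalAt_toSeries, pow_one]

/-- Gauss norm of an element of `F[t][θ]`. -/
lemma gaussLE_toSeries {q : ℕ} (hq : 2 ≤ q)
    (hF : ∀ a : F, algebraMap F L a ^ q = algebraMap F L a)
    (hθ : 1 < ‖θ‖) {h : F[X][X]} {A N : ℕ} (hA : h.natDegree ≤ A)
    (hN : ∀ a, (h.coeff a).natDegree ≤ N) {R : ℝ} (hR : 1 ≤ R) :
    GaussLE R (‖θ‖ ^ A * R ^ N) (toSeries F θ h) := by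
  intro e
  rcases le_or_gt e N with he | he
  · rw [coeff_toSeries θ h hA]
    gcongr
    · exact norm_aeval_le hq hF hθ (natDegree_tCoeff _ _ _)
  · rw [coeff_toSeries θ h hA, show tCoeff A h e = 0 from ?_]
    · simp only [map_zero, norm_zero, zero_mul]; positivity
    · rw [tCoeff]
      refine Finset.sum_eq_zero fun a _ => ?_
      rw [coeff_eq_zero_of_natDegree_lt ((hN a).trans_lt he), C_0, zero_mul]

lemma toSeries_twist {q : ℕ} {fr : ℕ → L →+* L} (hfr : ∀ ν x, fr ν x = x ^ q ^ ν)
    (hF : ∀ a : F, algebraMap F L a ^ q = algebraMap F L a) (ν : ℕ) (h : F[X][X]) :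
    toSeries F θ (expand F[X] (q ^ ν) h) = PowerSeries.map (fr ν) (toSeries F θ h) := by
  have hF' : ∀ ν (a : F), algebraMap F L a ^ q ^ ν = algebraMap F L a := by
    intro ν a
    induction ν with
    | zero => simp
    | succ ν ih => rw [pow_succ, pow_mul, ih, hF]
  have : (toSeries F θ).comp (expand F[X] (q ^ ν) : F[X][X] →+* F[X][X]) =
      (PowerSeries.map (fr ν)).comp (toSeries F θ) := by
    refine Polynomial.ringHom_ext (fun p => ?_) ?_
    · simp only [RingHom.comp_apply, RingHom.coe_coe, expand_C, toSeries_C]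
      ext e
      rw [PowerSeries.coeff_map, coeff_tSeries, hfr, hF']
    · simp only [RingHom.comp_apply, RingHom.coe_coe, expand_X, toSeries_X, map_pow,
        PowerSeries.map_C, hfr]
  exact RingHom.congr_fun this h

end TwoVariablePolynomials

/-! ### Siegel's lemma -/

section Siegel

set_option linter.unusedSectionVars false

open Polynomial

variable {F : Type*} [Field F]

lemma spec_C_mul_X_pow (m a b : ℕ) (x : F) :
    spec F m (C (C x * X ^ b) * X ^ a) = C x * X ^ (m * b + a) := by
  simp only [spec, coe_eval₂RingHom, eval₂_C, RingHom.coe_coe, eval₂_X, map_mul,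
    expand_C, map_pow, expand_X]
  rw [pow_add, pow_mul, mul_assoc]

/-- Siegel's lemma over the constant field: existence of nonzero `H : ι → F[t][θ]` of bounded
degrees whose specializations `t ↦ θ ^ m ν` are proportional to prescribed vectors `P ν`. -/
lemma siegel_proportional {ι κ : Type*} [Fintype ι] [Fintype κ] (A N D : ℕ) (m : κ → ℕ)
    (P : κ → ι → F[X]) (i₀ : κ → ι)
    (hD : ∀ ν i, A + N * m ν + (P ν i).natDegree ≤ D)
    (hcount : Fintype.card κ * ((Fintype.card ι - 1) * D) < Fintype.card ι * (A * N)) :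
    ∃ H : ι → F[X][X], H ≠ 0 ∧ (∀ i, (H i).natDegree ≤ A) ∧
      (∀ i a, ((H i).coeff a).natDegree ≤ N) ∧
      ∀ ν i, spec F (m ν) (H i) * P ν (i₀ ν) = spec F (m ν) (H (i₀ ν)) * P ν i := by
  classical
  let Hf : (ι × Fin A × Fin N → F) → ι → F[X][X] := fun x i =>
    ∑ a : Fin A, ∑ b : Fin N, C (C (x (i, a, b)) * X ^ (b : ℕ)) * X ^ (a : ℕ)
  have hspec : ∀ x i k, spec F k (Hf x i) =
      ∑ a : Fin A, ∑ b : Fin N, C (x (i, a, b)) * X ^ (k * (b : ℕ) + (a : ℕ)) := by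
    intro x i k
    simp only [Hf, map_sum, spec_C_mul_X_pow]
  have hdegs : ∀ x i ν, ∀ k, A + N * m ν ≤ k → (spec F (m ν) (Hf x i)).natDegree < k ∨
      spec F (m ν) (Hf x i) = 0 := by
    intro x i ν k hk
    rcases Nat.eq_zero_or_pos A with hA | hA
    · right; subst hA; rw [hspec]; simp
    left
    refine lt_of_le_of_lt (b := A + N * m ν - 1) ?_ (by omega)
    rw [hspec]
    refine natDegree_sum_le_of_forall_le _ _ fun a _ => natDegree_sum_le_of_forall_le _ _ fun b _ =>
      (natDegree_C_mul_X_pow_le _ _).trans ?_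
    have h1 : m ν * (b : ℕ) ≤ N * m ν := by
      rw [mul_comm]; exact Nat.mul_le_mul_right _ b.2.le
    have := a.2
    omega
  let T : (ι × Fin A × Fin N → F) →ₗ[F] (Π ν : κ, ({i : ι // i ≠ i₀ ν} → Fin D → F)) :=
    { toFun := fun x ν i e =>
        (spec F (m ν) (Hf x i) * P ν (i₀ ν) - spec F (m ν) (Hf x (i₀ ν)) * P ν i).coeff e
      map_add' := by
        intro x y
        funext ν i e
        have h : ∀ i, spec F (m ν) (Hf (x + y) i) =
            spec F (m ν) (Hf x i) + spec F (m ν) (Hf y i) := by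
          intro i
          simp only [hspec, Pi.add_apply, C_add, add_mul, Finset.sum_add_distrib]
        simp only [h, Pi.add_apply, ← coeff_add]
        congr 1; ring
      map_smul' := by
        intro c x
        funext ν i e
        have h : ∀ i, spec F (m ν) (Hf (c • x) i) = C c * spec F (m ν) (Hf x i) := by
          intro i
          simp only [hspec, Pi.smul_apply, smul_eq_mul, C_mul, Finset.mul_sum, mul_assoc]
        simp only [h, Pi.smul_apply, smul_eq_mul, RingHom.id_apply, ← coeff_C_mul]
        congr 1; ring }
  have hker : LinearMap.ker T ≠ ⊥ := by
    apply LinearMap.ker_ne_bot_of_finrank_lt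
    have hc : ∀ ν, Fintype.card {i : ι // i ≠ i₀ ν} = Fintype.card ι - 1 := by
      intro ν
      rw [Fintype.card_subtype_compl, Fintype.card_subtype_eq]
    rw [Module.finrank_pi_fintype]
    simp only [Module.finrank_pi_fintype, Module.finrank_self, Finset.sum_const, Finset.card_univ,
      Fintype.card_fin, Fintype.card_prod, smul_eq_mul, mul_one, hc]
    exact hcount
  obtain ⟨x, hx, hx0⟩ := (Submodule.ne_bot_iff _).mp hker
  have hTx : T x = 0 := hx
  have hcoeff : ∀ i (a : Fin A) (b : Fin N), ((Hf x i).coeff a).coeff b = x (i, a, b) := by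
    intro i a b
    simp only [Hf, finsetSum_coeff, coeff_C_mul, coeff_X_pow]
    rw [Finset.sum_eq_single a, Finset.sum_eq_single b]
    · simp
    · intro b' _ hb'
      rw [if_pos rfl, mul_one, coeff_C_mul, coeff_X_pow, if_neg, mul_zero]
      exact fun h => hb' (Fin.ext h.symm)
    · simp
    · intro a' _ ha'
      refine Finset.sum_eq_zero fun b' _ => ?_
      rw [if_neg, mul_zero, coeff_zero]
      exact fun h => ha' (Fin.ext h.symm)
    · simp
  refine ⟨Hf x, ?_, ?_, ?_, ?_⟩
  · intro h
    apply hx0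
    funext ⟨i, a, b⟩
    rw [← hcoeff, h]; simp
  · intro i
    exact natDegree_sum_le_of_forall_le _ _ fun a _ => natDegree_sum_le_of_forall_le _ _ fun b _ =>
      (natDegree_C_mul_X_pow_le _ _).trans a.2.le
  · intro i a
    simp only [Hf, finsetSum_coeff, coeff_C_mul, coeff_X_pow]
    refine natDegree_sum_le_of_forall_le _ _ fun a' _ => natDegree_sum_le_of_forall_le _ _ fun b _ =>
      ?_
    split_ifs
    · rw [mul_one]
      exact (natDegree_C_mul_X_pow_le _ _).trans b.2.le
    · simp
  · intro ν i
    by_cases hi : i = i₀ ν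
    · rw [hi]
    rw [← sub_eq_zero]
    ext e
    rw [coeff_zero]
    by_cases he : e < D
    · exact congrFun (congrFun (congrFun hTx ν) ⟨i, hi⟩) ⟨e, he⟩
    · have key : ∀ i i', (spec F (m ν) (Hf x i) * P ν i').coeff e = 0 := by
        intro i i'
        rcases hdegs x i ν _ le_rfl with h | h
        · apply coeff_eq_zero_of_natDegree_lt
          refine natDegree_mul_le.trans_lt ?_
          have := hD ν i'
          omega
        · rw [h, zero_mul, coeff_zero]
      rw [coeff_sub, key, key, sub_zero]

/-- Any `r + 1` vectors of length `r` over `R[θ]` of degree at most `Y` satisfy a nontrivial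
linear relation with coefficients of degree at most `r * Y`. -/
lemma exists_relation {R ι : Type*} [CommRing R] [Nontrivial R] [Fintype ι] (Y r : ℕ)
    (hr : r = Fintype.card ι) (v : Fin (r + 1) → ι → R[X]) (hv : ∀ k i, (v k i).natDegree ≤ Y) :
    ∃ c : Fin (r + 1) → R[X], c ≠ 0 ∧
      (∀ k, (c k).natDegree ≤ r * Y) ∧ ∀ i, ∑ k, c k * v k i = 0 := by
  classical
  let cf : (Fin (r + 1) × Fin (r * Y + 1) → R) → Fin (r + 1) → R[X] := fun x k =>
    ∑ a : Fin (r * Y + 1), C (x (k, a)) * X ^ (a : ℕ)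
  have hdeg : ∀ x k, (cf x k).natDegree ≤ r * Y := fun x k =>
    natDegree_sum_le_of_forall_le _ _ fun a _ => (natDegree_C_mul_X_pow_le _ _).trans (by
      have := a.2; omega)
  let T : (Fin (r + 1) × Fin (r * Y + 1) → R) →ₗ[R] (ι × Fin (r * Y + Y + 1) → R) :=
    { toFun := fun x ie => (∑ k, cf x k * v k ie.1).coeff ie.2
      map_add' := by
        intro x y
        funext ie
        simp only [cf, Pi.add_apply, C_add, add_mul, Finset.sum_add_distrib, coeff_add]
      map_smul' := by
        intro c x
        funext ie
        simp only [Pi.smul_apply, smul_eq_mul, RingHom.id_apply, ← coeff_C_mul, cf, C_mul,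
          Finset.mul_sum, Finset.sum_mul, mul_assoc] }
  have hT : ¬ Function.Injective T := by
    intro h
    have := card_le_of_injective R T h
    simp only [Fintype.card_prod, Fintype.card_fin, ← hr] at this
    nlinarith
  rw [injective_iff_map_eq_zero] at hT
  push Not at hT
  obtain ⟨x, hx, hx0⟩ := hT
  refine ⟨cf x, ?_, hdeg x, ?_⟩
  · intro h
    apply hx0
    funext ⟨k, a⟩
    have h1 : (cf x k).coeff a = x (k, a) := by
      simp only [cf, finsetSum_coeff, coeff_C_mul, coeff_X_pow]
      rw [Finset.sum_eq_single a]
      · simp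
      · intro b _ hb
        rw [if_neg, mul_zero]
        exact fun h => hb (Fin.ext h.symm)
      · simp
    rw [← h1, h]; simp
  · intro i
    ext e
    rw [coeff_zero]
    by_cases he : e < r * Y + Y + 1
    · exact congrFun hx (i, ⟨e, he⟩)
    · apply coeff_eq_zero_of_natDegree_lt
      refine lt_of_le_of_lt (natDegree_sum_le_of_forall_le (n := r * Y + Y) _ _ fun k _ => ?_)
        (by omega)
      exact natDegree_mul_le.trans (add_le_add (hdeg x k) (hv k i))

end Siegel

/-! ### Lower bounds and twists of difference systems -/

section LinearCriterion

set_option linter.unusedSectionVars false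

open Polynomial

variable {F : Type*} [Field F] {L : Type*} [NormedField L] [Algebra F L] [IsUltrametricDist L]
  {θ : L} {q : ℕ} {fr : ℕ → L →+* L}

/-- Liouville-type lower bound for the leading coefficient of a series satisfying a linear relation
between its twists with coefficients in `F[t][θ]` of bounded degree in `θ`. -/
lemma leadingCoeff_lower_bound (hq : 2 ≤ q) (hfr : ∀ ν x, fr ν x = x ^ q ^ ν)
    (hF : ∀ a : F, algebraMap F L a ^ q = algebraMap F L a) (hθ : 1 < ‖θ‖)
    {n E : ℕ} {c : Fin n → F[X][X]} (hc : c ≠ 0) (hcE : ∀ k, (c k).natDegree ≤ E)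
    {g : PowerSeries L}
    (hrel : ∑ k : Fin n, toSeries F θ (c k) * PowerSeries.map (fr k) g = 0) {h : ℕ}
    (hord : ∀ j < h, PowerSeries.coeff j g = 0) (hlead : PowerSeries.coeff h g ≠ 0) :
    1 ≤ ‖PowerSeries.coeff h g‖ * ‖θ‖ ^ E := by
  classical
  set l := PowerSeries.coeff h g with hl
  have hex : ∃ e, ∃ k, tCoeff E (c k) e ≠ 0 := by
    by_contra! hcon
    apply hc
    funext k
    apply toSeries_injective hq hF hθ
    ext e
    rw [coeff_toSeries θ _ (hcE k), hcon]; simp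
  let e := Nat.find hex
  have he : ∃ k, tCoeff E (c k) e ≠ 0 := Nat.find_spec hex
  have hmin : ∀ e' < e, ∀ k, tCoeff E (c k) e' = 0 := by
    intro e' h' k
    by_contra hne
    exact Nat.find_min hex h' ⟨k, hne⟩
  have hsum : ∑ k : Fin n, aeval θ (tCoeff E (c k) e) * l ^ q ^ (k : ℕ) = 0 := by
    have := congrArg (PowerSeries.coeff (e + h)) hrel
    rw [map_sum, map_zero] at this
    rw [← this]
    refine Finset.sum_congr rfl fun k _ => ?_
    rw [PowerSeries.coeff_mul, Finset.sum_eq_single (e, h)]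
    · rw [coeff_toSeries θ _ (hcE k), PowerSeries.coeff_map, hfr]
    · rintro ⟨a, b⟩ hab hne
      have hab' : a + b = e + h := by simpa using hab
      rcases lt_or_ge a e with h1 | h1
      · rw [coeff_toSeries θ _ (hcE k), hmin a h1]; simp
      · have : b < h := by
          rcases h1.eq_or_lt with h2 | h2
          · exfalso; apply hne; ext <;> simp <;> omega
          · omega
        rw [PowerSeries.coeff_map, hord b this]; simp
    · intro h1; exact absurd (by simp) h1
  let s : Finset (Fin n) := Finset.univ.filter fun k => tCoeff E (c k) e ≠ 0
  have hs : s.Nonempty := by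
    obtain ⟨k, hk⟩ := he; exact ⟨k, by simpa [s] using hk⟩
  let k₁ := s.min' hs
  have hk₁ : tCoeff E (c k₁) e ≠ 0 := by
    have := s.min'_mem hs; simpa [s] using this
  have hk₁min : ∀ k, tCoeff E (c k) e ≠ 0 → k₁ ≤ k := fun k hk => s.min'_le k (by simpa [s] using hk)
  by_contra! hlt
  have hl0 : 0 < ‖l‖ := norm_pos_iff.mpr hlead
  have hl1 : ‖l‖ < 1 := by
    refine lt_of_le_of_lt ?_ hlt
    exact le_mul_of_one_le_right hl0.le (one_le_pow₀ hθ.le)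
  rw [← Finset.add_sum_erase _ _ (Finset.mem_univ k₁)] at hsum
  have h1 : ‖aeval θ (tCoeff E (c k₁) e) * l ^ q ^ (k₁ : ℕ)‖ ≤
      ‖l‖ ^ q ^ (k₁ : ℕ) * (‖l‖ * ‖θ‖ ^ E) := by
    rw [eq_neg_of_add_eq_zero_left hsum, norm_neg]
    refine IsUltrametricDist.norm_sum_le_of_forall_le_of_nonneg (by positivity) fun k hk => ?_
    by_cases h0 : tCoeff E (c k) e = 0
    · rw [h0, map_zero, zero_mul, norm_zero]; positivity
    have hk' : k₁ < k := lt_of_le_of_ne (hk₁min k h0) (Finset.ne_of_mem_erase hk).symm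
    rw [norm_mul, norm_pow, ← mul_assoc, ← pow_succ, mul_comm]
    refine mul_le_mul ?_ (norm_aeval_le hq hF hθ (natDegree_tCoeff _ _ _)) (norm_nonneg _)
      (by positivity)
    refine pow_le_pow_of_le_one hl0.le hl1.le ?_
    exact Nat.pow_lt_pow_right (by omega) hk'
  have h2 : ‖l‖ ^ q ^ (k₁ : ℕ) ≤ ‖aeval θ (tCoeff E (c k₁) e) * l ^ q ^ (k₁ : ℕ)‖ := by
    rw [norm_mul, norm_pow]
    exact le_mul_of_one_le_left (by positivity) (one_le_norm_aeval hq hF hθ hk₁)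
  have h3 := h2.trans h1
  have h4 : 0 < ‖l‖ ^ q ^ (k₁ : ℕ) := by positivity
  have := mul_lt_mul_of_pos_left hlt h4
  linarith

lemma exists_spec_expand_bound (h : F[X][X]) :
    ∃ d, h.natDegree ≤ d ∧ ∀ n, 1 ≤ n → (spec F 1 (expand F[X] n h)).natDegree ≤ d * n := by
  refine ⟨h.natDegree + ∑ a ∈ Finset.range (h.natDegree + 1), (h.coeff a).natDegree, by omega, ?_⟩
  intro n hn
  have : spec F 1 (expand F[X] n h) =
      ∑ a ∈ Finset.range (h.natDegree + 1), h.coeff a * (X ^ n) ^ a := by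
    conv_lhs => rw [h.as_sum_range_C_mul_X_pow]
    simp only [map_sum, map_mul, expand_C, map_pow, expand_X]
    refine Finset.sum_congr rfl fun a _ => ?_
    simp [spec]
  rw [this]
  refine natDegree_sum_le_of_forall_le _ _ fun a ha => ?_
  refine natDegree_mul_le.trans ?_
  rw [← pow_mul, natDegree_X_pow]
  have h1 : (h.coeff a).natDegree ≤ ∑ a ∈ Finset.range (h.natDegree + 1), (h.coeff a).natDegree :=
    Finset.single_le_sum (f := fun a => (h.coeff a).natDegree) (fun _ _ => Nat.zero_le _) ha
  have h2 : a ≤ h.natDegree := by have := Finset.mem_range.mp ha; omega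
  nlinarith

variable {ι : Type*} [Fintype ι] [DecidableEq ι]

/-- The product `Φ Φ⁽¹⁾ ⋯ Φ⁽ᵛ⁻¹⁾` of twists of `Φ`. -/
noncomputable def twistProd (q : ℕ) (Φ : Matrix ι ι F[X][X]) : ℕ → Matrix ι ι F[X][X]
  | 0 => 1
  | ν + 1 => twistProd q Φ ν * Φ.map (expand F[X] (q ^ ν))

lemma twistProd_natDegree (hq : 2 ≤ q) {Φ : Matrix ι ι F[X][X]} {d : ℕ}
    (hd : ∀ i k, (Φ i k).natDegree ≤ d) (ν : ℕ) (i k : ι) :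
    (twistProd q Φ ν i k).natDegree ≤ d * q ^ ν := by
  induction ν generalizing k with
  | zero =>
    rw [twistProd, Matrix.one_apply]; split_ifs <;> simp
  | succ ν ih =>
    rw [twistProd, Matrix.mul_apply]
    refine natDegree_sum_le_of_forall_le _ _ fun l _ => natDegree_mul_le.trans ?_
    rw [Matrix.map_apply, natDegree_expand]
    have h1 := ih l
    have h2 := Nat.mul_le_mul_right (q ^ ν) (hd l k)
    have h3 : d * q ^ ν * 2 ≤ d * q ^ ν * q := Nat.mul_le_mul_left _ hq
    rw [pow_succ, ← mul_assoc]
    omega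

variable {ψ : ι → PowerSeries L} {Φ : Matrix ι ι F[X][X]}

lemma twistProd_equation (hfr : ∀ ν x, fr ν x = x ^ q ^ ν)
    (hF : ∀ a : F, algebraMap F L a ^ q = algebraMap F L a)
    (hψ : ∀ i, ψ i = ∑ k, toSeries F θ (Φ i k) * PowerSeries.map (fr 1) (ψ k)) (μ ν : ℕ) (i : ι) :
    PowerSeries.map (fr μ) (ψ i) = ∑ k, toSeries F θ (expand F[X] (q ^ μ) (twistProd q Φ ν i k)) *
      PowerSeries.map (fr (μ + ν)) (ψ k) := by
  have hcomp : ∀ (a b : ℕ) (f : PowerSeries L),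
      PowerSeries.map (fr a) (PowerSeries.map (fr b) f) = PowerSeries.map (fr (a + b)) f := by
    intro a b f
    ext j
    simp only [PowerSeries.coeff_map, hfr, ← pow_mul, pow_add, mul_comm (q ^ a)]
  induction ν with
  | zero =>
    rw [Finset.sum_eq_single i]
    · simp [twistProd]
    · intro k _ hk; simp [twistProd, Matrix.one_apply_ne hk.symm]
    · simp
  | succ ν ih =>
    rw [ih]
    have h1 : ∀ k, PowerSeries.map (fr (μ + ν)) (ψ k) = ∑ l,
        toSeries F θ (expand F[X] (q ^ (μ + ν)) (Φ k l)) *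
          PowerSeries.map (fr (μ + (ν + 1))) (ψ l) := by
      intro k
      conv_lhs => rw [hψ k]
      rw [map_sum]
      refine Finset.sum_congr rfl fun l _ => ?_
      rw [map_mul, hcomp, toSeries_twist hfr hF, add_assoc]
    simp only [h1, Finset.mul_sum, twistProd, Matrix.mul_apply, map_sum, map_mul, Finset.sum_mul,
      Matrix.map_apply, ← mul_assoc]
    rw [Finset.sum_comm]
    refine Finset.sum_congr rfl fun k _ => Finset.sum_congr rfl fun l _ => ?_
    rw [← expand_mul, ← pow_add]

lemma det_twistProd_ne_zero
    (hdet : ∀ ν, spec F 1 (expand F[X] (q ^ ν) Φ.det) ≠ 0) (ν : ℕ) :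
    spec F 1 (twistProd q Φ ν).det ≠ 0 := by
  induction ν with
  | zero => simp [twistProd]
  | succ ν ih =>
    rw [twistProd, Matrix.det_mul, map_mul]
    refine mul_ne_zero ih ?_
    have := hdet ν
    rwa [AlgHom.map_det] at this

/-- Twists of `F[t][θ]`-linearly independent solutions remain linearly independent. -/
lemma twist_independent (hfr : ∀ ν x, fr ν x = x ^ q ^ ν)
    (hF : ∀ a : F, algebraMap F L a ^ q = algebraMap F L a)
    (hψ : ∀ i, ψ i = ∑ k, toSeries F θ (Φ i k) * PowerSeries.map (fr 1) (ψ k))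
    (hdet : ∀ ν, spec F 1 (expand F[X] (q ^ ν) Φ.det) ≠ 0)
    (hind : ∀ H : ι → F[X][X], ∑ i, toSeries F θ (H i) * ψ i = 0 → H = 0) (S : ℕ)
    (H : ι → F[X][X]) (h : ∑ i, toSeries F θ (H i) * PowerSeries.map (fr S) (ψ i) = 0) : H = 0 := by
  set M := twistProd q Φ S with hM
  have hMne : M.det ≠ 0 := fun h0 => det_twistProd_ne_zero hdet S (by rw [← hM, h0, map_zero])
  have heq : ∀ i, ψ i = ∑ k, toSeries F θ (M i k) * PowerSeries.map (fr S) (ψ k) := by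
    intro i
    have h0 := twistProd_equation hfr hF hψ 0 S i
    have hid : PowerSeries.map (fr 0) (ψ i) = ψ i := by
      ext j; simp [hfr]
    simpa [hid] using h0
  have h1 : Matrix.vecMul H M.adjugate = 0 := by
    apply hind
    have h2 : ∑ i, toSeries F θ (Matrix.vecMul H M.adjugate i) * ψ i =
        ∑ k, toSeries F θ (Matrix.vecMul (Matrix.vecMul H M.adjugate) M k) *
          PowerSeries.map (fr S) (ψ k) := by
      simp only [Matrix.vecMul_eq_sum (Matrix.vecMul H M.adjugate) M, Finset.sum_apply, Pi.smul_apply,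
        smul_eq_mul, map_sum, map_mul, Finset.sum_mul]
      rw [Finset.sum_comm]
      refine Finset.sum_congr rfl fun i _ => ?_
      conv_lhs => rw [heq i]
      rw [Finset.mul_sum]
      exact Finset.sum_congr rfl fun k _ => by rw [mul_assoc]
    rw [h2, Matrix.vecMul_vecMul, Matrix.adjugate_mul]
    have h3 : ∀ k, Matrix.vecMul H (M.det • (1 : Matrix ι ι F[X][X])) k = M.det * H k := by
      intro k
      rw [Matrix.vecMul_smul, Matrix.vecMul_one]; rfl
    simp only [h3, map_mul, mul_assoc, ← Finset.mul_sum, h, mul_zero]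
  have h4 := congrArg (fun w => Matrix.vecMul w M) h1
  simp only [Matrix.vecMul_vecMul, Matrix.adjugate_mul, Matrix.vecMul_smul, Matrix.vecMul_one,
    Matrix.zero_vecMul] at h4
  exact (smul_eq_zero.mp h4).resolve_left hMne

end LinearCriterion

/-! ### A linear independence criterion -/

section LinearCriterion

open Polynomial

variable {F : Type*} [Field F] {L : Type*} [NormedField L] [Algebra F L] [IsUltrametricDist L]
  [CompleteSpace L] {θ : L} {q : ℕ} {fr : ℕ → L →+* L} {ι : Type*} [Fintype ι] [DecidableEq ι]
  {ψ : ι → PowerSeries L} {Φ : Matrix ι ι F[X][X]}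

lemma sum_pow_succ_le (hq : 2 ≤ q) (n : ℕ) : ∑ m ∈ Finset.range n, q ^ (m + 1) ≤ q ^ (n + 1) := by
  induction n with
  | zero => simp
  | succ n ih =>
    rw [Finset.sum_range_succ]
    have : q ^ (n + 1) * 2 ≤ q ^ (n + 1) * q := Nat.mul_le_mul_left _ hq
    rw [pow_succ q (n + 1)]
    omega

/-- In the application of Siegel's lemma the number of equations (left) is less than the number
of unknowns (right). -/
lemma siegel_count (r C₀ s Q : ℕ) (hr : 1 ≤ r) (hs : 1 ≤ s) (hQ : 1 ≤ Q) :
    (2 * r + 1) * s * ((r - 1) * ((2 * r ^ 2 * (C₀ + 1) + C₀ + 1) * Q)) <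
      r * (2 * r ^ 2 * (C₀ + 1) * Q * (2 * r * s)) := by
  obtain ⟨r, rfl⟩ : ∃ r', r = r' + 1 := ⟨r - 1, by omega⟩
  have : (r + 1) * (2 * (r + 1) ^ 2 * (C₀ + 1) * Q * (2 * (r + 1) * s)) =
    (2 * (r + 1) + 1) * s * (r * ((2 * (r + 1) ^ 2 * (C₀ + 1) + C₀ + 1) * Q)) +
      (C₀ + 1) * Q * s * (2 * r ^ 3 + 6 * r ^ 2 + 7 * r + 4) := by ring
  rw [this, Nat.add_sub_cancel]
  have : 0 < (C₀ + 1) * Q * s * (2 * r ^ 3 + 6 * r ^ 2 + 7 * r + 4) := by positivity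
  omega

/-- Iterating `ψ = Φ ψ⁽¹⁾` turns a linear relation between the values at `θ` of the `ψ i` into
one between the values of their `ν`-th twists. -/
lemma twist_relation (hfr : ∀ ν x, fr ν x = x ^ q ^ ν)
    (hF : ∀ a : F, algebraMap F L a ^ q = algebraMap F L a) (hq : 2 ≤ q)
    (hent : ∀ i, Entire (ψ i))
    (hψ : ∀ i, ψ i = ∑ k, toSeries F θ (Φ i k) * PowerSeries.map (fr 1) (ψ k))
    {ρ : ι → F[X]} (hρ : ∑ i, aeval θ (ρ i) * evalAt θ (ψ i) = 0) (ν : ℕ) :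
    ∑ i, aeval θ (Matrix.vecMul ρ ((twistProd q Φ ν).map (spec F 1)) i) *
      evalAt θ (PowerSeries.map (fr ν) (ψ i)) = 0 := by
  rw [← hρ]
  have hid : ∀ i, PowerSeries.map (fr 0) (ψ i) = ψ i := by
    intro i; ext j; simp [hfr]
  have h0 : ∀ i, evalAt θ (ψ i) = ∑ k, aeval θ (spec F 1 (twistProd q Φ ν i k)) *
      evalAt θ (PowerSeries.map (fr ν) (ψ k)) := by
    intro i
    have h := twistProd_equation hfr hF hψ 0 ν i
    have htw : ∀ k, Entire (PowerSeries.map (fr ν) (ψ k)) := fun k =>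
      (hent k).twist (Nat.one_le_pow _ _ (by omega)) (hfr ν)
    simp only [hid, pow_zero, expand_one, zero_add] at h
    rw [h, evalAt_sum _ _ fun k => (entire_toSeries _).mul (htw k)]
    exact Finset.sum_congr rfl fun k _ => by
      rw [evalAt_mul (entire_toSeries _) (htw k), evalAt_toSeries_self]
  simp only [h0, Finset.mul_sum, Matrix.vecMul, dotProduct, map_sum, map_mul, Matrix.map_apply,
    Finset.sum_mul]
  rw [Finset.sum_comm]
  exact Finset.sum_congr rfl fun k _ => Finset.sum_congr rfl fun l _ => by rw [mul_assoc]

/-- Linear independence criterion: entire solutions `ψ` of a Frobenius difference system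
`ψ = Φ ψ⁽¹⁾` over `F[t][θ]` which are linearly independent over `F[t][θ]` have values at `t = θ`
that are linearly independent over `F[θ]`, if `det Φ` and its twists do not vanish at `t = θ`. -/
theorem linear_independence_criterion (hq : 2 ≤ q) (hfr : ∀ ν x, fr ν x = x ^ q ^ ν)
    (hF : ∀ a : F, algebraMap F L a ^ q = algebraMap F L a) (hθ : 1 < ‖θ‖)
    (hent : ∀ i, Entire (ψ i))
    (hψ : ∀ i, ψ i = ∑ k, toSeries F θ (Φ i k) * PowerSeries.map (fr 1) (ψ k))
    (hdet : ∀ ν, spec F 1 (expand F[X] (q ^ ν) Φ.det) ≠ 0)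
    (hind : ∀ H : ι → F[X][X], ∑ i, toSeries F θ (H i) * ψ i = 0 → H = 0)
    (ρ : ι → F[X]) (hρ : ∑ i, aeval θ (ρ i) * evalAt θ (ψ i) = 0) : ρ = 0 := by
  classical
  by_contra hρ0
  have hne : Nonempty ι := by
    by_contra h
    rw [not_nonempty_iff] at h
    exact hρ0 (Subsingleton.elim _ _)
  set r := Fintype.card ι with hr
  have hr1 : 1 ≤ r := Fintype.card_pos
  have hcomp : ∀ (a b : ℕ) (f : PowerSeries L),
      PowerSeries.map (fr a) (PowerSeries.map (fr b) f) = PowerSeries.map (fr (a + b)) f := by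
    intro a b f
    ext j
    simp only [PowerSeries.coeff_map, hfr, ← pow_mul, pow_add, mul_comm (q ^ a)]
  have htw : ∀ ν k, Entire (PowerSeries.map (fr ν) (ψ k)) := fun ν k =>
    (hent k).twist (Nat.one_le_pow _ _ (by omega)) (hfr ν)
  have hq1 : ∀ ν, 1 ≤ q ^ ν := fun ν => Nat.one_le_pow _ _ (by omega)
  -- the degrees of `Φ` in both variables grow at most like `d q^ν` under twisting
  obtain ⟨d, hd, hdν⟩ : ∃ d, (∀ i k, (Φ i k).natDegree ≤ d) ∧
      ∀ ν i k, (spec F 1 (expand F[X] (q ^ ν) (Φ i k))).natDegree ≤ d * q ^ ν := by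
    choose D hD hD' using fun ik : ι × ι => exists_spec_expand_bound (F := F) (Φ ik.1 ik.2)
    have hle : ∀ ik, D ik ≤ ∑ x, D x := fun ik =>
      Finset.single_le_sum (fun _ _ => Nat.zero_le _) (Finset.mem_univ ik)
    exact ⟨∑ x, D x, fun i k => (hD (i, k)).trans (hle _), fun ν i k =>
      (hD' (i, k) _ (hq1 ν)).trans (Nat.mul_le_mul_right _ (hle _))⟩
  -- `P ν` is the linear relation between the values of the `ν`-th twists of the `ψ i`
  let P : ℕ → ι → F[X] := fun ν => Matrix.vecMul ρ ((twistProd q Φ ν).map (spec F 1))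
  have hPsucc : ∀ ν, P (ν + 1) = Matrix.vecMul (P ν) ((Φ.map (expand F[X] (q ^ ν))).map (spec F 1)) := by
    intro ν
    simp only [P, twistProd]
    rw [Matrix.vecMul_vecMul, Matrix.map_mul]
  obtain ⟨C₀, hC₀, hdC⟩ : ∃ C₀, (∀ i, (ρ i).natDegree ≤ C₀) ∧ d ≤ C₀ := by
    refine ⟨d + ∑ i, (ρ i).natDegree, fun i => ?_, by omega⟩
    have := Finset.single_le_sum (f := fun i => (ρ i).natDegree) (fun _ _ => Nat.zero_le _)
      (Finset.mem_univ i)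
    omega
  have hPdeg : ∀ ν i, (P ν i).natDegree ≤ C₀ * q ^ ν := by
    intro ν
    induction ν with
    | zero =>
      intro i
      have : P 0 = ρ := by simp [P, twistProd]
      rw [this]; simpa using hC₀ i
    | succ ν ih =>
      intro i
      rw [hPsucc]
      simp only [Matrix.vecMul, dotProduct]
      refine natDegree_sum_le_of_forall_le _ _ fun l _ => natDegree_mul_le.trans ?_
      have h1 := ih l
      have h2 := hdν ν l i
      have h3 := Nat.mul_le_mul_right (q ^ ν) hdC
      have h4 : C₀ * q ^ ν * 2 ≤ C₀ * q ^ ν * q := Nat.mul_le_mul_left _ hq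
      rw [Matrix.map_apply, Matrix.map_apply, pow_succ, ← mul_assoc]
      omega
  have hPne : ∀ ν, ∃ i, P ν i ≠ 0 := by
    intro ν
    by_contra! hcon
    apply hρ0
    refine Matrix.eq_zero_of_vecMul_eq_zero ?_ (funext hcon : P ν = 0)
    have := det_twistProd_ne_zero hdet ν
    rwa [RingHom.map_det] at this
  choose i₀ hi₀ using hPne
  obtain ⟨M₀, hM₀⟩ : ∃ M₀, ∀ i, GaussLE ‖θ‖ M₀ (ψ i) := by
    choose M hM using fun i => hent i ‖θ‖ (by linarith)
    refine ⟨∑ i, M i, fun i => (hM i).mono ?_⟩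
    exact Finset.single_le_sum (fun i _ => (hM i).nonneg) (Finset.mem_univ i)
  have hM₀0 : 0 ≤ M₀ := (hM₀ (Classical.arbitrary ι)).nonneg
  -- `N` bounds the degree in `t` of the auxiliary coefficients, `N'` is the number of prescribed
  -- zeros and `S` the number of twists; the excess `s = N' - N` makes the final estimates clash
  set Cc := 2 * r ^ 2 * (C₀ + 1) with hCc
  obtain ⟨s, hs1, hs⟩ : ∃ s, 1 ≤ s ∧ M₀ * ‖θ‖ ^ (Cc + 1 + r * ((Cc + d) * q ^ r)) < ‖θ‖ ^ s := by
    obtain ⟨s, hs⟩ := pow_unbounded_of_one_lt (M₀ * ‖θ‖ ^ (Cc + 1 + r * ((Cc + d) * q ^ r))) hθ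
    exact ⟨s + 1, by omega, hs.trans_le (pow_le_pow_right₀ hθ.le (by omega))⟩
  set N := 2 * r * s with hN
  set N' := (2 * r + 1) * s with hN'
  have hN1 : 1 ≤ N := Nat.succ_le_of_lt (by positivity)
  have hNN : N' = N + s := by rw [hN, hN']; ring
  set S := N + N' with hS
  set Q₀ := q ^ S with hQ₀
  have hQ₀1 : 1 ≤ Q₀ := hq1 S
  obtain ⟨H, hH0, hHA, hHN, hHP⟩ := siegel_proportional (F := F) (κ := Fin N') (Cc * Q₀) N
    ((Cc + C₀ + 1) * Q₀) (fun ν => q ^ ((ν : ℕ) + 1))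
    (fun ν i => P (S - (ν + 1)) i ^ q ^ ((ν : ℕ) + 1)) (fun ν => i₀ (S - (ν + 1)))
    (by
      intro ν i
      have hν := ν.2
      have h1 : N * q ^ ((ν : ℕ) + 1) ≤ Q₀ := by
        rw [hQ₀, hS, pow_add q N N']
        refine Nat.mul_le_mul (Nat.lt_pow_self (by omega)).le ?_
        exact Nat.pow_le_pow_right (by omega) hν
      have h2 : (P (S - (ν + 1)) i ^ q ^ ((ν : ℕ) + 1)).natDegree ≤ C₀ * Q₀ := by
        refine natDegree_pow_le.trans ?_
        refine (Nat.mul_le_mul_left _ (hPdeg _ _)).trans (le_of_eq ?_)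
        rw [mul_left_comm, ← pow_add, hQ₀]
        congr 2; omega
      calc _ ≤ Cc * Q₀ + Q₀ + C₀ * Q₀ := by omega
        _ = _ := by ring)
    (by
      rw [Fintype.card_fin, ← hr]
      exact siegel_count r C₀ s Q₀ hr1 hs1 hQ₀1)
  -- the auxiliary function `g` vanishes at `θ^(q^ν)` for `1 ≤ ν ≤ N'`
  set g : PowerSeries L := ∑ i, toSeries F θ (H i) * PowerSeries.map (fr S) (ψ i) with hg
  have hgent : Entire g := Entire.sum _ _ fun i _ => (entire_toSeries _).mul (htw S i)
  have hg0 : g ≠ 0 := fun h => hH0 (twist_independent hfr hF hψ hdet hind S H h)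
  have hgz : ∀ ν < N', evalAt (θ ^ q ^ (ν + 1)) g = 0 := by
    intro ν hν
    have hev : ∀ i, evalAt (θ ^ q ^ (ν + 1)) (PowerSeries.map (fr S) (ψ i)) =
        evalAt θ (PowerSeries.map (fr (S - (ν + 1))) (ψ i)) ^ q ^ (ν + 1) := by
      intro i
      rw [← evalAt_twist (hq1 _) (hfr (ν + 1)) (htw _ i), hcomp]
      congr 4; omega
    have hrel := twist_relation hfr hF hq hent hψ hρ (S - (ν + 1))
    have hrel' := congrArg (fr (ν + 1)) hrel
    rw [map_sum, map_zero] at hrel'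
    have h1 : evalAt (θ ^ q ^ (ν + 1)) g * aeval θ (P (S - (ν + 1)) (i₀ (S - (ν + 1))) ^ q ^ (ν + 1))
        = 0 := by
      rw [hg, evalAt_sum _ _ fun i => (entire_toSeries _).mul (htw S i), Finset.sum_mul]
      have h2 : ∀ i, evalAt (θ ^ q ^ (ν + 1)) (toSeries F θ (H i) * PowerSeries.map (fr S) (ψ i)) *
          aeval θ (P (S - (ν + 1)) (i₀ (S - (ν + 1))) ^ q ^ (ν + 1)) =
          aeval θ (spec F (q ^ (ν + 1)) (H (i₀ (S - (ν + 1))))) *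
            fr (ν + 1) (aeval θ (P (S - (ν + 1)) i) *
              evalAt θ (PowerSeries.map (fr (S - (ν + 1))) (ψ i))) := by
        intro i
        rw [evalAt_mul (entire_toSeries _) (htw S i), evalAt_toSeries, hev, mul_right_comm,
          ← map_mul, hHP ⟨ν, hν⟩ i, hfr, mul_pow, map_mul, map_pow, mul_assoc]
      rw [Finset.sum_congr rfl fun i _ => h2 i, ← Finset.mul_sum, hrel', mul_zero]
    refine (mul_eq_zero.mp h1).resolve_right ?_
    rw [map_pow]
    refine pow_ne_zero _ fun h => hi₀ (S - (ν + 1)) ?_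
    exact aeval_injective hq hF hθ (by rw [h, map_zero])
  set h := g.order.toNat with hh
  have hlead : PowerSeries.coeff h g ≠ 0 := PowerSeries.coeff_order hg0
  have hord : ∀ j < h, PowerSeries.coeff j g = 0 := fun j hj =>
    PowerSeries.coeff_of_lt_order_toNat j hj
  -- lower bound for the leading coefficient: the first `r + 1` twists of `g` are linearly dependent
  have hlow : 1 ≤ ‖PowerSeries.coeff h g‖ * ‖θ‖ ^ (r * ((Cc + d) * q ^ r * Q₀)) := by
    let v : Fin (r + 1) → ι → F[X][X] := fun k i => ∑ l, expand F[X] (q ^ (k : ℕ)) (H l) *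
      expand F[X] (q ^ (S + (k : ℕ))) (twistProd q Φ (r - k) l i)
    obtain ⟨c, hc0, hcdeg, hcv⟩ := exists_relation ((Cc + d) * q ^ r * Q₀) r hr v (by
      intro k i
      have hk : (k : ℕ) ≤ r := by have := k.2; omega
      refine natDegree_sum_le_of_forall_le _ _ fun l _ => natDegree_mul_le.trans ?_
      rw [natDegree_expand, natDegree_expand]
      have h1 : (H l).natDegree * q ^ (k : ℕ) ≤ Cc * Q₀ * q ^ r :=
        Nat.mul_le_mul (hHA l) (Nat.pow_le_pow_right (by omega) hk)
      have h2 : (twistProd q Φ (r - k) l i).natDegree * q ^ (S + (k : ℕ)) ≤ d * q ^ r * Q₀ := by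
        refine (Nat.mul_le_mul_right _ (twistProd_natDegree hq hd _ _ _)).trans (le_of_eq ?_)
        rw [mul_assoc, ← pow_add, mul_assoc, hQ₀, ← pow_add]
        congr 2; omega
      calc _ ≤ Cc * Q₀ * q ^ r + d * q ^ r * Q₀ := by omega
        _ = _ := by ring)
    refine leadingCoeff_lower_bound hq hfr hF hθ hc0 hcdeg ?_ hord hlead
    have hgk : ∀ k : Fin (r + 1), PowerSeries.map (fr k) g =
        ∑ i, toSeries F θ (v k i) * PowerSeries.map (fr (S + r)) (ψ i) := by
      intro k
      have hk : (k : ℕ) ≤ r := by have := k.2; omega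
      rw [hg, map_sum]
      simp only [v, map_sum, Finset.sum_mul]
      rw [Finset.sum_comm]
      refine Finset.sum_congr rfl fun l _ => ?_
      rw [map_mul, hcomp, ← toSeries_twist hfr hF, add_comm (k : ℕ) S,
        twistProd_equation hfr hF hψ (S + k) (r - k) l, Finset.mul_sum]
      refine Finset.sum_congr rfl fun i _ => ?_
      rw [map_mul, mul_assoc, show S + (k : ℕ) + (r - k) = S + r by omega]
    simp only [hgk, Finset.mul_sum]
    rw [Finset.sum_comm]
    refine Finset.sum_eq_zero fun i _ => ?_
    simp only [← mul_assoc, ← map_mul, ← Finset.sum_mul, ← map_sum, hcv, map_zero, zero_mul]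
  -- upper bound for the leading coefficient, from the zeros of `g` and the Schwarz lemma
  have hR1 : 1 ≤ ‖θ‖ ^ Q₀ := one_le_pow₀ hθ.le
  have hgauss : GaussLE (‖θ‖ ^ Q₀) (‖θ‖ ^ (Cc * Q₀) * (‖θ‖ ^ Q₀) ^ N * M₀ ^ Q₀) g := by
    refine GaussLE.sum (by positivity) (by positivity) _ _ fun i _ => ?_
    exact (gaussLE_toSeries hq hF hθ (hHA i) (hHN i) hR1).mul (by positivity)
      ((hM₀ i).twist (norm_nonneg _) (hfr S))
  have hinj : Function.Injective fun m : ℕ => θ ^ q ^ (m + 1) := by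
    intro a b hab
    have := congrArg norm hab
    simp only [norm_pow] at this
    have h1 := pow_right_injective₀ (by linarith) hθ.ne' this
    have h2 := Nat.pow_right_injective hq h1
    omega
  have hup := schwarz (R := ‖θ‖ ^ Q₀) (by positivity) h
    ((Finset.range N').image fun m => θ ^ q ^ (m + 1)) g _ hgent hgauss hord (by
      intro z hz
      obtain ⟨m, hm, rfl⟩ := Finset.mem_image.mp hz
      have hm' := Finset.mem_range.mp hm
      refine ⟨pow_ne_zero _ fun h0 => ?_, ?_, hgz m hm'⟩
      · rw [h0, norm_zero] at hθ; linarith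
      · rw [norm_pow]
        exact pow_le_pow_right₀ hθ.le (Nat.pow_le_pow_right (by omega) (by omega)))
  rw [Finset.prod_image fun a _ b _ hab => hinj hab, Finset.prod_div_distrib, Finset.prod_const,
    Finset.card_range] at hup
  simp only [norm_pow] at hup
  rw [Finset.prod_pow_eq_pow_sum] at hup
  have hsum : ∑ m ∈ Finset.range N', q ^ (m + 1) ≤ Q₀ :=
    (sum_pow_succ_le hq N').trans (Nat.pow_le_pow_right (by omega) (by omega))
  have hup2 : ‖PowerSeries.coeff h g‖ * (‖θ‖ ^ Q₀) ^ N' ≤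
      ‖θ‖ ^ (Cc * Q₀) * (‖θ‖ ^ Q₀) ^ N * M₀ ^ Q₀ * ‖θ‖ ^ Q₀ := by
    have h1 : ‖PowerSeries.coeff h g‖ ≤ ‖PowerSeries.coeff h g‖ * (‖θ‖ ^ Q₀) ^ h :=
      le_mul_of_one_le_right (norm_nonneg _) (one_le_pow₀ hR1)
    have h2 := h1.trans hup
    rw [← mul_div_assoc, le_div_iff₀ (by positivity)] at h2
    refine h2.trans ?_
    gcongr
    exact hθ.le
  have hfin : (‖θ‖ ^ Q₀) ^ N' ≤ (M₀ * ‖θ‖ ^ (Cc + 1 + r * ((Cc + d) * q ^ r))) ^ Q₀ *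
      (‖θ‖ ^ Q₀) ^ N := by
    calc (‖θ‖ ^ Q₀) ^ N' ≤ (‖PowerSeries.coeff h g‖ * ‖θ‖ ^ (r * ((Cc + d) * q ^ r * Q₀))) *
          (‖θ‖ ^ Q₀) ^ N' := le_mul_of_one_le_left (by positivity) hlow
      _ = (‖PowerSeries.coeff h g‖ * (‖θ‖ ^ Q₀) ^ N') * ‖θ‖ ^ (r * ((Cc + d) * q ^ r * Q₀)) := by
        ring
      _ ≤ (‖θ‖ ^ (Cc * Q₀) * (‖θ‖ ^ Q₀) ^ N * M₀ ^ Q₀ * ‖θ‖ ^ Q₀) *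
          ‖θ‖ ^ (r * ((Cc + d) * q ^ r * Q₀)) := by gcongr
      _ = _ := by
        rw [mul_pow M₀, ← pow_mul ‖θ‖ (Cc + 1 + r * ((Cc + d) * q ^ r)) Q₀,
          show (Cc + 1 + r * ((Cc + d) * q ^ r)) * Q₀ = Cc * Q₀ + Q₀ + r * ((Cc + d) * q ^ r * Q₀)
            by ring, pow_add, pow_add]
        ring
  have hstrict : (M₀ * ‖θ‖ ^ (Cc + 1 + r * ((Cc + d) * q ^ r))) ^ Q₀ * (‖θ‖ ^ Q₀) ^ N <
      (‖θ‖ ^ Q₀) ^ N' := by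
    rw [hNN, pow_add (‖θ‖ ^ Q₀), mul_comm ((‖θ‖ ^ Q₀) ^ N)]
    refine mul_lt_mul_of_pos_right ?_ (by positivity)
    rw [← pow_mul, mul_comm Q₀ s, pow_mul]
    exact pow_lt_pow_left₀ hs (by positivity) (by omega)
  linarith

end LinearCriterion

/-! ### The algebraic independence criterion -/

section AlgebraicCriterion

open MvPolynomial

/-- The substitution `W ↦ bW`, `X ↦ X + u bⁿ Wⁿ`, `Y ↦ Y + u bⁿ Wⁿ X`. -/
noncomputable def substVars {R : Type*} [CommRing R] (n : ℕ) (b u : R) : Fin 3 → MvPolynomial (Fin 3) R :=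
  ![C b * X 0, X 1 + C (u * b ^ n) * X 0 ^ n, X 2 + C (u * b ^ n) * X 0 ^ n * X 1]

/-- The weights of `W`, `X`, `Y` for which the substitution `substVars` is homogeneous. -/
def varWeight (n : ℕ) : Fin 3 → ℕ := ![1, n, 2 * n]

lemma substVars_homogeneous {R : Type*} [CommRing R] (n : ℕ) (b u : R) (i : Fin 3) :
    IsWeightedHomogeneous (varWeight n) (substVars n b u i) (varWeight n i) := by
  have h0 : IsWeightedHomogeneous (varWeight n) (X 0 : MvPolynomial (Fin 3) R) 1 :=
    isWeightedHomogeneous_X R _ _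
  have h1 : IsWeightedHomogeneous (varWeight n) (X 1 : MvPolynomial (Fin 3) R) n :=
    isWeightedHomogeneous_X R _ _
  have h2 : IsWeightedHomogeneous (varWeight n) (X 2 : MvPolynomial (Fin 3) R) (2 * n) :=
    isWeightedHomogeneous_X R _ _
  have h3 : IsWeightedHomogeneous (varWeight n) (C (u * b ^ n) * X 0 ^ n : MvPolynomial (Fin 3) R) n := by
    simpa using (h0.pow n).C_mul (u * b ^ n)
  fin_cases i
  · exact h0.C_mul b
  · exact h1.add h3
  · refine h2.add ?_
    have := h3.mul h1
    rwa [← two_mul] at this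

lemma substVars_monomial_homogeneous {R : Type*} [CommRing R] (n : ℕ) (b u : R) (m : Fin 3 →₀ ℕ) :
    IsWeightedHomogeneous (varWeight n) (aeval (substVars n b u) (monomial m (1 : R)))
      (Finsupp.weight (varWeight n) m) := by
  rw [aeval_monomial, map_one, one_mul, Finsupp.prod_fintype _ _ (by simp), Finsupp.weight_eq_sum]
  exact IsWeightedHomogeneous.prod _ _ _ fun i _ => (substVars_homogeneous n b u i).pow (m i)

lemma substVars_weight {R : Type*} [CommRing R] (n : ℕ) (b u : R) (m m' : Fin 3 →₀ ℕ)
    (h : m' ∈ (aeval (substVars n b u) (monomial m (1 : R))).support) :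
    Finsupp.weight (varWeight n) m' = Finsupp.weight (varWeight n) m := by
  rw [mem_support_iff] at h
  exact substVars_monomial_homogeneous n b u m h

lemma substVars_injective {R : Type*} [CommRing R] [IsDomain R] (n : ℕ) {b : R} (hb : b ≠ 0) (u : R) :
    Function.Injective (aeval (substVars n b u) : MvPolynomial (Fin 3) R →ₐ[R] _) := by
  let K := FractionRing R
  let i : R →+* K := algebraMap R K
  have hi : Function.Injective i := IsFractionRing.injective R K
  have hb' : i b ≠ 0 := fun h => hb (hi (by rw [h, map_zero]))
  let χ : MvPolynomial (Fin 3) R →+* MvPolynomial (Fin 3) K :=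
    eval₂Hom ((C : K →+* _).comp i) ![C (i b)⁻¹ * X 0, X 1 - C (i u) * X 0 ^ n,
      X 2 - C (i u) * X 0 ^ n * (X 1 - C (i u) * X 0 ^ n)]
  have hcomp : χ.comp (aeval (substVars n b u) : MvPolynomial (Fin 3) R →ₐ[R] _).toRingHom =
      MvPolynomial.map i := by
    have hbn : (C (i (u * b ^ n)) * (C (i b)⁻¹ * X 0) ^ n : MvPolynomial (Fin 3) K) =
        C (i u) * X 0 ^ n := by
      rw [map_mul, map_pow, mul_pow, ← mul_assoc, ← C_pow, ← C_mul, mul_assoc, ← mul_pow,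
        mul_inv_cancel₀ hb', one_pow, mul_one]
    refine MvPolynomial.ringHom_ext (fun r => ?_) (fun k => ?_)
    · simp [χ]
    · have e0 : χ (X 0) = C (i b)⁻¹ * X 0 := by simp [χ]
      have e1 : χ (X 1) = X 1 - C (i u) * X 0 ^ n := by simp [χ]
      have e2 : χ (X 2) = X 2 - C (i u) * X 0 ^ n * (X 1 - C (i u) * X 0 ^ n) := by simp [χ]
      have eC : ∀ r, χ (C r) = C (i r) := by intro r; simp [χ]
      fin_cases k
      · change χ (aeval (substVars n b u) (X 0)) = MvPolynomial.map i (X 0)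
        rw [aeval_X, map_X]
        change χ (C b * X 0) = _
        rw [map_mul, eC, e0, ← mul_assoc, ← C_mul, mul_inv_cancel₀ hb', C_1, one_mul]
      · change χ (aeval (substVars n b u) (X 1)) = MvPolynomial.map i (X 1)
        rw [aeval_X, map_X]
        change χ (X 1 + C (u * b ^ n) * X 0 ^ n) = _
        rw [map_add, map_mul, map_pow, eC, e0, e1, hbn]; ring
      · change χ (aeval (substVars n b u) (X 2)) = MvPolynomial.map i (X 2)
        rw [aeval_X, map_X]
        change χ (X 2 + C (u * b ^ n) * X 0 ^ n * X 1) = _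
        rw [map_add, map_mul, map_mul, map_pow, eC, e0, e1, e2, hbn]; ring
  have hinj : Function.Injective (MvPolynomial.map i : MvPolynomial (Fin 3) R →+* _) :=
    MvPolynomial.map_injective i hi
  rw [← hcomp] at hinj
  exact Function.Injective.of_comp (f := χ) hinj

lemma map_substVars {R S : Type*} [CommRing R] [CommRing S] (e : R →+* S) (n : ℕ) (b u : R)
    (P : MvPolynomial (Fin 3) R) :
    MvPolynomial.map e (aeval (substVars n b u) P) =
      aeval (substVars n (e b) (e u)) (MvPolynomial.map e P) := by
  have : (MvPolynomial.map e).comp (aeval (substVars n b u) : MvPolynomial (Fin 3) R →ₐ[R] _).toRingHom =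
      (aeval (substVars n (e b) (e u)) : MvPolynomial (Fin 3) S →ₐ[S] _).toRingHom.comp
        (MvPolynomial.map e) := by
    refine MvPolynomial.ringHom_ext (fun r => ?_) (fun k => ?_)
    · simp
    · fin_cases k <;> simp [substVars]
  exact RingHom.congr_fun this P

lemma eval₂_eq_sum_finset {R S : Type*} [CommRing R] [CommRing S] (e : R →+* S) (x : Fin 3 → S)
    (I : Finset (Fin 3 →₀ ℕ)) (P : MvPolynomial (Fin 3) R) (hP : P.support ⊆ I) :
    eval₂ e x P = ∑ m : I, e (coeff m.1 P) * ∏ i, x i ^ m.1 i := by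
  rw [eval₂_eq', Finset.sum_coe_sort I fun m => e (coeff m P) * ∏ i, x i ^ m i]
  refine Finset.sum_subset hP fun m _ hm => ?_
  rw [notMem_support_iff.mp hm, map_zero, zero_mul]

/-- The matrix of `substVars` on the monomials with exponents in `I`. -/
noncomputable def substMatrix {R : Type*} [CommRing R] (n : ℕ) (b u : R)
    (I : Finset (Fin 3 →₀ ℕ)) : Matrix I I R :=
  fun m m' => coeff m'.1 (aeval (substVars n b u) (monomial m.1 (1 : R)))

lemma substVars_support {R : Type*} [CommRing R] (n : ℕ) (b u : R) {I : Finset (Fin 3 →₀ ℕ)}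
    {D : ℕ} (hI : ∀ m, m ∈ I ↔ Finsupp.weight (varWeight n) m ≤ D) (m : I) :
    (aeval (substVars n b u) (monomial m.1 (1 : R))).support ⊆ I := by
  intro m' hm'
  rw [hI, substVars_weight n b u m.1 m' hm']
  exact (hI _).mp m.2

lemma substMatrix_spec {R S : Type*} [CommRing R] [CommRing S] (n : ℕ) (b u : R)
    {I : Finset (Fin 3 →₀ ℕ)} {D : ℕ} (hI : ∀ m, m ∈ I ↔ Finsupp.weight (varWeight n) m ≤ D)
    (e : R →+* S) (z z' : Fin 3 → S) (h0 : z 0 = e b * z' 0)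
    (h1 : z 1 = z' 1 + e (u * b ^ n) * z' 0 ^ n)
    (h2 : z 2 = z' 2 + e (u * b ^ n) * z' 0 ^ n * z' 1) (m : I) :
    ∏ i, z i ^ m.1 i = ∑ k, e (substMatrix n b u I m k) * ∏ i, z' i ^ k.1 i := by
  have hhom : eval₂Hom e z = (eval₂Hom e z').comp
      (aeval (substVars n b u) : MvPolynomial (Fin 3) R →ₐ[R] _).toRingHom := by
    refine MvPolynomial.ringHom_ext (fun r => ?_) (fun k => ?_)
    · simp
    · fin_cases k
      · simpa [substVars] using h0
      · simpa [substVars] using h1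
      · simpa [substVars] using h2
  have h3 : eval₂Hom e z (monomial m.1 1) = ∏ i, z i ^ m.1 i := by
    simp [eval₂_monomial, Finsupp.prod_fintype]
  rw [← h3, hhom]
  exact eval₂_eq_sum_finset e z' I _ (substVars_support n b u hI m)

lemma coeff_sum_monomial {R : Type*} [CommRing R] {I : Finset (Fin 3 →₀ ℕ)} (v : I → R) (m : I) :
    coeff m.1 (∑ k : I, monomial k.1 (v k)) = v m := by
  classical
  rw [coeff_sum, Finset.sum_eq_single m]
  · simp
  · intro k _ hk
    rw [coeff_monomial, if_neg]
    exact fun h => hk (Subtype.ext h)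
  · simp

lemma substMatrix_det {R S : Type*} [CommRing R] [CommRing S] [IsDomain S] (n : ℕ) (b u : R)
    {I : Finset (Fin 3 →₀ ℕ)} [DecidableEq I]
    {D : ℕ} (hI : ∀ m, m ∈ I ↔ Finsupp.weight (varWeight n) m ≤ D)
    (e : R →+* S) (hb : e b ≠ 0) : e (substMatrix n b u I).det ≠ 0 := by
  intro hzero
  have h1 : (e.mapMatrix (substMatrix n b u I)).det = 0 := by
    rw [← RingHom.map_det]; exact hzero
  obtain ⟨v, hv0, hv⟩ := Matrix.exists_vecMul_eq_zero_iff.mpr h1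
  apply hv0
  have hV : aeval (substVars n (e b) (e u)) (∑ k : I, monomial k.1 (v k)) = 0 := by
    have h2 : ∀ k : I, aeval (substVars n (e b) (e u)) (monomial k.1 (v k)) =
        C (v k) * MvPolynomial.map e (aeval (substVars n b u) (monomial k.1 (1 : R))) := by
      intro k
      rw [map_substVars, map_monomial, map_one, ← mul_one (v k), ← C_mul_monomial, map_mul, mul_one,
        aeval_C, algebraMap_eq]
    simp only [map_sum, h2]
    ext1 m
    rw [coeff_sum, coeff_zero]
    by_cases hm : m ∈ I
    · have h3 := congrFun hv ⟨m, hm⟩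
      simp only [Matrix.vecMul, dotProduct, RingHom.mapMatrix_apply, Matrix.map_apply,
        Pi.zero_apply, substMatrix] at h3
      rw [← h3]
      exact Finset.sum_congr rfl fun k _ => by rw [coeff_C_mul, coeff_map]
    · refine Finset.sum_eq_zero fun k _ => ?_
      rw [coeff_C_mul, coeff_map, notMem_support_iff.mp fun h => hm (substVars_support n b u hI k h),
        map_zero, mul_zero]
  have hV0 := substVars_injective n hb (e u) (hV.trans (map_zero _).symm)
  funext m
  rw [← coeff_sum_monomial v m, hV0, coeff_zero, Pi.zero_apply]

/-- A polynomial relation between the entries of `z` is a linear relation between monomials. -/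
lemma eq_zero_of_sum_monomials {R S : Type*} [CommRing R] [CommRing S] {I : Finset (Fin 3 →₀ ℕ)}
    (e : R →+* S) (z : Fin 3 → S) (h : ∀ P : MvPolynomial (Fin 3) R, eval₂ e z P = 0 → P = 0)
    (H : I → R) (hH : ∑ k, e (H k) * ∏ i, z i ^ k.1 i = 0) : H = 0 := by
  have hV : ∑ k : I, monomial k.1 (H k) = 0 := by
    apply h
    rw [← hH]
    change eval₂Hom e z _ = _
    rw [map_sum]
    refine Finset.sum_congr rfl fun k _ => ?_
    simp [eval₂_monomial, Finsupp.prod_fintype]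
  funext m
  rw [← coeff_sum_monomial H m, hV, coeff_zero, Pi.zero_apply]

variable {F : Type*} [Field F] {L : Type*} [NormedField L] [Algebra F L] [IsUltrametricDist L]
  [CompleteSpace L] {θ : L} {q : ℕ} {fr : ℕ → L →+* L}

/-- The element `t - θ ^ q` of `F[t][θ]`. -/
noncomputable def betaPoly (F : Type*) [Field F] (q : ℕ) : Polynomial (Polynomial F) :=
  Polynomial.C Polynomial.X - Polynomial.X ^ q

lemma spec_expand_betaPoly_ne_zero (hq : 2 ≤ q) (ν : ℕ) :
    spec F 1 (Polynomial.expand _ (q ^ ν) (betaPoly F q)) ≠ 0 := by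
  have : spec F 1 (Polynomial.expand _ (q ^ ν) (betaPoly F q)) =
      Polynomial.X - Polynomial.X ^ (q ^ ν * q) := by
    simp only [spec, betaPoly, map_sub, Polynomial.expand_C, Polynomial.expand_X, map_pow,
      Polynomial.coe_eval₂RingHom, Polynomial.eval₂_C, Polynomial.eval₂_X, pow_mul]
    simp
  rw [this, ← pow_succ]
  intro h
  have h1 := congrArg (fun p => Polynomial.coeff p 1) h
  have h2 : 1 ≠ q ^ (ν + 1) := (Nat.one_lt_pow (by omega) (by omega)).ne
  simp [Polynomial.coeff_X_pow, h2] at h1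

set_option maxHeartbeats 1000000 in
/-- Algebraic independence criterion for the values at `t = θ` of the entire functions
`Ω`, `X₀`, `Y₀`, deduced from their algebraic independence over `F[t][θ]`. -/
theorem algebraic_independence_criterion (hq : 2 ≤ q) (hfr : ∀ ν x, fr ν x = x ^ q ^ ν)
    (hF : ∀ a : F, algebraMap F L a ^ q = algebraMap F L a) (hθ : 1 < ‖θ‖)
    {n : ℕ} (hn : 1 ≤ n) {U : Polynomial (Polynomial F)} {Ω X₀ Y₀ : PowerSeries L}
    (hΩ : Entire Ω) (hX₀ : Entire X₀) (hY₀ : Entire Y₀)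
    (eΩ : Ω = toSeries F θ (betaPoly F q) * PowerSeries.map (fr 1) Ω)
    (eX : X₀ = PowerSeries.map (fr 1) X₀ +
      toSeries F θ (U * betaPoly F q ^ n) * PowerSeries.map (fr 1) Ω ^ n)
    (eY : Y₀ = PowerSeries.map (fr 1) Y₀ +
      toSeries F θ (U * betaPoly F q ^ n) * PowerSeries.map (fr 1) Ω ^ n *
        PowerSeries.map (fr 1) X₀)
    (hfun : ∀ P : MvPolynomial (Fin 3) (Polynomial (Polynomial F)),
      eval₂ (toSeries F θ) ![Ω, X₀, Y₀] P = 0 → P = 0)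
    (P : MvPolynomial (Fin 3) (Polynomial F))
    (hP : eval₂ (Polynomial.aeval θ : Polynomial F →ₐ[F] L).toRingHom
      ![evalAt θ Ω, evalAt θ X₀, evalAt θ Y₀] P = 0) : P = 0 := by
  classical
  have hw : ∀ i, varWeight n i ≠ 0 := by
    intro i; fin_cases i <;> simp [varWeight] <;> omega
  obtain ⟨D, hD⟩ : ∃ D, ∀ m ∈ P.support, Finsupp.weight (varWeight n) m ≤ D :=
    ⟨_, fun m hm => le_weightedTotalDegree _ hm⟩
  obtain ⟨I, hI⟩ : ∃ I : Finset (Fin 3 →₀ ℕ),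
      ∀ m, m ∈ I ↔ Finsupp.weight (varWeight n) m ≤ D :=
    ⟨(Finsupp.finite_of_nat_weight_le _ hw D).toFinset, fun m => by simp⟩
  have hPI : P.support ⊆ I := fun m hm => (hI m).mpr (hD m hm)
  let ψ : I → PowerSeries L := fun m => ∏ i, ![Ω, X₀, Y₀] i ^ m.1 i
  have hψ : ∀ m, ψ m = ∑ k, toSeries F θ (substMatrix n (betaPoly F q) U I m k) *
      PowerSeries.map (fr 1) (ψ k) := by
    intro m
    have hz1 : ∀ k, PowerSeries.map (fr 1) (ψ k) =
        ∏ i, (fun i => PowerSeries.map (fr 1) (![Ω, X₀, Y₀] i)) i ^ k.1 i := by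
      intro k; simp only [ψ, map_prod, map_pow]
    simp only [hz1]
    exact substMatrix_spec n (betaPoly F q) U hI (toSeries F θ) ![Ω, X₀, Y₀]
      (fun i => PowerSeries.map (fr 1) (![Ω, X₀, Y₀] i)) eΩ eX eY m
  have hψent : ∀ m, Entire (ψ m) := fun m =>
    (entireSubring L).prod_mem fun i _ => by
      fin_cases i
      exacts [hΩ.pow _, hX₀.pow _, hY₀.pow _]
  have hψev : ∀ m, evalAt θ (ψ m) = ∏ i, (![evalAt θ Ω, evalAt θ X₀, evalAt θ Y₀] i) ^ m.1 i := by
    intro m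
    have h1 := hΩ.pow (m.1 0)
    have h2 := hX₀.pow (m.1 1)
    have h3 := hY₀.pow (m.1 2)
    simp only [ψ, Fin.prod_univ_three, Matrix.cons_val_zero, Matrix.cons_val_one, Matrix.cons_val]
    rw [evalAt_mul (h1.mul h2) h3, evalAt_mul h1 h2, evalAt_pow hΩ, evalAt_pow hX₀, evalAt_pow hY₀]
  have hdet : ∀ ν, spec F 1 (Polynomial.expand _ (q ^ ν) (substMatrix n (betaPoly F q) U I).det) ≠ 0 :=
    fun ν => substMatrix_det n (betaPoly F q) U hI
      ((spec F 1).comp (Polynomial.expand (Polynomial F) (q ^ ν)).toRingHom)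
      (spec_expand_betaPoly_ne_zero hq ν)
  have hind : ∀ H : I → Polynomial (Polynomial F), ∑ i, toSeries F θ (H i) * ψ i = 0 → H = 0 :=
    fun H hH => eq_zero_of_sum_monomials (toSeries F θ) _ hfun H hH
  have hfinal := linear_independence_criterion hq hfr hF hθ hψent hψ hdet hind
    (fun m => coeff m.1 P) (by
      rw [eval₂_eq_sum_finset _ _ I P hPI] at hP
      rw [← hP]
      exact Finset.sum_congr rfl fun m _ => by rw [hψev]; rfl)
  ext1 m
  rw [coeff_zero]
  by_cases hm : m ∈ I
  · exact congrFun hfinal ⟨m, hm⟩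
  · exact notMem_support_iff.mp fun h => hm (hPI h)

end AlgebraicCriterion

/-! ### Carlitz polynomials and power sums -/

section CarlitzPolynomials

open Polynomial

set_option linter.unusedSectionVars false

variable {F : Type*} [Field F] {L : Type*} [Field L] [Algebra F L] {q : ℕ}
  {fr : ℕ → L →+* L}

/-- `ℓ_d = ∏_{j=1}^d (θ - θ^{q^j})`. -/
def carlitzEll (q : ℕ) (θ : L) (d : ℕ) : L := ∏ j ∈ Finset.range d, (θ - θ ^ q ^ (j + 1))

/-- `D_i = ∏_{j<i} (θ^{q^i} - θ^{q^j})`. -/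
def carlitzD {R : Type*} [CommRing R] (q : ℕ) (θ : R) (i : ℕ) : R :=
  ∏ j ∈ Finset.range i, (θ ^ q ^ i - θ ^ q ^ j)

/-- The coefficient of `x^{q^i}` in the Carlitz polynomial `E_d`. -/
def carlitzCoeff (q : ℕ) (θ : L) (d i : ℕ) : L :=
  if i ≤ d then (carlitzD q θ i * carlitzEll q θ (d - i) ^ q ^ i)⁻¹ else 0

/-- The Carlitz polynomial `E_d`, the `𝔽_q`-linear polynomial taking the value `1` at every monic
polynomial of degree `d` in `θ`, as a function. -/
def carlitzE (q : ℕ) (θ : L) (d : ℕ) (x : L) : L :=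
  ∑ i ∈ Finset.range (d + 1), carlitzCoeff q θ d i * x ^ q ^ i

variable {θ : L}

lemma theta_pow_ne (hq : 2 ≤ q) (hinj : Function.Injective (aeval θ : F[X] →ₐ[F] L)) {i j : ℕ} (hij : i ≠ j) :
    θ ^ q ^ i - θ ^ q ^ j ≠ 0 := by
  intro h
  have h1 : (aeval θ : F[X] →ₐ[F] L) (X ^ q ^ i) = aeval θ (X ^ q ^ j : F[X]) := by
    simpa [sub_eq_zero] using h
  have h2 := congrArg natDegree (hinj h1)
  simp only [natDegree_X_pow] at h2
  exact hij (Nat.pow_right_injective hq h2)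

lemma carlitzEll_ne_zero (hq : 2 ≤ q) (hinj : Function.Injective (aeval θ : F[X] →ₐ[F] L)) (d : ℕ) :
    carlitzEll q θ d ≠ 0 := by
  refine Finset.prod_ne_zero_iff.mpr fun j _ => ?_
  simpa using theta_pow_ne hq hinj (i := 0) (j := j + 1) (by omega)

lemma carlitzD_ne_zero (hq : 2 ≤ q) (hinj : Function.Injective (aeval θ : F[X] →ₐ[F] L)) (i : ℕ) :
    carlitzD q θ i ≠ 0 := by
  refine Finset.prod_ne_zero_iff.mpr fun j hj => theta_pow_ne hq hinj ?_
  have := Finset.mem_range.mp hj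
  omega

lemma carlitzD_succ (hfr : ∀ ν x, fr ν x = x ^ q ^ ν) (i : ℕ) :
    carlitzD q θ (i + 1) = (θ ^ q ^ (i + 1) - θ) * carlitzD q θ i ^ q := by
  have h1 : carlitzD q θ i ^ q = ∏ j ∈ Finset.range i, (θ ^ q ^ (i + 1) - θ ^ q ^ (j + 1)) := by
    have := hfr 1 (carlitzD q θ i)
    rw [pow_one] at this
    rw [← this, carlitzD, map_prod]
    refine Finset.prod_congr rfl fun j _ => ?_
    rw [map_sub, hfr, hfr, ← pow_mul, ← pow_mul, pow_one, ← pow_succ, ← pow_succ]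
  rw [h1, carlitzD, Finset.prod_range_succ', mul_comm]
  simp

lemma carlitzCoeff_frobenius (hfr : ∀ ν x, fr ν x = x ^ q ^ ν) (hq : 2 ≤ q)
    (hinj : Function.Injective (aeval θ : F[X] →ₐ[F] L)) (d i : ℕ) :
    (θ ^ q ^ (i + 1) - θ) * carlitzCoeff q θ (d + 1) (i + 1) = carlitzCoeff q θ d i ^ q := by
  have h0 : θ ^ q ^ (i + 1) - θ ≠ 0 := by
    simpa using theta_pow_ne hq hinj (i := i + 1) (j := 0) (by omega)
  unfold carlitzCoeff
  by_cases h : i ≤ d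
  · rw [if_pos h, if_pos (by omega), carlitzD_succ hfr, inv_pow, mul_pow, ← pow_mul, ← pow_succ,
      Nat.add_sub_add_right, mul_assoc, mul_inv, ← mul_assoc, mul_inv_cancel₀ h0, one_mul]
  · rw [if_neg h, if_neg (by omega), mul_zero, zero_pow (by omega)]

lemma carlitzCoeff_succ (hfr : ∀ ν x, fr ν x = x ^ q ^ ν) (hq : 2 ≤ q)
    (hinj : Function.Injective (aeval θ : F[X] →ₐ[F] L)) {d i : ℕ} (hi : i ≤ d + 1) :
    carlitzCoeff q θ d i = (θ ^ q ^ i - θ ^ q ^ (d + 1)) * carlitzCoeff q θ (d + 1) i := by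
  unfold carlitzCoeff
  rcases Nat.lt_or_ge d i with h | h
  · rw [if_neg (by omega), show i = d + 1 by omega, sub_self, zero_mul]
  · have h0 : θ ^ q ^ i - θ ^ q ^ (d + 1) ≠ 0 := theta_pow_ne hq hinj (by omega)
    have h1 : carlitzEll q θ (d + 1 - i) ^ q ^ i =
        carlitzEll q θ (d - i) ^ q ^ i * (θ ^ q ^ i - θ ^ q ^ (d + 1)) := by
      rw [show d + 1 - i = d - i + 1 by omega, carlitzEll, Finset.prod_range_succ, mul_pow, ← hfr i (θ - _),
        map_sub, hfr, hfr, ← pow_mul, ← pow_add, show d - i + 1 + i = d + 1 by omega]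
      rfl
    rw [if_pos h, if_pos (by omega), h1, ← mul_assoc (carlitzD q θ i), mul_inv _ (θ ^ q ^ i - _), mul_left_comm,
      mul_inv_cancel₀ h0, mul_one]

lemma carlitzE_add (hfr : ∀ ν x, fr ν x = x ^ q ^ ν) (d : ℕ) (x y : L) :
    carlitzE q θ d (x + y) = carlitzE q θ d x + carlitzE q θ d y := by
  unfold carlitzE
  rw [← Finset.sum_add_distrib]
  refine Finset.sum_congr rfl fun i _ => ?_
  rw [← hfr, map_add, hfr, hfr, mul_add]

lemma algebraMap_pow_q (hF : ∀ a : F, algebraMap F L a ^ q = algebraMap F L a) (a : F) (i : ℕ) :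
    algebraMap F L a ^ q ^ i = algebraMap F L a := by
  induction i with
  | zero => simp
  | succ i ih => rw [pow_succ, pow_mul, ih, hF]

lemma carlitzE_smul (hF : ∀ a : F, algebraMap F L a ^ q = algebraMap F L a) (d : ℕ) (a : F) (x : L) :
    carlitzE q θ d (a • x) = a • carlitzE q θ d x := by
  unfold carlitzE
  rw [Finset.smul_sum]
  refine Finset.sum_congr rfl fun i _ => ?_
  rw [Algebra.smul_def, Algebra.smul_def, mul_pow, algebraMap_pow_q hF]; ring

lemma carlitzE_theta_mul (hfr : ∀ ν x, fr ν x = x ^ q ^ ν) (hq : 2 ≤ q)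
    (hinj : Function.Injective (aeval θ : F[X] →ₐ[F] L)) (d : ℕ) (x : L) :
    carlitzE q θ (d + 1) (θ * x) = θ * carlitzE q θ (d + 1) x + carlitzE q θ d x ^ q := by
  have h1 : carlitzE q θ d x ^ q =
      ∑ i ∈ Finset.range (d + 1), carlitzCoeff q θ d i ^ q * x ^ q ^ (i + 1) := by
    have := hfr 1 (carlitzE q θ d x)
    rw [pow_one] at this
    rw [← this, carlitzE, map_sum]
    refine Finset.sum_congr rfl fun i _ => ?_
    rw [map_mul, hfr, hfr, ← pow_mul, pow_one, ← pow_succ]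
  rw [h1, ← sub_eq_iff_eq_add', carlitzE, carlitzE, Finset.mul_sum, ← Finset.sum_sub_distrib,
    Finset.sum_range_succ']
  simp only [mul_pow, pow_zero, pow_one]
  rw [show carlitzCoeff q θ (d + 1) 0 * (θ * x) - θ * (carlitzCoeff q θ (d + 1) 0 * x) = 0 by ring, add_zero]
  refine Finset.sum_congr rfl fun i _ => ?_
  rw [← carlitzCoeff_frobenius hfr hq hinj]; ring

lemma carlitzE_succ (hfr : ∀ ν x, fr ν x = x ^ q ^ ν) (hq : 2 ≤ q)
    (hinj : Function.Injective (aeval θ : F[X] →ₐ[F] L)) (d : ℕ) (x : L) :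
    (θ ^ q ^ (d + 1) - θ) * carlitzE q θ (d + 1) x = carlitzE q θ d x ^ q - carlitzE q θ d x := by
  have h1 := carlitzE_theta_mul hfr hq hinj d x
  have h2 : carlitzE q θ d x = ∑ i ∈ Finset.range (d + 1 + 1), carlitzCoeff q θ d i * x ^ q ^ i := by
    rw [Finset.sum_range_succ, show carlitzCoeff q θ d (d + 1) = 0 from if_neg (by omega), zero_mul,
      add_zero, carlitzE]
  have h3 : carlitzE q θ d x = carlitzE q θ (d + 1) (θ * x) -
      θ ^ q ^ (d + 1) * carlitzE q θ (d + 1) x := by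
    rw [h2, carlitzE, carlitzE, Finset.mul_sum, ← Finset.sum_sub_distrib]
    refine Finset.sum_congr rfl fun i hi => ?_
    rw [carlitzCoeff_succ hfr hq hinj (Nat.lt_succ_iff.mp (Finset.mem_range.mp hi))]; ring
  linear_combination h1 + h3

lemma carlitzE_one (hfr : ∀ ν x, fr ν x = x ^ q ^ ν) (hq : 2 ≤ q)
    (hinj : Function.Injective (aeval θ : F[X] →ₐ[F] L)) (d : ℕ) :
    carlitzE q θ d 1 = if d = 0 then 1 else 0 := by
  induction d with
  | zero => simp [carlitzE, carlitzCoeff, carlitzD, carlitzEll]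
  | succ d ih =>
    have h0 : θ ^ q ^ (d + 1) - θ ≠ 0 := by
      simpa using theta_pow_ne hq hinj (i := d + 1) (j := 0) (by omega)
    have h := carlitzE_succ hfr hq hinj d 1
    rw [ih] at h
    rw [if_neg (by omega)]
    apply (mul_eq_zero.mp ?_).resolve_left h0
    rw [h]
    split_ifs
    · simp
    · rw [zero_pow (by omega), sub_zero]

lemma carlitzE_theta_pow (hfr : ∀ ν x, fr ν x = x ^ q ^ ν) (hq : 2 ≤ q)
    (hinj : Function.Injective (aeval θ : F[X] →ₐ[F] L)) (j : ℕ) :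
    ∀ d, j ≤ d → carlitzE q θ d (θ ^ j) = if j = d then 1 else 0 := by
  induction j with
  | zero =>
    intro d _
    rw [pow_zero, carlitzE_one hfr hq hinj]
    simp [eq_comm]
  | succ j ih =>
    intro d hd
    obtain ⟨d, rfl⟩ : ∃ e, d = e + 1 := ⟨d - 1, by omega⟩
    rw [pow_succ', carlitzE_theta_mul hfr hq hinj, ih _ (by omega), ih _ (by omega), if_neg (by omega),
      mul_zero, zero_add]
    by_cases h : j = d
    · simp [h]
    · rw [if_neg h, if_neg (by omega), zero_pow (by omega)]

/-- The Carlitz polynomial `E_d` takes the value `1` at every monic polynomial of degree `d`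
in `θ`. -/
lemma carlitzE_aeval (hfr : ∀ ν x, fr ν x = x ^ q ^ ν) (hq : 2 ≤ q)
    (hF : ∀ a : F, algebraMap F L a ^ q = algebraMap F L a)
    (hinj : Function.Injective (aeval θ : F[X] →ₐ[F] L)) {a : F[X]} {d : ℕ} (ha : a.Monic)
    (hd : a.natDegree = d) : carlitzE q θ d (aeval θ a) = 1 := by
  let E : L →+ L := AddMonoidHom.mk' (carlitzE q θ d) (carlitzE_add hfr d)
  rw [aeval_eq_sum_range' (n := d + 1) (by omega)]
  change E _ = 1
  rw [map_sum, Finset.sum_eq_single d]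
  · change carlitzE q θ d _ = 1
    rw [carlitzE_smul hF, carlitzE_theta_pow hfr hq hinj d d le_rfl, if_pos rfl, ← hd, ha.coeff_natDegree,
      one_smul]
  · intro j hj hjd
    have := Finset.mem_range.mp hj
    change carlitzE q θ d _ = 0
    rw [carlitzE_smul hF, carlitzE_theta_pow hfr hq hinj j d (by omega), if_neg hjd, smul_zero]
  · simp

variable [Fintype F]

lemma finite_monics (F : Type*) [Field F] [Fintype F] (d : ℕ) :
    {a : F[X] | a.Monic ∧ a.natDegree = d}.Finite :=
  Set.finite_coe_iff.mp (Finite.of_equiv _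
    ((monicEquivDegreeLT d).trans (degreeLTEquiv F d).toEquiv).symm)

/-- The monic polynomials of degree `d`. -/
noncomputable def monics (F : Type*) [Field F] [Fintype F] (d : ℕ) : Finset F[X] :=
  (finite_monics F d).toFinset

lemma mem_monics {d : ℕ} {a : F[X]} : a ∈ monics F d ↔ a.Monic ∧ a.natDegree = d := by
  simp [monics]

lemma card_monics (d : ℕ) : (monics F d).card = Fintype.card F ^ d := by
  have h : Nat.card {a : F[X] // a.Monic ∧ a.natDegree = d} = Nat.card (Fin d → F) :=
    Nat.card_congr ((monicEquivDegreeLT d).trans (degreeLTEquiv F d).toEquiv)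
  rw [Nat.card_eq_fintype_card (α := Fin d → F), Fintype.card_fun, Fintype.card_fin] at h
  rw [← h, monics, ← Set.ncard_eq_toFinset_card _ (finite_monics F d)]
  rfl

/-- The power sum `S_d(m) = ∑ a⁻ᵐ` over the monic polynomials `a` of degree `d` in `θ`. -/
noncomputable def powerSum (F : Type*) [Field F] [Fintype F] {L : Type*} [Field L] [Algebra F L]
    (θ : L) (d m : ℕ) : L :=
  ∑ a ∈ monics F d, ((aeval θ a) ^ m)⁻¹

/-- Generating series of the power sums: the monic polynomials of degree `d` are the roots of
`1 - E_d`, which has constant derivative, and the series is given by the logarithmic derivative. -/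
lemma sum_powerSum_recursion (hcard : Fintype.card F = q) (hfr : ∀ ν x, fr ν x = x ^ q ^ ν) (hq : 2 ≤ q)
    (hF : ∀ a : F, algebraMap F L a ^ q = algebraMap F L a)
    (hinj : Function.Injective (aeval θ : F[X] →ₐ[F] L)) (d : ℕ) :
    (1 - ∑ i ∈ Finset.range (d + 1), PowerSeries.C (carlitzCoeff q θ d i) * PowerSeries.X ^ q ^ i) *
      (PowerSeries.mk fun m => powerSum F θ d (m + 1)) = PowerSeries.C (carlitzEll q θ d)⁻¹ := by
  classical
  have hqL : (q : L) = 0 := by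
    have : ((Fintype.card F : ℕ) : F) = 0 := Nat.cast_card_eq_zero F
    rw [hcard] at this
    rw [← map_natCast (algebraMap F L), this, map_zero]
  let P : L[X] := 1 - ∑ i ∈ Finset.range (d + 1), C (carlitzCoeff q θ d i) * X ^ q ^ i
  have hPeval : ∀ x, P.eval x = 1 - carlitzE q θ d x := by
    intro x; simp [P, carlitzE, eval_finsetSum]
  have hP0 : P ≠ 0 := by
    intro h
    have := hPeval 0
    rw [h, eval_zero, carlitzE, Finset.sum_eq_zero, sub_zero] at this
    · exact zero_ne_one this
    · intro i _
      rw [zero_pow (pow_pos (by omega) i).ne', mul_zero]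
  have hPdeg : P.natDegree ≤ q ^ d := by
    refine (natDegree_sub_le _ _).trans (max_le (by simp) ?_)
    refine natDegree_sum_le_of_forall_le _ _ fun i hi => ?_
    refine (natDegree_C_mul_X_pow_le _ _).trans (Nat.pow_le_pow_right (by omega) ?_)
    exact Nat.lt_succ_iff.mp (Finset.mem_range.mp hi)
  have hPder : derivative P = C (-(carlitzEll q θ d)⁻¹) := by
    simp only [P, derivative_sub, derivative_one, zero_sub, derivative_sum, derivative_C_mul, derivative_X_pow]
    rw [Finset.sum_range_succ', Finset.sum_eq_zero]
    · simp [carlitzCoeff, carlitzD]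
    · intro i _
      simp [pow_succ, hqL]
  let s : Finset L := (monics F d).image (aeval θ)
  have hscard : s.card = q ^ d := by
    rw [Finset.card_image_of_injective _ hinj, card_monics, hcard]
  have hsub : s.val ⊆ P.roots := by
    intro x hx
    obtain ⟨a, ha, rfl⟩ := Finset.mem_image.mp hx
    obtain ⟨h1, h2⟩ := mem_monics.mp ha
    rw [mem_roots hP0, IsRoot, hPeval, carlitzE_aeval hfr hq hF hinj h1 h2, sub_self]
  have hle : s.val ≤ P.roots := (Multiset.le_iff_subset s.nodup).mpr hsub
  have hroots : s.val = P.roots :=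
    Multiset.eq_of_le_of_card_le hle ((P.card_roots'.trans hPdeg).trans hscard.ge)
  have hprod : P = C P.leadingCoeff * ∏ a ∈ monics F d, (X - C (aeval θ a)) := by
    have h1 := C_leadingCoeff_mul_prod_multiset_X_sub_C (p := P) (by
      apply le_antisymm P.card_roots'
      rw [← hroots]
      exact hPdeg.trans hscard.ge)
    rw [← hroots] at h1
    conv_lhs => rw [← h1]
    congr 1
    exact Finset.prod_image (s := monics F d) (g := aeval θ) (f := fun x : L => X - C x) hinj.injOn
  have hne : ∀ a ∈ monics F d, (aeval θ a : L) ≠ 0 := fun a ha h =>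
    (mem_monics.mp ha).1.ne_zero (hinj (h.trans (map_zero _).symm))
  have hder : ∑ a ∈ monics F d, C P.leadingCoeff * ∏ b ∈ (monics F d).erase a, (X - C (aeval θ b)) =
      C (-(carlitzEll q θ d)⁻¹) := by
    rw [← hPder]
    conv_rhs => rw [hprod]
    rw [derivative_C_mul, derivative_prod_finset, Finset.mul_sum]
    simp
  have hmk : (PowerSeries.mk fun m => powerSum F θ d (m + 1)) =
      ∑ a ∈ monics F d, PowerSeries.mk fun m => ((aeval θ a : L) ^ (m + 1))⁻¹ := by
    ext m; simp [powerSum]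
  have hinv : ∀ a ∈ monics F d, (PowerSeries.C (aeval θ a : L) - PowerSeries.X) *
      (PowerSeries.mk fun m => ((aeval θ a : L) ^ (m + 1))⁻¹) = 1 := by
    intro a ha
    have h1 := PowerSeries.invUnitsSub_mul_sub (Units.mk0 (aeval θ a : L) (hne a ha))
    rw [mul_comm] at h1
    rw [← h1]
    congr 1
    ext m
    rw [PowerSeries.coeff_invUnitsSub, PowerSeries.coeff_mk]
    simp [divp]
  have hPcoe : (P : PowerSeries L) = 1 - ∑ i ∈ Finset.range (d + 1),
      PowerSeries.C (carlitzCoeff q θ d i) * PowerSeries.X ^ q ^ i := by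
    simp only [P]
    rw [← Polynomial.coeToPowerSeries.ringHom_apply, map_sub, map_one, map_sum]
    simp
  rw [← hPcoe, hmk, Finset.mul_sum]
  have hterm : ∀ a ∈ monics F d, (P : PowerSeries L) * (PowerSeries.mk fun m => ((aeval θ a : L) ^ (m + 1))⁻¹) =
      -((C P.leadingCoeff * ∏ b ∈ (monics F d).erase a, (X - C (aeval θ b)) : L[X]) : PowerSeries L) := by
    intro a ha
    have h1 : P = (C P.leadingCoeff * ∏ b ∈ (monics F d).erase a, (X - C (aeval θ b)) : L[X]) *
        (X - C (aeval θ a)) := by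
      conv_lhs => rw [hprod]
      rw [mul_assoc, Finset.prod_erase_mul _ _ ha]
    have h2 := hinv a ha
    conv_lhs => rw [h1]
    rw [Polynomial.coe_mul, mul_assoc, show ((X - C (aeval θ a : L) : L[X]) : PowerSeries L) =
      -(PowerSeries.C (aeval θ a : L) - PowerSeries.X) by simp, neg_mul, h2, mul_neg, mul_one]
  rw [Finset.sum_congr rfl hterm, Finset.sum_neg_distrib]
  have h3 := congrArg (Polynomial.coeToPowerSeries.ringHom (R := L)) hder
  rw [map_sum] at h3
  simp only [Polynomial.coeToPowerSeries.ringHom_apply] at h3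
  rw [h3]
  simp

lemma powerSum_one (hcard : Fintype.card F = q) (hfr : ∀ ν x, fr ν x = x ^ q ^ ν) (hq : 2 ≤ q)
    (hF : ∀ a : F, algebraMap F L a ^ q = algebraMap F L a)
    (hinj : Function.Injective (aeval θ : F[X] →ₐ[F] L)) (d : ℕ) :
    powerSum F θ d 1 = (carlitzEll q θ d)⁻¹ := by
  have h := congrArg PowerSeries.constantCoeff (sum_powerSum_recursion hcard hfr hq hF hinj d)
  rw [map_mul, map_sub, map_sum, PowerSeries.constantCoeff_C, Finset.sum_eq_zero] at h
  · simpa [← PowerSeries.coeff_zero_eq_constantCoeff_apply] using h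
  · intro i _
    simp [zero_pow (pow_pos (show 0 < q by omega) i).ne']

/-- Recursion for the power sums, by comparison of coefficients in `sum_powerSum_recursion`. -/
lemma powerSum_succ (hcard : Fintype.card F = q) (hfr : ∀ ν x, fr ν x = x ^ q ^ ν) (hq : 2 ≤ q)
    (hF : ∀ a : F, algebraMap F L a ^ q = algebraMap F L a)
    (hinj : Function.Injective (aeval θ : F[X] →ₐ[F] L)) (d : ℕ) {m : ℕ} (hm : 1 ≤ m) :
    powerSum F θ d (m + 1) = ∑ i ∈ (Finset.range m).filter (fun i => q ^ i ≤ m),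
      carlitzCoeff q θ d i * powerSum F θ d (m - q ^ i + 1) := by
  have h := congrArg (PowerSeries.coeff m) (sum_powerSum_recursion hcard hfr hq hF hinj d)
  rw [sub_mul, one_mul, Finset.sum_mul, map_sub, map_sum, PowerSeries.coeff_mk, PowerSeries.coeff_C,
    if_neg (by omega), sub_eq_zero] at h
  have hterm : ∀ i, PowerSeries.coeff m (PowerSeries.C (carlitzCoeff q θ d i) * PowerSeries.X ^ q ^ i *
      (PowerSeries.mk fun m => powerSum F θ d (m + 1))) =
      if q ^ i ≤ m then carlitzCoeff q θ d i * powerSum F θ d (m - q ^ i + 1) else 0 := by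
    intro i
    rw [mul_assoc, PowerSeries.coeff_C_mul, PowerSeries.coeff_X_pow_mul']
    split_ifs <;> simp
  simp only [hterm] at h
  rw [h, Finset.sum_filter]
  -- both index ranges contain every `i` with a nonzero contribution
  rw [Finset.sum_subset (Finset.range_subset_range.mpr (le_max_left (d + 1) m)),
    Finset.sum_subset (Finset.range_subset_range.mpr (le_max_right (d + 1) m))]
  · intro i _ hi
    rw [if_neg]
    have h1 : i < q ^ i := Nat.lt_pow_self (by omega)
    have h2 : ¬ i < m := fun h => hi (Finset.mem_range.mpr h)
    omega
  · intro i _ hi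
    have h0 : carlitzCoeff q θ d i = 0 :=
      if_neg fun h => hi (Finset.mem_range.mpr (Nat.lt_succ_iff.mpr h))
    rw [h0, zero_mul, ite_self]

end CarlitzPolynomials

/-! ### Anderson–Thakur polynomials -/

section AndersonThakur

open Polynomial

set_option linter.unusedSectionVars false

variable {F : Type*} [Field F] [Fintype F] {L : Type*} [Field L] [Algebra F L] {q : ℕ}
  {fr : ℕ → L →+* L} {θ : L}

/-- The specialization `h ↦ h^{(d)}(t = θ)`, that is `t ↦ θ`, `θ ↦ θ^{q^d}`. -/
noncomputable def twistEval (F : Type*) [Field F] {L : Type*} [Field L] [Algebra F L] (q : ℕ) (θ : L) (d : ℕ) :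
    F[X][X] →+* L :=
  eval₂RingHom (aeval θ : F[X] →ₐ[F] L).toRingHom (θ ^ q ^ d)

lemma aeval_spec_expand (d : ℕ) (h : F[X][X]) :
    aeval θ (spec F 1 (expand F[X] (q ^ d) h)) = twistEval F q θ d h := by
  have : (aeval θ : F[X] →ₐ[F] L).toRingHom.comp
      ((spec F 1).comp (expand F[X] (q ^ d) : F[X][X] →ₐ[F[X]] F[X][X]).toRingHom) = twistEval F q θ d := by
    refine Polynomial.ringHom_ext (fun a => ?_) ?_
    · simp [twistEval, spec]
    · simp [twistEval, spec]
  exact RingHom.congr_fun this h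

lemma twistEval_C (d : ℕ) (c : F[X]) : twistEval F q θ d (C c) = aeval θ c := by
  simp [twistEval]

lemma twistEval_X (d : ℕ) : twistEval F q θ d X = θ ^ q ^ d := by
  simp [twistEval]

/-- `G_i = ∏_{j=1}^i (t^{q^i} - θ^{q^j})` in `F[t][θ]`. -/
noncomputable def andersonThakurG (F : Type*) [Field F] (q i : ℕ) : F[X][X] :=
  ∏ j ∈ Finset.range i, (C (X ^ q ^ i) - X ^ q ^ (j + 1))

lemma natDegree_andersonThakurG (hq : 2 ≤ q) (i : ℕ) :
    (q - 1) * (andersonThakurG F q i).natDegree ≤ q * q ^ i := by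
  have h1 : (andersonThakurG F q i).natDegree ≤ ∑ j ∈ Finset.range i, q ^ (j + 1) := by
    refine (natDegree_prod_le _ _).trans (Finset.sum_le_sum fun j _ => ?_)
    refine (natDegree_sub_le _ _).trans (max_le (by simp) (by simp))
  have h2 : (q - 1) * ∑ j ∈ Finset.range i, q ^ (j + 1) ≤ q * q ^ i := by
    simp_rw [pow_succ']
    rw [← Finset.mul_sum, mul_left_comm]
    refine Nat.mul_le_mul_left _ ?_
    rw [Nat.geomSum_eq hq, Nat.mul_div_cancel' (Nat.sub_one_dvd_pow_sub_one q i)]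
    exact Nat.sub_le _ _
  exact (Nat.mul_le_mul_left _ h1).trans h2

lemma twistEval_andersonThakurG (hfr : ∀ ν x, fr ν x = x ^ q ^ ν) (hq : 2 ≤ q)
    (hinj : Function.Injective (aeval θ : F[X] →ₐ[F] L)) (d i : ℕ) :
    twistEval F q θ d (andersonThakurG F q i) =
      carlitzEll q θ d ^ q ^ i * carlitzCoeff q θ d i * carlitzD q θ i := by
  have h0 : twistEval F q θ d (andersonThakurG F q i) =
      ∏ j ∈ Finset.range i, (θ ^ q ^ i - θ ^ q ^ (d + (j + 1))) := by
    rw [andersonThakurG, map_prod]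
    refine Finset.prod_congr rfl fun j _ => ?_
    rw [map_sub, twistEval_C, map_pow, aeval_X, map_pow, twistEval_X, ← pow_mul, ← pow_add]
  rw [h0, carlitzCoeff]
  split_ifs with h
  · have h1 : carlitzEll q θ d = carlitzEll q θ (d - i) *
        ∏ j ∈ Finset.range i, (θ - θ ^ q ^ (d - i + j + 1)) := by
      conv_lhs => rw [show d = d - i + i by omega]
      rw [carlitzEll, Finset.prod_range_add]; rfl
    have h2 : carlitzEll q θ d ^ q ^ i = carlitzEll q θ (d - i) ^ q ^ i *
        ∏ j ∈ Finset.range i, (θ ^ q ^ i - θ ^ q ^ (d + (j + 1))) := by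
      conv_lhs => rw [h1]
      rw [mul_pow, ← hfr i (∏ j ∈ _, _), map_prod]
      congr 1
      refine Finset.prod_congr rfl fun j _ => ?_
      rw [map_sub, hfr, hfr, ← pow_mul, ← pow_add, show d - i + j + 1 + i = d + (j + 1) by omega]
    rw [h2]
    have := carlitzEll_ne_zero hq hinj (d - i)
    have := carlitzD_ne_zero hq hinj i
    field_simp
  · rw [mul_zero, zero_mul]
    refine Finset.prod_eq_zero (i := i - d - 1) (Finset.mem_range.mpr (by omega)) ?_
    rw [show d + (i - d - 1 + 1) = i by omega, sub_self]

/-- Anderson–Thakur polynomials: up to a factor in `F[t]`, the twists of a polynomial `V ∈ F[t][θ]`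
of small degree in `θ` interpolate the normalized power sums `ℓ_d^{m+1} S_d(m+1)`. -/
lemma exists_andersonThakur (hcard : Fintype.card F = q) (hfr : ∀ ν x, fr ν x = x ^ q ^ ν) (hq : 2 ≤ q)
    (hF : ∀ a : F, algebraMap F L a ^ q = algebraMap F L a)
    (hinj : Function.Injective (aeval θ : F[X] →ₐ[F] L)) (n m : ℕ) (hmn : m ≤ n) :
    ∃ V : F[X][X], (q - 1) * V.natDegree ≤ q * m ∧ ∀ d, twistEval F q θ d V =
      (∏ i ∈ Finset.range n, carlitzD q θ i) ^ m * carlitzEll q θ d ^ (m + 1) * powerSum F θ d (m + 1) := by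
  induction m using Nat.strong_induction_on with
  | _ m ih =>
  rcases Nat.eq_zero_or_pos m with rfl | hm
  · refine ⟨1, by simp, fun d => ?_⟩
    rw [map_one, powerSum_one hcard hfr hq hF hinj, pow_zero, one_mul, zero_add, pow_one,
      mul_inv_cancel₀ (carlitzEll_ne_zero hq hinj d)]
  · have hex : ∀ i, ∃ V : F[X][X], q ^ i ≤ m → (q - 1) * V.natDegree ≤ q * (m - q ^ i) ∧
        ∀ d, twistEval F q θ d V = (∏ i ∈ Finset.range n, carlitzD q θ i) ^ (m - q ^ i) *
          carlitzEll q θ d ^ (m - q ^ i + 1) * powerSum F θ d (m - q ^ i + 1) := by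
      intro i
      by_cases h : q ^ i ≤ m
      · obtain ⟨V, hV⟩ := ih (m - q ^ i) (by have := pow_pos (show 0 < q by omega) i; omega) (by omega)
        exact ⟨V, fun _ => hV⟩
      · exact ⟨0, fun h' => absurd h' h⟩
    choose V hV using hex
    let c : ℕ → F[X] := fun i => (∏ j ∈ (Finset.range n).erase i, carlitzD q (X : F[X]) j) *
      (∏ j ∈ Finset.range n, carlitzD q (X : F[X]) j) ^ (q ^ i - 1)
    have hD : ∀ i, aeval θ (carlitzD q (X : F[X]) i) = carlitzD q θ i := by
      intro i; simp [carlitzD, map_prod]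
    have hc : ∀ i ∈ Finset.range n, aeval θ (c i) * carlitzD q θ i =
        (∏ i ∈ Finset.range n, carlitzD q θ i) ^ q ^ i := by
      intro i hi
      simp only [c, map_mul, map_pow, map_prod, hD]
      rw [mul_right_comm, Finset.prod_erase_mul _ _ hi, ← pow_succ',
        Nat.sub_add_cancel (Nat.one_le_pow _ _ (by omega))]
    refine ⟨∑ i ∈ (Finset.range m).filter (fun i => q ^ i ≤ m), C (c i) * andersonThakurG F q i * V i, ?_, ?_⟩
    · have h1 : (∑ i ∈ (Finset.range m).filter (fun i => q ^ i ≤ m),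
          C (c i) * andersonThakurG F q i * V i).natDegree ≤ q * m / (q - 1) := by
        refine natDegree_sum_le_of_forall_le _ _ fun i hi => ?_
        obtain ⟨-, hi⟩ := Finset.mem_filter.mp hi
        rw [Nat.le_div_iff_mul_le (by omega), mul_comm]
        have h2 : (C (c i) * andersonThakurG F q i * V i).natDegree ≤
            (andersonThakurG F q i).natDegree + (V i).natDegree :=
          natDegree_mul_le.trans (Nat.add_le_add_right (natDegree_C_mul_le _ _) _)
        refine (Nat.mul_le_mul_left _ h2).trans ?_
        rw [mul_add]
        refine (Nat.add_le_add (natDegree_andersonThakurG hq i) (hV i hi).1).trans ?_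
        rw [← mul_add]
        exact Nat.mul_le_mul_left _ (by omega)
      exact (Nat.mul_le_mul_left _ h1).trans (Nat.mul_div_le _ _)
    · intro d
      rw [map_sum, powerSum_succ hcard hfr hq hF hinj d hm, Finset.mul_sum]
      refine Finset.sum_congr rfl fun i hi => ?_
      obtain ⟨him, hi⟩ := Finset.mem_filter.mp hi
      have him' := Finset.mem_range.mp him
      rw [map_mul, map_mul, twistEval_C, twistEval_andersonThakurG hfr hq hinj, (hV i hi).2 d]
      have h3 := hc i (Finset.mem_range.mpr (by omega))
      obtain ⟨r, rfl⟩ : ∃ r, m = q ^ i + r := ⟨m - q ^ i, by omega⟩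
      rw [Nat.add_sub_cancel_left, pow_add _ (q ^ i) r, ← h3, show q ^ i + r + 1 = q ^ i + (r + 1) by ring,
        pow_add (carlitzEll q θ d) (q ^ i)]
      ring

end AndersonThakur

/-! ### Sums over Frobenius twists -/

section TwistSums

open PowerSeries Filter Topology

set_option linter.unusedSectionVars false

variable {L : Type*} [NormedField L] [IsUltrametricDist L] [CompleteSpace L] {θ : L} {q : ℕ}
  {fr : ℕ → L →+* L}

/-- The sum `∑ x^{q^i}`, convergent for `‖x‖ < 1`. -/
noncomputable def frobSum (q : ℕ) (x : L) : L := ∑' i : ℕ, x ^ q ^ i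

lemma norm_pow_q_le {x : L} (hq : 2 ≤ q) (hx : ‖x‖ < 1) (i : ℕ) : ‖x ^ q ^ i‖ ≤ ‖x‖ := by
  rw [norm_pow]
  exact pow_le_of_le_one (norm_nonneg _) hx.le (pow_pos (by omega) i).ne'

lemma summable_frobSum {x : L} (hq : 2 ≤ q) (hx : ‖x‖ < 1) : Summable fun i : ℕ => x ^ q ^ i := by
  have h1 : Summable fun i : ℕ => ‖x‖ ^ i := summable_geometric_of_lt_one (norm_nonneg _) hx
  refine Summable.of_norm (h1.of_nonneg_of_le (fun _ => norm_nonneg _) fun i => ?_)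
  rw [norm_pow]
  exact pow_le_pow_of_le_one (norm_nonneg _) hx.le (Nat.lt_pow_self (by omega)).le

lemma frobSum_eq (hq : 2 ≤ q) (hfr : ∀ ν x, fr ν x = x ^ q ^ ν) {x : L} (hx : ‖x‖ < 1) :
    frobSum q x = x + fr 1 (frobSum q x) := by
  have hcont : Continuous (fr 1) := by
    rw [show (fr 1 : L → L) = fun x => x ^ q ^ 1 from funext (hfr 1)]; fun_prop
  unfold frobSum
  rw [(summable_frobSum hq hx).map_tsum (fr 1) hcont, (summable_frobSum hq hx).tsum_eq_zero_add]
  simp only [pow_zero, pow_one, hfr, ← pow_mul, ← pow_succ]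

lemma norm_frobSum_le {x : L} (hq : 2 ≤ q) (hx : ‖x‖ < 1) : ‖frobSum q x‖ ≤ ‖x‖ :=
  IsUltrametricDist.norm_tsum_le_of_forall_le_of_nonneg (norm_nonneg _) (norm_pow_q_le hq hx)

/-- The sum of all twists of a power series with coefficients of norm less than `1`. -/
noncomputable def twistSum (q : ℕ) (f : L⟦X⟧) : L⟦X⟧ := PowerSeries.mk fun j => frobSum q (coeff j f)

lemma twistSum_eq (hq : 2 ≤ q) (hfr : ∀ ν x, fr ν x = x ^ q ^ ν) {f : L⟦X⟧}
    (hf : ∀ j, ‖coeff j f‖ < 1) : twistSum q f = f + PowerSeries.map (fr 1) (twistSum q f) := by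
  ext j
  rw [map_add, coeff_map, twistSum, coeff_mk]
  exact frobSum_eq hq hfr (hf j)

lemma norm_coeff_twistSum_le (hq : 2 ≤ q) {f : L⟦X⟧} (hf : ∀ j, ‖coeff j f‖ < 1) (j : ℕ) :
    ‖coeff j (twistSum q f)‖ ≤ ‖coeff j f‖ := by
  rw [twistSum, coeff_mk]
  exact norm_frobSum_le hq (hf j)

lemma Entire.twistSum (hq : 2 ≤ q) {f : L⟦X⟧} (hf : ∀ j, ‖coeff j f‖ < 1) (hent : Entire f) :
    Entire (twistSum q f) := by
  intro R hR
  obtain ⟨M, hM⟩ := hent R hR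
  refine ⟨M, fun j => le_trans ?_ (hM j)⟩
  gcongr
  exact norm_coeff_twistSum_le hq hf j

/-- The coefficients of an entire series of norm less than `1` are uniformly bounded away from `1`. -/
lemma Entire.exists_lt_one {f : L⟦X⟧} (hent : Entire f) (hf : ∀ j, ‖coeff j f‖ < 1) :
    ∃ ρ : ℝ, 0 ≤ ρ ∧ ρ < 1 ∧ ∀ j, ‖coeff j f‖ ≤ ρ := by
  obtain ⟨M, hM⟩ := hent 2 two_pos
  obtain ⟨J, hJ⟩ := pow_unbounded_of_one_lt (2 * M) (one_lt_two (α := ℝ))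
  obtain ⟨ρ, hρ0, hρ1, hρ⟩ : ∃ ρ : ℝ, 0 ≤ ρ ∧ ρ < 1 ∧ ∀ j < J, ‖coeff j f‖ ≤ ρ := by
    clear hJ
    induction J with
    | zero => exact ⟨0, le_rfl, one_pos, by simp⟩
    | succ J ih =>
      obtain ⟨ρ, h0, h1, h2⟩ := ih
      refine ⟨max ρ ‖coeff J f‖, le_max_of_le_left h0, max_lt h1 (hf J), fun j hj => ?_⟩
      rcases Nat.lt_succ_iff_lt_or_eq.mp hj with h | rfl
      · exact (h2 j h).trans (le_max_left _ _)
      · exact le_max_right _ _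
  refine ⟨max ρ (1 / 2), le_max_of_le_left hρ0, max_lt hρ1 (by norm_num), fun j => ?_⟩
  rcases lt_or_ge j J with h | h
  · exact (hρ j h).trans (le_max_left _ _)
  · refine le_trans ?_ (le_max_right _ _)
    have h1 : (2 : ℝ) ^ J ≤ 2 ^ j := pow_le_pow_right₀ (by norm_num) h
    have h2 := hM j
    have h3 : (0 : ℝ) < 2 ^ j := by positivity
    by_contra hlt
    push Not at hlt
    nlinarith [mul_lt_mul_of_pos_right hlt h3]

lemma tendsto_twist_zero (hq : 2 ≤ q) (hfr : ∀ ν x, fr ν x = x ^ q ^ ν) (z : L) {f : L⟦X⟧}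
    (hent : Entire f) (hf : ∀ j, ‖coeff j f‖ < 1) :
    Tendsto (fun m => evalAt z (PowerSeries.map (fr m) f)) atTop (𝓝 0) := by
  obtain ⟨ρ, hρ0, hρ1, hρ⟩ := hent.exists_lt_one hf
  obtain ⟨M, hM⟩ := hent (‖z‖ + 1) (by positivity)
  have hM0 := hM.nonneg
  have hb : ∀ m, ‖evalAt z (PowerSeries.map (fr m) f)‖ ≤ ρ ^ m * M := by
    intro m
    refine norm_evalAt_le (R := ‖z‖ + 1) (by linarith [norm_nonneg z]) fun j => ?_
    rw [coeff_map, hfr, norm_pow]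
    have h1 : ‖coeff j f‖ ^ q ^ m ≤ ρ ^ m * ‖coeff j f‖ := by
      calc ‖coeff j f‖ ^ q ^ m ≤ ‖coeff j f‖ ^ (m + 1) :=
            pow_le_pow_of_le_one (norm_nonneg _) (hf j).le (Nat.lt_pow_self (by omega))
        _ = ‖coeff j f‖ ^ m * ‖coeff j f‖ := pow_succ _ _
        _ ≤ ρ ^ m * ‖coeff j f‖ := by gcongr; exact hρ j
    calc ‖coeff j f‖ ^ q ^ m * (‖z‖ + 1) ^ j ≤ ρ ^ m * ‖coeff j f‖ * (‖z‖ + 1) ^ j := by gcongr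
      _ = ρ ^ m * (‖coeff j f‖ * (‖z‖ + 1) ^ j) := by ring
      _ ≤ ρ ^ m * M := by gcongr; exact hM j
  refine squeeze_zero_norm hb ?_
  simpa using (tendsto_pow_atTop_nhds_zero_of_lt_one hρ0 hρ1).mul_const M

lemma map_fr_add (hfr : ∀ ν x, fr ν x = x ^ q ^ ν) (i j : ℕ) (f : L⟦X⟧) :
    PowerSeries.map (fr i) (PowerSeries.map (fr j) f) = PowerSeries.map (fr (i + j)) f := by
  ext k
  simp only [coeff_map, hfr, ← pow_mul, pow_add, mul_comm]

lemma map_fr_zero (hfr : ∀ ν x, fr ν x = x ^ q ^ ν) (f : L⟦X⟧) : PowerSeries.map (fr 0) f = f := by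
  ext k
  simp [coeff_map, hfr]

lemma Entire.frobTwist (hq : 2 ≤ q) (hfr : ∀ ν x, fr ν x = x ^ q ^ ν) {f : L⟦X⟧} (hf : Entire f) (ν : ℕ) :
    Entire (PowerSeries.map (fr ν) f) :=
  hf.twist (Nat.one_le_pow _ _ (by omega)) (hfr ν)

lemma evalAt_eq_sum_twists (hq : 2 ≤ q) (hfr : ∀ ν x, fr ν x = x ^ q ^ ν) {f g : L⟦X⟧}
    (hf : Entire f) (hg : Entire g) (h : g = f + PowerSeries.map (fr 1) g) (z : L) (m : ℕ) :
    evalAt z g = ∑ i ∈ Finset.range m, evalAt z (PowerSeries.map (fr i) f) +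
      evalAt z (PowerSeries.map (fr m) g) := by
  induction m with
  | zero => simp [map_fr_zero hfr]
  | succ m ih =>
    have h1 : PowerSeries.map (fr m) g = PowerSeries.map (fr m) f + PowerSeries.map (fr (m + 1)) g := by
      conv_lhs => rw [h]
      rw [map_add, map_fr_add hfr]
    rw [ih, Finset.sum_range_succ, add_assoc, ← evalAt_add (hf.frobTwist hq hfr m) (hg.frobTwist hq hfr _), ← h1]

/-- The value of `∑ f^{(i)}` is the sum of the values of the twists. -/
lemma tendsto_sum_twists (hq : 2 ≤ q) (hfr : ∀ ν x, fr ν x = x ^ q ^ ν) {f g : L⟦X⟧}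
    (hf : Entire f) (hg : Entire g) (h : g = f + PowerSeries.map (fr 1) g)
    (hg1 : ∀ j, ‖coeff j g‖ < 1) (z : L) :
    Tendsto (fun m => ∑ i ∈ Finset.range m, evalAt z (PowerSeries.map (fr i) f)) atTop
      (𝓝 (evalAt z g)) := by
  have h1 : (fun m => ∑ i ∈ Finset.range m, evalAt z (PowerSeries.map (fr i) f)) =
      fun m => evalAt z g - evalAt z (PowerSeries.map (fr m) g) := by
    funext m
    rw [evalAt_eq_sum_twists hq hfr hf hg h z m, add_sub_cancel_right]
  rw [h1]
  simpa using tendsto_const_nhds.sub (tendsto_twist_zero hq hfr z hg hg1)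

/-! ### The Anderson–Thakur function -/

/-- The coefficients of `Π = ∏_{i ≥ 1} (1 - t / θ^{q^i})`. -/
noncomputable def periodCoeff (q : ℕ) (θ : L) : ℕ → L
  | 0 => 1
  | j + 1 => -(frobSum q (periodCoeff q θ j / θ)) ^ q

/-- The power series `Π = ∏_{i ≥ 1} (1 - t / θ^{q^i})`. -/
noncomputable def periodSeries (q : ℕ) (θ : L) : L⟦X⟧ := PowerSeries.mk (periodCoeff q θ)

lemma norm_periodCoeff_aux (hq : 2 ≤ q) (hθ : 1 < ‖θ‖) (j : ℕ) :
    ‖periodCoeff q θ j‖ ≤ 1 ∧ ‖periodCoeff q θ (j + 1)‖ ≤ (‖periodCoeff q θ j‖ / ‖θ‖) ^ q := by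
  have key : ∀ j, ‖periodCoeff q θ j‖ ≤ 1 →
      ‖periodCoeff q θ (j + 1)‖ ≤ (‖periodCoeff q θ j‖ / ‖θ‖) ^ q := by
    intro j h
    have h1 : ‖periodCoeff q θ j / θ‖ < 1 := by
      rw [norm_div, div_lt_one (by linarith)]; linarith
    rw [periodCoeff, norm_neg, norm_pow, ← norm_div]
    exact pow_le_pow_left₀ (norm_nonneg _) (norm_frobSum_le hq h1) q
  have h1 : ∀ j, ‖periodCoeff q θ j‖ ≤ 1 := by
    intro j
    induction j with
    | zero => simp [periodCoeff]
    | succ j ih =>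
      refine (key j ih).trans (pow_le_one₀ (by positivity) ?_)
      rw [div_le_one (by linarith)]; linarith
  exact ⟨h1 j, key j (h1 j)⟩

lemma norm_periodCoeff_succ (hq : 2 ≤ q) (hθ : 1 < ‖θ‖) (j : ℕ) :
    ‖periodCoeff q θ (j + 1)‖ ≤ ‖periodCoeff q θ j‖ / ‖θ‖ := by
  obtain ⟨h1, h2⟩ := norm_periodCoeff_aux hq hθ j
  refine h2.trans (pow_le_of_le_one (by positivity) ?_ (by omega))
  rw [div_le_one (by linarith)]; linarith

lemma norm_periodCoeff_le (hq : 2 ≤ q) (hθ : 1 < ‖θ‖) (j : ℕ) :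
    ‖periodCoeff q θ j‖ ≤ (‖θ‖⁻¹) ^ j := by
  induction j with
  | zero => simp [periodCoeff]
  | succ j ih =>
    refine (norm_periodCoeff_succ hq hθ j).trans ?_
    rw [pow_succ, div_eq_mul_inv]
    gcongr

lemma entire_periodSeries (hq : 2 ≤ q) (hθ : 1 < ‖θ‖) : Entire (periodSeries q θ) := by
  intro R hR
  have hθ' : ‖θ‖⁻¹ < 1 := inv_lt_one_of_one_lt₀ hθ
  obtain ⟨J, hJ⟩ := exists_pow_lt_of_lt_one (inv_pos.mpr hR) hθ'
  have hdec : ∀ k, ‖periodCoeff q θ (J + k)‖ * R ^ (J + k) ≤ ‖periodCoeff q θ J‖ * R ^ J := by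
    intro k
    induction k with
    | zero => rfl
    | succ k ih =>
      refine le_trans ?_ ih
      obtain ⟨h1, h2⟩ := norm_periodCoeff_aux hq hθ (J + k)
      have h3 : ‖periodCoeff q θ (J + k)‖ * R ≤ 1 := by
        have h4 : ‖periodCoeff q θ (J + k)‖ ≤ R⁻¹ :=
          (norm_periodCoeff_le hq hθ _).trans
            ((pow_le_pow_of_le_one (by positivity) hθ'.le (Nat.le_add_right J k)).trans hJ.le)
        calc _ ≤ R⁻¹ * R := by gcongr
          _ = 1 := inv_mul_cancel₀ hR.ne'
      have h5 : ‖periodCoeff q θ (J + k + 1)‖ ≤ ‖periodCoeff q θ (J + k)‖ ^ 2 := by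
        refine h2.trans ?_
        have h6 : ‖periodCoeff q θ (J + k)‖ / ‖θ‖ ≤ ‖periodCoeff q θ (J + k)‖ :=
          div_le_self (norm_nonneg _) hθ.le
        exact (pow_le_pow_left₀ (by positivity) h6 q).trans
          (pow_le_pow_of_le_one (norm_nonneg _) h1 hq)
      rw [← add_assoc, pow_succ R (J + k)]
      calc ‖periodCoeff q θ (J + k + 1)‖ * (R ^ (J + k) * R)
          ≤ ‖periodCoeff q θ (J + k)‖ ^ 2 * (R ^ (J + k) * R) := by gcongr
        _ = (‖periodCoeff q θ (J + k)‖ * R ^ (J + k)) * (‖periodCoeff q θ (J + k)‖ * R) := by ring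
        _ ≤ (‖periodCoeff q θ (J + k)‖ * R ^ (J + k)) * 1 := by gcongr
        _ = _ := mul_one _
  have hterm : ∀ j ∈ Finset.range (J + 1), 0 ≤ ‖periodCoeff q θ j‖ * R ^ j := fun j _ => by positivity
  refine ⟨∑ j ∈ Finset.range (J + 1), ‖periodCoeff q θ j‖ * R ^ j, fun j => ?_⟩
  rw [periodSeries, coeff_mk]
  rcases le_or_gt j J with h | h
  · exact Finset.single_le_sum hterm (Finset.mem_range.mpr (by omega))
  · obtain ⟨k, rfl⟩ : ∃ k, j = J + k := ⟨j - J, by omega⟩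
    exact (hdec k).trans (Finset.single_le_sum hterm (Finset.mem_range.mpr (by omega)))

lemma periodSeries_eq (hq : 2 ≤ q) (hfr : ∀ ν x, fr ν x = x ^ q ^ ν) (hθ : 1 < ‖θ‖) :
    periodSeries q θ = (1 - PowerSeries.C (θ ^ q)⁻¹ * PowerSeries.X) *
      PowerSeries.map (fr 1) (periodSeries q θ) := by
  ext j
  rw [sub_mul, one_mul, mul_assoc, map_sub, coeff_C_mul, coeff_map]
  cases j with
  | zero => simp [periodSeries, periodCoeff]
  | succ j =>
    rw [coeff_succ_X_mul, coeff_map]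
    simp only [periodSeries, coeff_mk]
    have h1 : ‖periodCoeff q θ j / θ‖ < 1 := by
      rw [norm_div, div_lt_one (by linarith)]
      exact (norm_periodCoeff_aux hq hθ j).1.trans_lt hθ
    have h2 := frobSum_eq hq hfr h1
    have h3 : periodCoeff q θ (j + 1) = -fr 1 (frobSum q (periodCoeff q θ j / θ)) := by
      rw [hfr, pow_one, periodCoeff]
    have h4 := congrArg (fr 1) h2
    rw [map_add] at h4
    have h5 : fr 1 (periodCoeff q θ j / θ) = (θ ^ q)⁻¹ * fr 1 (periodCoeff q θ j) := by
      rw [map_div₀, hfr 1 θ, pow_one]; ring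
    rw [h5] at h4
    rw [h3, map_neg]
    linear_combination -h4

/-- The product formula for the value of `Π` at `θ`. -/
lemma evalAt_periodSeries (hq : 2 ≤ q) (hfr : ∀ ν x, fr ν x = x ^ q ^ ν) (hθ : 1 < ‖θ‖) (m : ℕ) :
    evalAt θ (periodSeries q θ) = (∏ i ∈ Finset.range m, (1 - (θ ^ q ^ (i + 1))⁻¹ * θ)) *
      evalAt θ (PowerSeries.map (fr m) (periodSeries q θ)) := by
  have hent := entire_periodSeries hq hθ
  induction m with
  | zero => simp [map_fr_zero hfr]
  | succ m ih =>
    have h1 : PowerSeries.map (fr m) (periodSeries q θ) =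
        (1 - PowerSeries.C (θ ^ q ^ (m + 1))⁻¹ * PowerSeries.X) *
          PowerSeries.map (fr (m + 1)) (periodSeries q θ) := by
      conv_lhs => rw [periodSeries_eq hq hfr hθ]
      rw [map_mul, map_fr_add hfr, map_sub, map_one, map_mul, map_C, map_X, map_inv₀, hfr, ← pow_mul,
        ← pow_succ']
    rw [ih, h1, evalAt_mul (Entire.one.sub ((Entire.C _).mul Entire.X)) (hent.frobTwist hq hfr _),
      evalAt_sub Entire.one ((Entire.C _).mul Entire.X), evalAt_mul (Entire.C _) Entire.X, evalAt_C, evalAt_X,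
      show (1 : L⟦X⟧) = PowerSeries.C 1 by simp, evalAt_C, Finset.prod_range_succ, mul_assoc]

lemma tendsto_twist_periodSeries (hq : 2 ≤ q) (hfr : ∀ ν x, fr ν x = x ^ q ^ ν) (hθ : 1 < ‖θ‖) :
    Tendsto (fun m => evalAt θ (PowerSeries.map (fr m) (periodSeries q θ))) atTop (𝓝 1) := by
  have hent := entire_periodSeries hq hθ
  have h1 : ∀ j, ‖coeff j (periodSeries q θ - 1)‖ < 1 := by
    intro j
    rw [map_sub, periodSeries, coeff_mk]
    cases j with
    | zero => simp [periodCoeff]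
    | succ j =>
      rw [coeff_one, if_neg (by omega), sub_zero]
      refine (norm_periodCoeff_le hq hθ _).trans_lt (pow_lt_one₀ (by positivity)
        (inv_lt_one_of_one_lt₀ hθ) (by omega))
  have h2 := (tendsto_twist_zero hq hfr θ (hent.sub Entire.one) h1).add_const 1
  rw [zero_add] at h2
  refine h2.congr fun m => ?_
  rw [map_sub, map_one, evalAt_sub (hent.frobTwist hq hfr m) Entire.one]
  rw [show (1 : L⟦X⟧) = PowerSeries.C 1 by simp, evalAt_C, sub_add_cancel]

lemma norm_one_sub_factor (hq : 2 ≤ q) (hθ : 1 < ‖θ‖) (i : ℕ) :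
    ‖1 - (θ ^ q ^ (i + 1))⁻¹ * θ‖ = 1 := by
  have h1 : ‖(θ ^ q ^ (i + 1))⁻¹ * θ‖ < 1 := by
    rw [norm_mul, norm_inv, norm_pow, inv_mul_lt_one₀ (by positivity)]
    exact lt_self_pow₀ hθ (Nat.one_lt_pow (by omega) (by omega))
  rw [sub_eq_add_neg, IsUltrametricDist.norm_add_eq_max_of_norm_ne_norm]
  · rw [norm_one, norm_neg, max_eq_left h1.le]
  · rw [norm_one, norm_neg]; exact h1.ne'

lemma tendsto_prod_periodSeries (hq : 2 ≤ q) (hfr : ∀ ν x, fr ν x = x ^ q ^ ν) (hθ : 1 < ‖θ‖) :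
    Tendsto (fun m => ∏ i ∈ Finset.range m, (1 - (θ ^ q ^ (i + 1))⁻¹ * θ)) atTop
      (𝓝 (evalAt θ (periodSeries q θ))) := by
  have h1 := tendsto_twist_periodSeries (fr := fr) hq hfr hθ
  have h2 := (tendsto_const_nhds (x := evalAt θ (periodSeries q θ))).div h1 one_ne_zero
  rw [div_one] at h2
  refine h2.congr' ?_
  filter_upwards [h1.eventually_ne one_ne_zero] with m hm
  rw [Pi.div_apply, evalAt_periodSeries hq hfr hθ m, mul_div_cancel_right₀ _ hm]

lemma norm_evalAt_periodSeries (hq : 2 ≤ q) (hfr : ∀ ν x, fr ν x = x ^ q ^ ν) (hθ : 1 < ‖θ‖) :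
    ‖evalAt θ (periodSeries q θ)‖ = 1 := by
  have h1 := (tendsto_prod_periodSeries (fr := fr) hq hfr hθ).norm
  refine tendsto_nhds_unique h1 ?_
  simp [norm_prod, norm_one_sub_factor hq hθ]

end TwistSums

/-! ### The period functions and their special values -/

section PeriodFunctions

open Polynomial Filter Topology

set_option linter.unusedSectionVars false

variable {F : Type*} [Field F] [Fintype F] {L : Type*} [NormedField L] [Algebra F L] [IsUltrametricDist L]
  [CompleteSpace L] {θ η : L} {q : ℕ} {fr : ℕ → L →+* L}

lemma gaussLE_one_toSeries (hq : 2 ≤ q) (hF : ∀ a : F, algebraMap F L a ^ q = algebraMap F L a)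
    (hθ : 1 < ‖θ‖) (h : F[X][X]) : GaussLE 1 (‖θ‖ ^ h.natDegree) (toSeries F θ h) := by
  have hN : ∀ a, (h.coeff a).natDegree ≤ ∑ a ∈ Finset.range (h.natDegree + 1), (h.coeff a).natDegree := by
    intro a
    rcases Nat.lt_or_ge h.natDegree a with ha | ha
    · simp [coeff_eq_zero_of_natDegree_lt ha]
    · exact Finset.single_le_sum (f := fun a => (h.coeff a).natDegree) (fun _ _ => Nat.zero_le _)
        (Finset.mem_range.mpr (by omega))
  simpa using gaussLE_toSeries hq hF hθ le_rfl hN le_rfl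

lemma GaussLE.coeff_le {M : ℝ} {f : PowerSeries L} (h : GaussLE 1 M f) (j : ℕ) :
    ‖PowerSeries.coeff j f‖ ≤ M := by
  simpa using h j

/-- The entire functions `Ω`, `X₀`, `Y₀` whose values at `t = θ` are, up to factors in `F[θ]`,
`1/π̃`, `ζ(n)/π̃ⁿ` and `ζ(n,n)/π̃²ⁿ`. -/
theorem exists_period_functions (hcard : Fintype.card F = q) (hfr : ∀ ν x, fr ν x = x ^ q ^ ν) (hq : 2 ≤ q)
    (hF : ∀ a : F, algebraMap F L a ^ q = algebraMap F L a) (hθ : 1 < ‖θ‖)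
    (hη : η ^ (q - 1) = -θ) {n : ℕ} (hn : 1 ≤ n) :
    ∃ (U : F[X][X]) (Γ : F[X]) (Ω X₀ Y₀ : PowerSeries L) (ϖ : L), Γ ≠ 0 ∧ Ω ≠ 0 ∧
      Entire Ω ∧ Entire X₀ ∧ Entire Y₀ ∧
      Ω = toSeries F θ (betaPoly F q) * PowerSeries.map (fr 1) Ω ∧
      X₀ = PowerSeries.map (fr 1) X₀ + toSeries F θ U * Ω ^ n ∧
      Y₀ = PowerSeries.map (fr 1) Y₀ + toSeries F θ U * Ω ^ n * PowerSeries.map (fr 1) X₀ ∧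
      ‖ϖ‖ = 1 ∧
      Tendsto (fun m => ∏ i ∈ Finset.range m, (1 - (θ ^ q ^ (i + 1))⁻¹ * θ)) atTop (𝓝 ϖ) ∧
      evalAt θ Ω = (η ^ q)⁻¹ * ϖ ∧
      Tendsto (fun m => ∑ d ∈ Finset.range m, evalAt θ Ω ^ n * aeval θ Γ * powerSum F θ d n) atTop
        (𝓝 (evalAt θ X₀)) ∧
      Tendsto (fun m => ∑ d ∈ Finset.range m, evalAt θ Ω ^ n * aeval θ Γ * powerSum F θ d n *
        (evalAt θ X₀ - ∑ i ∈ Finset.range (d + 1), evalAt θ Ω ^ n * aeval θ Γ * powerSum F θ i n)) atTop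
        (𝓝 (evalAt θ Y₀)) := by
  have hinj : Function.Injective (aeval θ : F[X] →ₐ[F] L) := aeval_injective hq hF hθ
  have hθ0 : θ ≠ 0 := fun h => by rw [h, norm_zero] at hθ; linarith
  have hη0 : η ≠ 0 := by
    rintro rfl
    rw [zero_pow (by omega)] at hη
    exact hθ0 (by simpa using hη.symm)
  have hηn : ‖η‖ ^ (q - 1) = ‖θ‖ := by rw [← norm_pow, hη, norm_neg]
  have hη1 : 1 < ‖η‖ := by
    by_contra h
    push Not at h
    have := pow_le_one₀ (n := q - 1) (norm_nonneg η) h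
    linarith
  -- a polynomial interpolating the normalized power sums `S_d(n)` for all `d` simultaneously
  obtain ⟨U, hUdeg, hU⟩ := exists_andersonThakur hcard hfr hq hF hinj n (n - 1) (by omega)
  rw [Nat.sub_add_cancel hn] at hU
  let Γ : F[X] := (∏ i ∈ Finset.range n, carlitzD q (X : F[X]) i) ^ (n - 1)
  have hΓ : aeval θ Γ = (∏ i ∈ Finset.range n, carlitzD q θ i) ^ (n - 1) := by
    simp [Γ, carlitzD, map_prod]
  have hΓ0 : Γ ≠ 0 := by
    intro h
    rw [h, map_zero] at hΓ
    exact pow_ne_zero _ (Finset.prod_ne_zero_iff.mpr fun i _ => carlitzD_ne_zero hq hinj i) hΓ.symm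
  let Ω : PowerSeries L := PowerSeries.C (η ^ q)⁻¹ * periodSeries q θ
  have hPent := entire_periodSeries (θ := θ) hq hθ
  have hΩent : Entire Ω := (Entire.C _).mul hPent
  have hβ : toSeries F θ (betaPoly F q) = PowerSeries.X - PowerSeries.C (θ ^ q) := by
    rw [betaPoly, map_sub, map_pow, toSeries_C, toSeries_X, tSeries_apply]
    simp
  have hneg : (-θ) ^ q = -θ ^ q := by
    have := hfr 1 (-θ)
    rw [pow_one] at this
    rw [← this, map_neg, hfr, pow_one]
  have hηq : ((η ^ q) ^ q)⁻¹ = -(η ^ q)⁻¹ * (θ ^ q)⁻¹ := by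
    have h1 : (η ^ q) ^ q = η ^ q * -θ ^ q := by
      have h2 : q + (q - 1) * q = q * q := by
        rw [Nat.sub_mul, one_mul, Nat.add_sub_cancel' (Nat.le_mul_self q)]
      rw [← hneg, ← hη, ← pow_mul, ← pow_mul, ← pow_add, h2]
    rw [h1, mul_inv, inv_neg]; ring
  have eΩ : Ω = toSeries F θ (betaPoly F q) * PowerSeries.map (fr 1) Ω := by
    simp only [Ω]
    conv_lhs => rw [periodSeries_eq hq hfr hθ]
    have h0 : fr 1 (η ^ q)⁻¹ = ((η ^ q) ^ q)⁻¹ := by rw [map_inv₀, hfr, pow_one]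
    rw [hβ, map_mul, PowerSeries.map_C, h0, hηq, map_mul, map_neg, ← mul_assoc, ← mul_assoc]
    congr 1
    have h1 : (PowerSeries.C (θ ^ q) : PowerSeries L) * PowerSeries.C (θ ^ q)⁻¹ = 1 := by
      rw [← map_mul, mul_inv_cancel₀ (pow_ne_zero _ hθ0), map_one]
    linear_combination (-PowerSeries.C (η ^ q)⁻¹) * h1
  have hΩ0 : Ω ≠ 0 := by
    intro h
    have := congrArg (PowerSeries.coeff 0) h
    simp [Ω, periodSeries, periodCoeff, hη0] at this
  have hΩG : GaussLE 1 ((‖η‖ ^ q)⁻¹) Ω := by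
    have h1 : GaussLE 1 1 (periodSeries q θ) := fun j => by
      simpa [periodSeries] using (norm_periodCoeff_aux hq hθ j).1
    simpa using (GaussLE.C (R := 1) (η ^ q)⁻¹).mul zero_le_one h1
  have hΩnG : GaussLE 1 (((‖η‖ ^ q)⁻¹) ^ n) (Ω ^ n) := by
    clear hn hU hUdeg hΓ hΓ0
    induction n with
    | zero => simpa using GaussLE.C (R := 1) (1 : L)
    | succ n ih => rw [pow_succ, pow_succ]; exact ih.mul zero_le_one hΩG
  let u : PowerSeries L := toSeries F θ U * Ω ^ n
  have hu1 : ∀ j, ‖PowerSeries.coeff j u‖ < 1 := by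
    intro j
    refine (((gaussLE_one_toSeries hq hF hθ U).mul zero_le_one hΩnG).coeff_le j).trans_lt ?_
    rw [← hηn, ← pow_mul, inv_pow, ← pow_mul, ← div_eq_mul_inv, div_lt_one (by positivity)]
    refine pow_lt_pow_right₀ hη1 (hUdeg.trans_lt ?_)
    exact Nat.mul_lt_mul_of_pos_left (by omega) (by omega)
  have huent : Entire u := (entire_toSeries U).mul (hΩent.pow n)
  let X₀ := twistSum q u
  have hX1 : ∀ j, ‖PowerSeries.coeff j X₀‖ < 1 := fun j =>
    (norm_coeff_twistSum_le hq hu1 j).trans_lt (hu1 j)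
  have hXent : Entire X₀ := Entire.twistSum hq hu1 huent
  have eX : X₀ = u + PowerSeries.map (fr 1) X₀ := twistSum_eq hq hfr hu1
  let v : PowerSeries L := u * PowerSeries.map (fr 1) X₀
  obtain ⟨ρ, hρ0, hρ1, hρ⟩ := huent.exists_lt_one hu1
  have hv1 : ∀ j, ‖PowerSeries.coeff j v‖ < 1 := by
    intro j
    have h1 : GaussLE 1 ρ u := fun j => by simpa using hρ j
    have h2 : GaussLE 1 1 (PowerSeries.map (fr 1) X₀) := fun j => by
      rw [PowerSeries.coeff_map, hfr, norm_pow, one_pow, mul_one]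
      exact pow_le_one₀ (norm_nonneg _) (hX1 j).le
    exact ((h1.mul zero_le_one h2).coeff_le j).trans_lt (by rwa [mul_one])
  have hvent : Entire v := huent.mul (hXent.frobTwist hq hfr 1)
  let Y₀ := twistSum q v
  have hYent : Entire Y₀ := Entire.twistSum hq hv1 hvent
  have hY1 : ∀ j, ‖PowerSeries.coeff j Y₀‖ < 1 := fun j =>
    (norm_coeff_twistSum_le hq hv1 j).trans_lt (hv1 j)
  have eY : Y₀ = v + PowerSeries.map (fr 1) Y₀ := twistSum_eq hq hfr hv1
  -- values of the twists
  have hΩd : ∀ d, evalAt θ Ω = carlitzEll q θ d * evalAt θ (PowerSeries.map (fr d) Ω) := by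
    intro d
    induction d with
    | zero => simp [carlitzEll, map_fr_zero hfr]
    | succ d ih =>
      have h1 : PowerSeries.map (fr d) Ω =
          toSeries F θ (expand F[X] (q ^ d) (betaPoly F q)) * PowerSeries.map (fr (d + 1)) Ω := by
        conv_lhs => rw [eΩ]
        rw [map_mul, map_fr_add hfr, toSeries_twist hfr hF]
      rw [ih, h1, evalAt_mul (entire_toSeries _) (hΩent.frobTwist hq hfr _), evalAt_toSeries_self,
        aeval_spec_expand, betaPoly, map_sub, twistEval_C, aeval_X, map_pow, twistEval_X, ← pow_mul,
        ← pow_succ, carlitzEll, carlitzEll, Finset.prod_range_succ, mul_assoc]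
  have hud : ∀ d, evalAt θ (PowerSeries.map (fr d) u) =
      evalAt θ Ω ^ n * aeval θ Γ * powerSum F θ d n := by
    intro d
    have h1 : PowerSeries.map (fr d) u =
        toSeries F θ (expand F[X] (q ^ d) U) * PowerSeries.map (fr d) Ω ^ n := by
      simp only [u]
      rw [map_mul, map_pow, toSeries_twist hfr hF]
    rw [h1, evalAt_mul (entire_toSeries _) ((hΩent.frobTwist hq hfr _).pow n), evalAt_toSeries_self,
      aeval_spec_expand, hU, evalAt_pow (hΩent.frobTwist hq hfr _), hΓ]
    conv_rhs => rw [hΩd d]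
    rw [mul_pow]; ring
  have hvd : ∀ d, evalAt θ (PowerSeries.map (fr d) v) =
      evalAt θ Ω ^ n * aeval θ Γ * powerSum F θ d n *
      (evalAt θ X₀ - ∑ i ∈ Finset.range (d + 1), evalAt θ Ω ^ n * aeval θ Γ * powerSum F θ i n) := by
    intro d
    have h1 : PowerSeries.map (fr d) v = PowerSeries.map (fr d) u * PowerSeries.map (fr (d + 1)) X₀ := by
      simp only [v]
      rw [map_mul, map_fr_add hfr]
    rw [h1, evalAt_mul (huent.frobTwist hq hfr _) (hXent.frobTwist hq hfr _), hud]
    congr 1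
    rw [evalAt_eq_sum_twists hq hfr huent hXent eX θ (d + 1)]
    simp only [hud]
    ring
  refine ⟨U, Γ, Ω, X₀, Y₀, evalAt θ (periodSeries q θ), hΓ0, hΩ0, hΩent, hXent, hYent, eΩ, ?_, ?_,
    norm_evalAt_periodSeries hq hfr hθ, tendsto_prod_periodSeries hq hfr hθ, ?_, ?_, ?_⟩
  · rw [add_comm]; exact eX
  · rw [add_comm]; exact eY
  · simp only [Ω]
    rw [evalAt_mul (Entire.C _) hPent, evalAt_C]
  · simpa only [hud] using tendsto_sum_twists hq hfr huent hXent eX hX1 θ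
  · simpa only [hvd] using tendsto_sum_twists hq hfr hvent hYent eY hY1 θ

end PeriodFunctions

/-! ### Twist-invariant entire series -/

section FixedSeries

open Polynomial

set_option linter.unusedSectionVars false

variable {F : Type*} [Field F] [Fintype F] {L : Type*} [NormedField L] [Algebra F L] [IsUltrametricDist L]
  [CompleteSpace L] {θ : L} {q : ℕ} {fr : ℕ → L →+* L}

lemma mem_range_of_pow_card (hcard : Fintype.card F = q) (hq : 2 ≤ q)
    (hF : ∀ a : F, algebraMap F L a ^ q = algebraMap F L a) {x : L} (hx : x ^ q = x) :
    ∃ a : F, algebraMap F L a = x := by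
  classical
  have hne : (X ^ q - X : L[X]) ≠ 0 := FiniteField.X_pow_card_sub_X_ne_zero L (by omega)
  have hdeg : (X ^ q - X : L[X]).natDegree = q := FiniteField.X_pow_card_sub_X_natDegree_eq L (by omega)
  have hsub : Finset.univ.image (algebraMap F L) ⊆ (X ^ q - X : L[X]).roots.toFinset := by
    intro y hy
    obtain ⟨a, -, rfl⟩ := Finset.mem_image.mp hy
    rw [Multiset.mem_toFinset, mem_roots hne]
    simp [hF]
  have heq := Finset.eq_of_subset_of_card_le hsub (by
    rw [Finset.card_image_of_injective _ (algebraMap F L).injective, Finset.card_univ, hcard]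
    exact (Multiset.toFinset_card_le _).trans ((card_roots' _).trans hdeg.le))
  have : x ∈ (X ^ q - X : L[X]).roots.toFinset := by
    rw [Multiset.mem_toFinset, mem_roots hne]
    simp [hx]
  rw [← heq] at this
  obtain ⟨a, -, ha⟩ := Finset.mem_image.mp this
  exact ⟨a, ha⟩

/-- An entire series fixed by the Frobenius twist is a polynomial over `F`, so its value at `θ`
lies in `F[θ]`. -/
lemma evalAt_of_fixed (hcard : Fintype.card F = q) (hfr : ∀ ν x, fr ν x = x ^ q ^ ν) (hq : 2 ≤ q)
    (hF : ∀ a : F, algebraMap F L a ^ q = algebraMap F L a) {κ : PowerSeries L} (hκ : Entire κ)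
    (h : PowerSeries.map (fr 1) κ = κ) : ∃ w : F[X], evalAt θ κ = aeval θ w := by
  have hx : ∀ j, ∃ a : F, algebraMap F L a = PowerSeries.coeff j κ := by
    intro j
    refine mem_range_of_pow_card hcard hq hF ?_
    have := congrArg (PowerSeries.coeff j) h
    rwa [PowerSeries.coeff_map, hfr, pow_one] at this
  choose a ha using hx
  obtain ⟨M, hM⟩ := hκ 2 two_pos
  obtain ⟨N, hN⟩ := pow_unbounded_of_one_lt M one_lt_two
  have hz : ∀ j, N ≤ j → PowerSeries.coeff j κ = 0 := by
    intro j hj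
    by_contra h0
    have h1 : a j ≠ 0 := by
      intro h1; rw [← ha, h1, map_zero] at h0; exact h0 rfl
    have h2 := hM j
    rw [← ha, norm_algebraMap_eq_one hq hF h1, one_mul] at h2
    exact absurd (hN.trans_le (pow_le_pow_right₀ one_le_two hj)) (not_lt.mpr h2)
  refine ⟨∑ j ∈ Finset.range N, C (a j) * X ^ j, ?_⟩
  unfold evalAt
  rw [tsum_eq_sum (s := Finset.range N), map_sum]
  · refine Finset.sum_congr rfl fun j _ => ?_
    rw [map_mul, aeval_C, map_pow, aeval_X, ha]
  · intro j hj
    rw [hz j (by simpa using hj), zero_mul]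

/-- The case of a solution `g / v` with `g` polynomial in `θ` and `v ∈ F[t]`: the series
`v E - g Ω^e` is fixed by the twist, hence a polynomial over `F`, and `g` vanishes at `t = θ`. -/
lemma value_of_polynomial_solution (hcard : Fintype.card F = q) (hfr : ∀ ν x, fr ν x = x ^ q ^ ν) (hq : 2 ≤ q)
    (hF : ∀ a : F, algebraMap F L a ^ q = algebraMap F L a)
    {Ω E : PowerSeries L} (hΩ : Entire Ω) (hE : Entire E) {e : ℕ} {V g : F[X][X]} {v : F[X]}
    (eΩ : Ω = toSeries F θ (betaPoly F q) * PowerSeries.map (fr 1) Ω)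
    (eE : E = PowerSeries.map (fr 1) E + toSeries F θ V * Ω ^ e)
    (hg : expand F[X] q g = betaPoly F q ^ e * (g - C v * V)) (hg0 : spec F 1 g = 0) :
    ∃ w : F[X], aeval θ v * evalAt θ E = aeval θ w := by
  have hv : PowerSeries.map (fr 1) (toSeries F θ (C v)) = toSeries F θ (C v) := by
    rw [← toSeries_twist hfr hF, expand_C]
  have hgτ : PowerSeries.map (fr 1) (toSeries F θ g) =
      toSeries F θ (betaPoly F q) ^ e * (toSeries F θ g - toSeries F θ (C v) * toSeries F θ V) := by
    rw [← toSeries_twist hfr hF, pow_one, hg, map_mul, map_pow, map_sub, map_mul]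
  have hEτ : PowerSeries.map (fr 1) E = E - toSeries F θ V * Ω ^ e := by
    linear_combination (-1 : PowerSeries L) * eE
  have hΩe : toSeries F θ (betaPoly F q) ^ e * PowerSeries.map (fr 1) Ω ^ e = Ω ^ e := by
    rw [← mul_pow, ← eΩ]
  have hκ : Entire (toSeries F θ (C v) * E - toSeries F θ g * Ω ^ e) :=
    ((entire_toSeries _).mul hE).sub ((entire_toSeries _).mul (hΩ.pow e))
  obtain ⟨w, hw⟩ := evalAt_of_fixed (θ := θ) hcard hfr hq hF hκ (by
    rw [map_sub, map_mul, map_mul, map_pow, hv, hgτ, hEτ]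
    linear_combination (-(toSeries F θ g - toSeries F θ (C v) * toSeries F θ V)) * hΩe)
  refine ⟨w, ?_⟩
  rw [← hw, evalAt_sub ((entire_toSeries _).mul hE) ((entire_toSeries _).mul (hΩ.pow e)),
    evalAt_mul (entire_toSeries _) hE, evalAt_mul (entire_toSeries _) (hΩ.pow e),
    evalAt_toSeries_self, evalAt_toSeries_self, hg0, map_zero, zero_mul, sub_zero]
  congr 2
  simp [spec]

/-- If the twisted equation `f^τ = β^e (f - V)` has a solution in `F(t, θ)`, then the value at
`t = θ` of any entire `E` with `E = E^τ + V Ω^e` lies in `F(θ)`. -/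
lemma value_of_twist_solution {K B : Type*} [Field K] [Field B] [Algebra F[X] K] [IsFractionRing F[X] K]
    [Algebra K[X] B] [IsFractionRing K[X] B] {τ : B →+* B}
    (hτ : ∀ p : K[X], τ (algebraMap K[X] B p) = algebraMap K[X] B (expand K q p))
    (hcard : Fintype.card F = q) (hfr : ∀ ν x, fr ν x = x ^ q ^ ν) (hq : 2 ≤ q)
    (hF : ∀ a : F, algebraMap F L a ^ q = algebraMap F L a)
    {Ω E : PowerSeries L} (hΩ : Entire Ω) (hE : Entire E) {e : ℕ} (he : 1 ≤ e) {V : F[X][X]}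
    (eΩ : Ω = toSeries F θ (betaPoly F q) * PowerSeries.map (fr 1) Ω)
    (eE : E = PowerSeries.map (fr 1) E + toSeries F θ V * Ω ^ e) {f : B}
    (hf : τ f = algebraMap K[X] B ((betaPoly F q).map (algebraMap F[X] K)) ^ e *
      (f - algebraMap K[X] B (V.map (algebraMap F[X] K)))) :
    ∃ v w : F[X], v ≠ 0 ∧ aeval θ v * evalAt θ E = aeval θ w := by
  have hβ : (betaPoly F q).map (algebraMap F[X] K) = C (algebraMap F[X] K X) - X ^ q := by
    simp [betaPoly]
  rw [hβ] at hf
  obtain ⟨g, rfl, hg0⟩ := mem_polynomial_of_twist hq hτ he hf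
  obtain ⟨v, hv, hgv⟩ := IsLocalization.integerNormalization_spec (nonZeroDivisors F[X]) g
  set G : F[X][X] := IsLocalization.integerNormalization (nonZeroDivisors F[X]) g
  have hinj : Function.Injective (algebraMap F[X] K) := IsFractionRing.injective F[X] K
  have hgv' : G.map (algebraMap F[X] K) = C (algebraMap F[X] K v) * g := by
    rw [hgv, ← algebraMap_smul K, smul_eq_C_mul]
  have hge : expand K q g = (C (algebraMap F[X] K X) - X ^ q) ^ e * (g - V.map (algebraMap F[X] K)) := by
    apply IsFractionRing.injective K[X] B
    rw [← hτ, hf, map_mul, map_pow, map_sub (algebraMap K[X] B) g]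
  obtain ⟨w, hw⟩ := value_of_polynomial_solution (g := G) (v := v) hcard hfr hq hF hΩ hE eΩ eE (by
    apply map_injective _ hinj
    rw [map_expand, hgv', Polynomial.map_mul, Polynomial.map_pow, Polynomial.map_sub, hβ, hgv',
      Polynomial.map_mul, map_C, map_mul, expand_C, hge]
    ring) (by
    apply hinj
    have h1 : spec F 1 G = G.eval X := by
      rw [spec, coe_eval₂RingHom, eval]
      congr 1
      ext <;> simp
    rw [h1, map_zero, ← eval₂_at_apply, ← eval_map, hgv', eval_mul, hg0, mul_zero])
  exact ⟨v, w, nonZeroDivisors.ne_zero hv, hw⟩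

end FixedSeries

/-! ### The function field and weighted substitutions -/

section Dichotomy

open Polynomial

set_option linter.unusedSectionVars false

/-- Polynomials in `w, x wⁿ, y w²ⁿ` determine their coefficients. -/
lemma weighted_injective {R B : Type*} [CommRing R] [CommRing B] (j : R →+* B) (hj : Function.Injective j)
    (n : ℕ) (P : MvPolynomial (Fin 3) R)
    (hP : MvPolynomial.eval₂ (S₁ := B[X][X][X]) ((C.comp (C.comp C)).comp j)
      ![X, C (C X) * X ^ n, C X * X ^ (2 * n)] P = 0) : P = 0 := by
  classical
  ext m
  rw [MvPolynomial.coeff_zero]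
  by_contra h0
  apply h0
  have key : ∀ d : Fin 3 →₀ ℕ, ((C.comp (C.comp C)).comp j : R →+* B[X][X][X]) (P.coeff d) *
      ∏ i, (![X, C (C X) * X ^ n, C X * X ^ (2 * n)] : Fin 3 → B[X][X][X]) i ^ d i =
      monomial (d 0 + n * d 1 + 2 * n * d 2) (monomial (d 2) (monomial (d 1) (j (P.coeff d)))) := by
    intro d
    rw [Fin.prod_univ_three]
    simp only [Matrix.cons_val_zero, Matrix.cons_val_one, Matrix.cons_val, RingHom.comp_apply]
    rw [← C_mul_X_pow_eq_monomial, ← C_mul_X_pow_eq_monomial, ← C_mul_X_pow_eq_monomial]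
    simp only [C_mul, C_pow, pow_add, pow_mul]
    ring
  rw [MvPolynomial.eval₂_eq', Finset.sum_congr rfl fun d _ => key d] at hP
  have h1 := congrArg (fun Q : B[X][X][X] => ((Q.coeff (m 0 + n * m 1 + 2 * n * m 2)).coeff (m 2)).coeff (m 1)) hP
  simp only [finsetSum_coeff, coeff_zero] at h1
  rw [Finset.sum_eq_single m] at h1
  · simp only [coeff_monomial_same] at h1
    exact hj (h1.trans (map_zero j).symm)
  · intro d _ hd
    by_contra h2
    apply hd
    simp only [coeff_monomial] at h2
    split_ifs at h2 with h3
    · rw [coeff_monomial] at h2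
      split_ifs at h2 with h4
      · rw [coeff_monomial] at h2
        split_ifs at h2 with h5
        · ext i
          rw [h4, h5] at h3
          fin_cases i
          · simpa using h3
          · exact h5
          · exact h4
        · exact absurd rfl h2
      · simp at h2
    · simp at h2
  · intro hm
    rw [MvPolynomial.notMem_support_iff.mp hm]; simp

/-- Algebraic independence of `Ω, L₁, L₂` over `B` gives that of `Ω, Ωⁿ L₁, Ω²ⁿ L₂` over a subring. -/
lemma weighted_algIndep {R B S 𝓕 : Type*} [CommRing R] [CommRing B] [CommRing S] [CommRing 𝓕] (j : R →+* B)
    (hj : Function.Injective j) (ι : B →+* 𝓕) (s : R →+* S) (a : S →+* 𝓕)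
    (hs : ∀ r, ι (j r) = a (s r)) (n : ℕ) {Ω X₀ Y₀ : S} {L₁ L₂ : 𝓕}
    (hX : a X₀ = L₁ * a Ω ^ n) (hY : a Y₀ = L₂ * a Ω ^ (2 * n))
    (hinj : Function.Injective (eval₂RingHom (eval₂RingHom (eval₂RingHom ι L₁) L₂) (a Ω)))
    (P : MvPolynomial (Fin 3) R) (hP : MvPolynomial.eval₂ s ![Ω, X₀, Y₀] P = 0) : P = 0 := by
  refine weighted_injective j hj n P (hinj ?_)
  rw [map_zero, ← map_zero a, ← hP, MvPolynomial.eval₂_eq', MvPolynomial.eval₂_eq', map_sum, map_sum]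
  refine Finset.sum_congr rfl fun d _ => ?_
  rw [map_mul, map_mul, map_prod, map_prod, Fin.prod_univ_three, Fin.prod_univ_three, ← hs]
  simp only [Matrix.cons_val_zero, Matrix.cons_val_one, Matrix.cons_val, RingHom.comp_apply, map_mul,
    map_pow, coe_eval₂RingHom, eval₂_C, eval₂_X, hX, hY]

variable {F : Type*} [Field F] [Fintype F] {L : Type*} [NormedField L] [Algebra F L] [IsUltrametricDist L]
  [CompleteSpace L] {θ : L} {q : ℕ} {fr : ℕ → L →+* L}

/-- The function field `F(t, θ)`, with its Frobenius twist `θ ↦ θ ^ q`, embedded in the fraction field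
of `L⟦t⟧`. -/
lemma exists_function_field (hfr : ∀ ν x, fr ν x = x ^ q ^ ν) (hq : 2 ≤ q)
    (hF : ∀ a : F, algebraMap F L a ^ q = algebraMap F L a) (hθ : 1 < ‖θ‖) :
    ∃ (τ : FractionRing (FractionRing F[X])[X] →+* FractionRing (FractionRing F[X])[X])
      (ι : FractionRing (FractionRing F[X])[X] →+* FractionRing (PowerSeries L))
      (φ : FractionRing (PowerSeries L) →+* FractionRing (PowerSeries L)),
      (∀ p, τ (algebraMap _ _ p) = algebraMap _ _ (expand (FractionRing F[X]) q p)) ∧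
      (∀ h : F[X][X], ι (algebraMap _ _ (h.map (algebraMap F[X] (FractionRing F[X])))) =
        algebraMap _ _ (toSeries F θ h)) ∧
      (∀ f, φ (algebraMap _ _ f) = algebraMap _ _ (PowerSeries.map (fr 1) f)) ∧
      ∀ b, ι (τ b) = φ (ι b) := by
  have hinjS := toSeries_injective hq hF hθ
  have hinjK : Function.Injective (algebraMap F[X] (FractionRing F[X])) := IsFractionRing.injective _ _
  have hinj𝓕 : Function.Injective (algebraMap (PowerSeries L) (FractionRing (PowerSeries L))) :=
    IsFractionRing.injective _ _
  have hτi : Function.Injective (expand (FractionRing F[X]) q : (FractionRing F[X])[X] →+* (FractionRing F[X])[X]) :=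
    fun a b h => expand_injective (R := FractionRing F[X]) (show 0 < q by omega) h
  have hφi : Function.Injective (PowerSeries.map (fr 1)) := PowerSeries.map_injective _ (fr 1).injective
  have hι₀ : Function.Injective ((algebraMap (PowerSeries L) (FractionRing (PowerSeries L))).comp
      ((toSeries F θ).comp C)) :=
    hinj𝓕.comp (hinjS.comp C_injective)
  let ι₁ : FractionRing F[X] →+* FractionRing (PowerSeries L) := IsFractionRing.lift hι₀
  let ι₂ : (FractionRing F[X])[X] →+* FractionRing (PowerSeries L) :=
    eval₂RingHom ι₁ (algebraMap _ _ (PowerSeries.C θ))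
  have hι₂ : ∀ h : F[X][X], ι₂ (h.map (algebraMap F[X] (FractionRing F[X]))) =
      algebraMap _ _ (toSeries F θ h) := by
    intro h
    have : ι₂.comp (mapRingHom (algebraMap F[X] (FractionRing F[X]))) =
        (algebraMap (PowerSeries L) (FractionRing (PowerSeries L))).comp (toSeries F θ) := by
      refine Polynomial.ringHom_ext (fun a => ?_) ?_
      · simp only [RingHom.comp_apply, coe_mapRingHom, map_C, ι₂, coe_eval₂RingHom, eval₂_C, ι₁]
        rw [IsFractionRing.lift_algebraMap]; rfl
      · simp only [RingHom.comp_apply, coe_mapRingHom, map_X, ι₂, coe_eval₂RingHom, eval₂_X, toSeries_X]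
    exact RingHom.congr_fun this h
  have hι₂i : Function.Injective ι₂ := by
    rw [injective_iff_map_eq_zero]
    intro g hg
    obtain ⟨v, hv, hgv⟩ := IsLocalization.integerNormalization_spec (nonZeroDivisors F[X]) g
    set G : F[X][X] := IsLocalization.integerNormalization (nonZeroDivisors F[X]) g
    rw [← algebraMap_smul (FractionRing F[X]), smul_eq_C_mul] at hgv
    have h1 := hι₂ G
    rw [hgv, map_mul, hg, mul_zero, eq_comm, ← map_zero (algebraMap (PowerSeries L) (FractionRing (PowerSeries L)))] at h1
    have h2 : G = 0 := hinjS ((hinj𝓕 h1).trans (map_zero _).symm)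
    rw [h2, Polynomial.map_zero, eq_comm, mul_eq_zero, C_eq_zero] at hgv
    refine hgv.resolve_left fun h3 => nonZeroDivisors.ne_zero hv (hinjK (h3.trans (map_zero _).symm))
  let τ : FractionRing (FractionRing F[X])[X] →+* FractionRing (FractionRing F[X])[X] :=
    IsFractionRing.map hτi
  let ι : FractionRing (FractionRing F[X])[X] →+* FractionRing (PowerSeries L) := IsFractionRing.lift hι₂i
  let φ : FractionRing (PowerSeries L) →+* FractionRing (PowerSeries L) := IsFractionRing.map hφi
  have hτ : ∀ p, τ (algebraMap _ _ p) = algebraMap _ _ (expand (FractionRing F[X]) q p) := fun p =>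
    IsLocalization.map_eq _ p
  have hι : ∀ p, ι (algebraMap _ _ p) = ι₂ p := fun p => IsFractionRing.lift_algebraMap _ p
  have hφ : ∀ f, φ (algebraMap _ _ f) = algebraMap _ _ (PowerSeries.map (fr 1) f) := fun f =>
    IsLocalization.map_eq _ f
  refine ⟨τ, ι, φ, hτ, fun h => (hι _).trans (hι₂ h), hφ, ?_⟩
  have h2 : ι₂.comp (expand (FractionRing F[X]) q : (FractionRing F[X])[X] →+* (FractionRing F[X])[X]) = φ.comp ι₂ := by
    refine Polynomial.ringHom_ext' ?_ ?_
    · refine IsLocalization.ringHom_ext (nonZeroDivisors F[X]) (RingHom.ext fun a => ?_)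
      have h3 := hι₂ (C a)
      rw [map_C] at h3
      have h4 : PowerSeries.map (fr 1) (toSeries F θ (C a)) = toSeries F θ (C a) := by
        rw [← toSeries_twist hfr hF, expand_C]
      simp only [RingHom.comp_apply, RingHom.coe_coe, expand_C, h3, hφ, h4]
    · have h3 := hι₂ X
      rw [map_X] at h3
      simp only [RingHom.comp_apply, RingHom.coe_coe, expand_X, map_pow, h3, hφ]
      rw [toSeries_X, PowerSeries.map_C, hfr, pow_one, ← map_pow, ← map_pow]
  intro b
  have h3 : ι.comp τ = φ.comp ι := by
    refine IsLocalization.ringHom_ext (nonZeroDivisors (FractionRing F[X])[X]) (RingHom.ext fun p => ?_)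
    simp only [RingHom.comp_apply, hτ, hι]
    exact RingHom.congr_fun h2 p
  exact RingHom.congr_fun h3 b

end Dichotomy

/-! ### The dichotomy for special values -/

section Dichotomy2

open Polynomial

set_option linter.unusedSectionVars false

variable {F : Type*} [Field F] [Fintype F] {L : Type*} [NormedField L] [Algebra F L] [IsUltrametricDist L]
  [CompleteSpace L] {θ : L} {q : ℕ} {fr : ℕ → L →+* L}

/-- If no iterated `p`-th power of `X₀(θ)` or of `X₀(θ)² - 2 Y₀(θ)` lies in `F(θ)`, then
`Ω(θ)`, `X₀(θ)`, `Y₀(θ)` are algebraically independent over `F[θ]`. -/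
theorem values_algIndep_or {p : ℕ} [hp : Fact p.Prime] [CharP F p]
    (hcard : Fintype.card F = q) (hfr : ∀ ν x, fr ν x = x ^ q ^ ν) (hq : 2 ≤ q)
    (hF : ∀ a : F, algebraMap F L a ^ q = algebraMap F L a) (hθ : 1 < ‖θ‖) {n : ℕ} (hn : 1 ≤ n)
    {Ω X₀ Y₀ : PowerSeries L} {U : F[X][X]} (hΩ0 : Ω ≠ 0)
    (hΩ : Entire Ω) (hX : Entire X₀) (hY : Entire Y₀)
    (eΩ : Ω = toSeries F θ (betaPoly F q) * PowerSeries.map (fr 1) Ω)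
    (eX : X₀ = PowerSeries.map (fr 1) X₀ + toSeries F θ U * Ω ^ n)
    (eY : Y₀ = PowerSeries.map (fr 1) Y₀ + toSeries F θ U * Ω ^ n * PowerSeries.map (fr 1) X₀)
    (hX' : ∀ (i : ℕ) (v w : F[X]), v ≠ 0 → aeval θ v * evalAt θ X₀ ^ p ^ i ≠ aeval θ w)
    (hY' : ∀ (i : ℕ) (v w : F[X]), v ≠ 0 →
      aeval θ v * (evalAt θ X₀ ^ 2 - 2 * evalAt θ Y₀) ^ p ^ i ≠ aeval θ w)
    (P : MvPolynomial (Fin 3) F[X])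
    (hP : MvPolynomial.eval₂ (aeval θ : F[X] →ₐ[F] L).toRingHom
      ![evalAt θ Ω, evalAt θ X₀, evalAt θ Y₀] P = 0) : P = 0 := by
  obtain ⟨τ, ι, φ, hτ, hι, hφ, hιτ⟩ := exists_function_field (θ := θ) hfr hq hF hθ
  have hinjK : Function.Injective (algebraMap F[X] (FractionRing F[X])) := IsFractionRing.injective _ _
  have hinjB : Function.Injective (algebraMap (FractionRing F[X])[X] (FractionRing (FractionRing F[X])[X])) :=
    IsFractionRing.injective _ _
  have hinj𝓕 : Function.Injective (algebraMap (PowerSeries L) (FractionRing (PowerSeries L))) :=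
    IsFractionRing.injective _ _
  have : CharP (FractionRing F[X]) p := charP_of_injective_ringHom hinjK p
  have : CharP (FractionRing (FractionRing F[X])[X]) p := charP_of_injective_ringHom hinjB p
  have : CharP L p := charP_of_injective_algebraMap (algebraMap F L).injective p
  have : CharP (PowerSeries L) p := charP_of_injective_ringHom (PowerSeries.C_injective (R := L)) p
  let j : F[X][X] →+* FractionRing (FractionRing F[X])[X] :=
    (algebraMap _ _).comp (mapRingHom (algebraMap F[X] (FractionRing F[X])))
  have hj : Function.Injective j := hinjB.comp (map_injective _ hinjK)
  have hjm : ∀ h, j h = algebraMap _ _ (h.map (algebraMap F[X] (FractionRing F[X]))) := fun _ => rfl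
  have hιj : ∀ h, ι (j h) = algebraMap _ _ (toSeries F θ h) := hι
  have hβm : (betaPoly F q).map (algebraMap F[X] (FractionRing F[X])) = C (algebraMap F[X] _ X) - X ^ q := by
    simp [betaPoly]
  have hβ0 : j (betaPoly F q) ≠ 0 := by
    rw [Ne, ← map_zero j, hj.eq_iff]
    intro h
    have := congrArg (fun P : F[X][X] => coeff P q) h
    simp [betaPoly, coeff_C, show q ≠ 0 by omega] at this
  have hB : TrivialEigenvectors τ (j (betaPoly F q))
      ((algebraMap (FractionRing F[X])[X] (FractionRing (FractionRing F[X])[X])).comp C) := by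
    intro s hs a b hab
    rw [hjm, hβm] at hab
    refine twist_eigenvector hq hτ ?_ hs hab
    intro a b h
    have h1 : (X : F[X]) ^ q ^ a = X ^ q ^ b := hinjK (by simpa using h)
    have h2 := congrArg natDegree h1
    rw [natDegree_X_pow, natDegree_X_pow] at h2
    exact Nat.pow_right_injective hq h2
  have hD : X₀ ^ 2 - 2 * Y₀ = PowerSeries.map (fr 1) (X₀ ^ 2 - 2 * Y₀) + toSeries F θ (U ^ 2) * Ω ^ (2 * n) := by
    rw [map_sub, map_mul, map_pow, map_ofNat, map_pow]
    generalize PowerSeries.map (fr 1) X₀ = x at *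
    generalize PowerSeries.map (fr 1) Y₀ = y at *
    rw [eX, eY]; ring
  have hPow : ∀ (E : PowerSeries L) (V : F[X][X]) (m : ℕ),
      E = PowerSeries.map (fr 1) E + toSeries F θ V * Ω ^ m → ∀ i,
      E ^ p ^ i = PowerSeries.map (fr 1) (E ^ p ^ i) + toSeries F θ (V ^ p ^ i) * Ω ^ (m * p ^ i) := by
    intro E V m h i
    conv_lhs => rw [h]
    rw [add_pow_char_pow, map_pow, map_pow, mul_pow, ← pow_mul]
  have hDe : Entire (X₀ ^ 2 - 2 * Y₀) := by
    have : (2 : PowerSeries L) * Y₀ = Y₀ + Y₀ := two_mul _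
    rw [this]
    exact (hX.pow 2).sub (hY.add hY)
  have hno : ∀ i f, τ f ≠ j (betaPoly F q) ^ (n * p ^ i) * (f - j U ^ p ^ i) := by
    intro i f hf
    rw [← map_pow j U] at hf
    obtain ⟨v, w, hv, h⟩ := value_of_twist_solution hτ hcard hfr hq hF hΩ (hX.pow (p ^ i))
      (Nat.mul_pos hn (pow_pos hp.out.pos i)) eΩ (hPow _ _ _ eX i) hf
    rw [evalAt_pow hX] at h
    exact hX' i v w hv h
  have hno2 : ∀ i f, τ f ≠ j (betaPoly F q) ^ (2 * n * p ^ i) * (f - (j U ^ 2) ^ p ^ i) := by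
    intro i f hf
    rw [← map_pow j U, ← map_pow j (U ^ 2)] at hf
    obtain ⟨v, w, hv, h⟩ := value_of_twist_solution hτ hcard hfr hq hF hΩ (hDe.pow (p ^ i))
      (Nat.mul_pos (by omega) (pow_pos hp.out.pos i)) eΩ (hPow _ _ _ hD i) hf
    rw [evalAt_pow hDe, two_mul, evalAt_sub (hX.pow 2) (hY.add hY), evalAt_add hY hY, evalAt_pow hX,
      ← two_mul] at h
    exact hY' i v w hv h
  set a := algebraMap (PowerSeries L) (FractionRing (PowerSeries L)) with ha
  have haΩ0 : a Ω ≠ 0 := by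
    rw [Ne, ← map_zero a, hinj𝓕.eq_iff]; exact hΩ0
  have haΩ : a Ω = ι (j (betaPoly F q)) * φ (a Ω) := by
    rw [hιj, hφ, ← map_mul, ← eΩ]
  have hφΩ0 : φ (a Ω) ≠ 0 := by simpa using haΩ0
  have hβ0' : ι (j (betaPoly F q)) ≠ 0 := by simpa using hβ0
  have haX : φ (a X₀) = a X₀ - ι (j U) * a Ω ^ n := by
    rw [hιj, hφ, ← map_pow, ← map_mul, ← map_sub]
    congr 1
    linear_combination (-1 : PowerSeries L) * eX
  have haY : φ (a Y₀) = a Y₀ - ι (j U) * a Ω ^ n * φ (a X₀) := by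
    rw [hιj, hφ, hφ, ← map_pow, ← map_mul, ← map_mul, ← map_sub]
    congr 1
    linear_combination (-1 : PowerSeries L) * eY
  have hinj := algIndep_of_no_solutions (p := p) hβ0 (fun x => by simp [hτ]) hB hn (j U) hno hno2 hιτ haΩ0 haΩ
    (L₁ := a X₀ / a Ω ^ n) (L₂ := a Y₀ / a Ω ^ (2 * n))
    (by
      rw [map_div₀, map_pow, haX]
      generalize ι (j (betaPoly F q)) = b at *
      generalize φ (a Ω) = w at *
      rw [haΩ]
      field_simp
      ring)
    (by
      rw [map_div₀, map_pow, haY, haX]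
      generalize ι (j (betaPoly F q)) = b at *
      generalize φ (a Ω) = w at *
      rw [haΩ]
      field_simp
      ring)
  refine algebraic_independence_criterion (U := U) hq hfr hF hθ hn hΩ hX hY eΩ ?_ ?_ ?_ P hP
  · conv_lhs => rw [eX]
    conv_lhs => rw [eΩ]
    rw [map_mul (toSeries F θ), map_pow (toSeries F θ)]; ring
  · conv_lhs => rw [eY]
    conv_lhs => rw [eΩ]
    rw [map_mul (toSeries F θ), map_pow (toSeries F θ)]; ring
  · intro Q hQ
    refine weighted_algIndep j hj ι (toSeries F θ) a hιj n (L₁ := a X₀ / a Ω ^ n)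
      (L₂ := a Y₀ / a Ω ^ (2 * n)) ?_ ?_ hinj Q hQ
    · field_simp
    · field_simp

end Dichotomy2

/-! ### Transfer to zeta values -/

section Transfer

open Polynomial Filter Topology

set_option linter.unusedSectionVars false

/-- Algebraic independence of `w, wⁿ g x, (wⁿ g)² y` implies that of `w⁻¹, x, y`. -/
lemma weighted_transfer {R L : Type*} [CommRing R] [IsDomain R] [Field L] (s : R →+* L) {w x y : L} {g : R}
    (hw : w ≠ 0) (hg : g ≠ 0) (n : ℕ)
    (H : ∀ Q : MvPolynomial (Fin 3) R,
      MvPolynomial.eval₂ s ![w, w ^ n * s g * x, (w ^ n * s g) ^ 2 * y] Q = 0 → Q = 0)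
    (P : MvPolynomial (Fin 3) R) (hP : MvPolynomial.eval₂ s ![w⁻¹, x, y] P = 0) : P = 0 := by
  classical
  let wt : (Fin 3 →₀ ℕ) → ℕ := fun d => d 0 + n * d 1 + 2 * n * d 2 + d 1 + 2 * d 2
  let N := ∑ d ∈ P.support, wt d
  have hN : ∀ d ∈ P.support, d 0 + n * d 1 + 2 * n * d 2 + d 1 + 2 * d 2 ≤ N := fun d hd =>
    Finset.single_le_sum (f := wt) (fun _ _ => Nat.zero_le _) hd
  let idx : (Fin 3 →₀ ℕ) → (Fin 3 →₀ ℕ) := fun d =>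
    Finsupp.equivFunOnFinite.symm ![N - (d 0 + n * d 1 + 2 * n * d 2), d 1, d 2]
  have hidx : ∀ d ∈ P.support, ∀ m ∈ P.support, idx d = idx m → d = m := by
    intro d hd m hm h
    have hd' := hN d hd
    have hm' := hN m hm
    have e0 := DFunLike.congr_fun h 0
    have e1 : d 1 = m 1 := DFunLike.congr_fun h 1
    have e2 : d 2 = m 2 := DFunLike.congr_fun h 2
    simp only [idx, Finsupp.equivFunOnFinite_symm_apply_apply, Matrix.cons_val_zero] at e0
    rw [e1, e2] at hd' e0
    ext i
    fin_cases i
    · change d 0 = m 0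
      omega
    · exact e1
    · exact e2
  let Q : MvPolynomial (Fin 3) R :=
    ∑ d ∈ P.support, MvPolynomial.monomial (idx d) (P.coeff d * g ^ (N - (d 1 + 2 * d 2)))
  have hQ : Q = 0 := by
    apply H
    have h1 : ∀ d ∈ P.support, MvPolynomial.eval₂ s ![w, w ^ n * s g * x, (w ^ n * s g) ^ 2 * y]
        (MvPolynomial.monomial (idx d) (P.coeff d * g ^ (N - (d 1 + 2 * d 2)))) =
        (s g ^ N * w ^ N) * (s (P.coeff d) * ∏ i, (![w⁻¹, x, y] : Fin 3 → L) i ^ d i) := by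
      intro d hd
      have hd' := hN d hd
      rw [MvPolynomial.eval₂_monomial, Finsupp.prod_fintype _ _ (fun i => pow_zero _),
        Fin.prod_univ_three, Fin.prod_univ_three, map_mul, map_pow]
      simp only [idx, Finsupp.equivFunOnFinite_symm_apply_apply, Matrix.cons_val_zero, Matrix.cons_val_one,
        Matrix.cons_val]
      obtain ⟨r, hr⟩ := Nat.exists_eq_add_of_le (show d 1 + 2 * d 2 ≤ N by omega)
      obtain ⟨r', hr'⟩ := Nat.exists_eq_add_of_le (show d 0 + n * d 1 + 2 * n * d 2 ≤ N by omega)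
      rw [show N - (d 1 + 2 * d 2) = r by omega, show N - (d 0 + n * d 1 + 2 * n * d 2) = r' by omega]
      have e1 : s g ^ N = s g ^ (d 1) * s g ^ (2 * d 2) * s g ^ r := by
        rw [hr, pow_add, pow_add]
      have e2 : w ^ N * (w⁻¹) ^ d 0 = w ^ (n * d 1) * w ^ (2 * n * d 2) * w ^ r' := by
        rw [hr', pow_add, pow_add, pow_add, inv_pow]
        field_simp
      calc _ = s (P.coeff d) * x ^ d 1 * y ^ d 2 * (s g ^ (d 1) * s g ^ (2 * d 2) * s g ^ r) *
            (w ^ (n * d 1) * w ^ (2 * n * d 2) * w ^ r') := by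
              simp only [mul_pow, pow_mul]; ring
        _ = _ := by rw [← e1, ← e2]; ring
    rw [MvPolynomial.eval₂_sum, Finset.sum_congr rfl h1, ← Finset.mul_sum, ← MvPolynomial.eval₂_eq', hP,
      mul_zero]
  ext m
  rw [MvPolynomial.coeff_zero]
  by_contra h0
  have hm : m ∈ P.support := MvPolynomial.mem_support_iff.mpr h0
  have h1 := congrArg (MvPolynomial.coeff (idx m)) hQ
  rw [MvPolynomial.coeff_sum, Finset.sum_eq_single m, MvPolynomial.coeff_monomial, if_pos rfl,
    MvPolynomial.coeff_zero, mul_eq_zero] at h1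
  · exact h1.elim h0 (pow_ne_zero _ hg)
  · intro d hd hdm
    rw [MvPolynomial.coeff_monomial, if_neg fun h => hdm (hidx d hd m hm h)]
  · exact fun h => absurd hm h

variable {F : Type*} [Field F] [Fintype F] {κ : Type*} [NormedField κ] [Algebra F κ] [IsUltrametricDist κ]
  {θ : κ} {q : ℕ}

lemma norm_powerSum_le (hq : 2 ≤ q) (hF : ∀ a : F, algebraMap F κ a ^ q = algebraMap F κ a)
    (hθ : 1 < ‖θ‖) (d : ℕ) {n : ℕ} : ‖powerSum F θ d n‖ ≤ (‖θ‖⁻¹) ^ (d * n) := by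
  unfold powerSum
  refine IsUltrametricDist.norm_sum_le_of_forall_le_of_nonneg (by positivity) fun a ha => ?_
  obtain ⟨ha1, ha2⟩ := mem_monics.mp ha
  rw [norm_inv, norm_pow, norm_aeval hq hF hθ ha1.ne_zero, ha2, ← pow_mul, inv_pow]

lemma powerSum_zero (n : ℕ) : powerSum F θ 0 n = 1 := by
  have : monics F 0 = {1} := by
    ext a
    rw [mem_monics, Finset.mem_singleton]
    constructor
    · rintro ⟨h1, h2⟩
      exact h1.natDegree_eq_zero.mp h2
    · rintro rfl
      simp
  simp [powerSum, this]

/-- `ζ(n)` and `ζ(n)² - 2 ζ(n,n)` have absolute value one, the term `a = 1` dominating. -/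
lemma norm_zeta (hq : 2 ≤ q) (hF : ∀ a : F, algebraMap F κ a ^ q = algebraMap F κ a)
    (hθ : 1 < ‖θ‖) {n : ℕ} (hn : 1 ≤ n) {ζ ζ2 : κ}
    (hζ : Tendsto (fun m => ∑ d ∈ Finset.range m, powerSum F θ d n) atTop (𝓝 ζ))
    (hζ2 : Tendsto (fun m => ∑ d ∈ Finset.range m, powerSum F θ d n *
      (ζ - ∑ i ∈ Finset.range (d + 1), powerSum F θ i n)) atTop (𝓝 ζ2)) :
    ‖ζ‖ = 1 ∧ ‖ζ ^ 2 - 2 * ζ2‖ = 1 := by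
  have hlt : ‖θ‖⁻¹ < 1 := inv_lt_one_of_one_lt₀ hθ
  have h0 : (0 : ℝ) ≤ ‖θ‖⁻¹ := by positivity
  have hS : ∀ d, 1 ≤ d → ‖powerSum F θ d n‖ ≤ ‖θ‖⁻¹ := fun d hd =>
    (norm_powerSum_le hq hF hθ d).trans
      (pow_le_of_le_one h0 hlt.le (Nat.mul_pos hd hn).ne')
  have hS1 : ∀ d, ‖powerSum F θ d n‖ ≤ 1 := fun d =>
    (norm_powerSum_le hq hF hθ d).trans (pow_le_one₀ h0 hlt.le)
  have hpart : ∀ d, ‖ζ - ∑ i ∈ Finset.range (d + 1), powerSum F θ i n‖ ≤ ‖θ‖⁻¹ := by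
    intro d
    have ht : Tendsto (fun m => ‖∑ i ∈ Finset.range m, powerSum F θ i n -
        ∑ i ∈ Finset.range (d + 1), powerSum F θ i n‖) atTop
        (𝓝 ‖ζ - ∑ i ∈ Finset.range (d + 1), powerSum F θ i n‖) := (hζ.sub_const _).norm
    refine le_of_tendsto ht ((eventually_ge_atTop (d + 1)).mono fun m hm => ?_)
    obtain ⟨r, rfl⟩ := Nat.exists_eq_add_of_le hm
    rw [Finset.sum_range_add, add_sub_cancel_left]
    exact IsUltrametricDist.norm_sum_le_of_forall_le_of_nonneg h0 fun i _ => hS _ (by omega)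
  have h1 : ‖ζ - 1‖ ≤ ‖θ‖⁻¹ := by simpa [powerSum_zero] using hpart 0
  have h2 : ‖ζ2‖ ≤ ‖θ‖⁻¹ := by
    refine le_of_tendsto hζ2.norm (Eventually.of_forall fun m => ?_)
    refine IsUltrametricDist.norm_sum_le_of_forall_le_of_nonneg h0 fun d _ => ?_
    rw [norm_mul]
    exact (mul_le_mul (hS1 d) (hpart d) (norm_nonneg _) zero_le_one).trans_eq (one_mul _)
  have hunit : ∀ x : κ, ‖x - 1‖ < 1 → ‖x‖ = 1 := by
    intro x hx
    have := IsUltrametricDist.norm_add_eq_max_of_norm_ne_norm (x := x - 1) (y := 1) (by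
      rw [norm_one]; exact hx.ne)
    rwa [sub_add_cancel, norm_one, max_eq_right hx.le] at this
  have hζ1 := hunit ζ (h1.trans_lt hlt)
  refine ⟨hζ1, hunit _ ?_⟩
  have h3 : ζ ^ 2 - 2 * ζ2 - 1 = (ζ - 1) * (ζ + 1) - 2 * ζ2 := by ring
  have h4 : ‖ζ + 1‖ ≤ 1 := (IsUltrametricDist.norm_add_le_max _ _).trans (by simp [hζ1])
  have h5 : ‖(2 : κ)‖ ≤ 1 := by
    have := IsUltrametricDist.norm_natCast_le_one κ 2
    simpa using this
  rw [h3, sub_eq_add_neg]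
  refine ((IsUltrametricDist.norm_add_le_max _ _).trans ?_).trans_lt hlt
  rw [norm_neg, norm_mul, norm_mul, max_le_iff]
  constructor
  · exact (mul_le_mul h1 h4 (norm_nonneg _) h0).trans_eq (mul_one _)
  · exact (mul_le_mul h5 h2 (norm_nonneg _) zero_le_one).trans_eq (one_mul _)

/-- An element of `F((1/θ))` with a `p`-power in `F(θ)` lies in `F(θ)`. -/
lemma rational_of_pow {p : ℕ} [hp : Fact p.Prime] [CharP κ p] (hq : 2 ≤ q)
    (hF : ∀ a : F, algebraMap F κ a ^ q = algebraMap F κ a)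
    (hθ : 1 < ‖θ‖) (hround : ∀ x : κ, ∃ a : F[X], ‖x - aeval θ a‖ < 1) {c : κ} {i : ℕ} {v w : F[X]}
    (h : aeval θ v * c ^ p ^ i = aeval θ w) : ∃ a : F[X], aeval θ v * c = aeval θ a := by
  obtain ⟨a, ha⟩ := hround (aeval θ v * c)
  refine ⟨a, sub_eq_zero.mp ?_⟩
  have hP := pow_pos hp.out.pos i
  have h1 : (aeval θ v * c - aeval θ a) ^ p ^ i = aeval θ (v ^ (p ^ i - 1) * w - a ^ p ^ i) := by
    rw [sub_pow_char_pow, mul_pow, map_sub, map_mul, map_pow, map_pow, ← h, ← mul_assoc, ← pow_succ,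
      Nat.sub_add_cancel hP]
  by_contra h0
  have h2 : v ^ (p ^ i - 1) * w - a ^ p ^ i ≠ 0 := by
    intro h3
    rw [h3, map_zero] at h1
    exact h0 (pow_eq_zero_iff hP.ne' |>.mp h1)
  have h3 := one_le_norm_aeval hq hF hθ h2
  rw [← h1, norm_pow] at h3
  exact absurd (pow_lt_one₀ (norm_nonneg _) ha hP.ne') (not_lt.mpr h3)

end Transfer

/-! ### The dichotomy over `F[θ]` -/

section AbstractDichotomy

open Polynomial Filter Topology

set_option linter.unusedSectionVars false

variable {F : Type*} [Field F] [Fintype F] {κ : Type*} [NormedField κ] [Algebra F κ] [IsUltrametricDist κ]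
  {L : Type*} [NormedField L] [Algebra F L] [IsUltrametricDist L]
  {q : ℕ}

/-- Comparison of absolute values: since `|η|^(q-1) = |θ|`, the power `η^(q k p^i)` has the absolute
value of an element of `F(θ)ˣ` of the shape `v g^(p^i) / w` only if `q - 1` divides `k`. -/
lemma dvd_of_norm_eq {p s : ℕ} [Fact p.Prime] (hqp : q = p ^ s) (hq : 2 ≤ q)
    (hF : ∀ a : F, algebraMap F L a ^ q = algebraMap F L a) {θ η : L} (hθ : 1 < ‖θ‖)
    (hη : η ^ (q - 1) = -θ) {v w g : F[X]} (hv : v ≠ 0) (hw : w ≠ 0) (hg : g ≠ 0) {k i : ℕ}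
    (h : ‖aeval θ v‖ * (((‖η‖ ^ q)⁻¹) ^ k * ‖aeval θ g‖) ^ p ^ i = ‖aeval θ w‖) : (q - 1) ∣ k := by
  have hηn : ‖η‖ ^ (q - 1) = ‖θ‖ := by rw [← norm_pow, hη, norm_neg]
  have hη1 : 1 < ‖η‖ := by
    by_contra h
    push Not at h
    have := pow_le_one₀ (n := q - 1) (norm_nonneg η) h
    linarith
  have hη0 : ‖η‖ ≠ 0 := by positivity
  rw [norm_aeval hq hF hθ hv, norm_aeval hq hF hθ hw, norm_aeval hq hF hθ hg, ← hηn] at h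
  have h2 : ‖η‖ ^ ((q - 1) * (v.natDegree + g.natDegree * p ^ i)) =
      ‖η‖ ^ ((q - 1) * w.natDegree + q * k * p ^ i) := by
    rw [pow_add, pow_mul ‖η‖ (q - 1) w.natDegree, ← h, mul_pow, ← inv_pow, ← pow_mul, ← pow_mul, ← pow_mul, ← pow_mul,
      ← pow_mul, mul_add, pow_add, inv_pow, ← mul_assoc (q - 1)]
    field_simp
    rw [mul_assoc]
  have h3 := pow_right_injective₀ (by positivity) hη1.ne' h2
  have h4 : (q - 1) ∣ q * k * p ^ i :=
    (Nat.dvd_add_right (dvd_mul_right _ _)).mp (h3 ▸ dvd_mul_right _ _)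
  have hcop : Nat.Coprime (q - 1) q := by
    have := Nat.coprime_self_add_right (m := q - 1) (n := 1)
    rw [Nat.sub_add_cancel (by omega)] at this
    exact this.mpr (Nat.coprime_one_right _)
  have hs : s ≠ 0 := by rintro rfl; simp at hqp; omega
  have hcop' : Nat.Coprime (q - 1) (p ^ i) := by
    apply Nat.Coprime.pow_right
    rw [hqp] at hcop ⊢
    exact (Nat.coprime_pow_right_iff (Nat.pos_of_ne_zero hs) _ _).mp hcop
  exact hcop.dvd_of_dvd_mul_left (hcop'.dvd_of_dvd_mul_right h4)

/-- The dichotomy over `F[θ]`, in a complete field `L ⊇ κ = F((1/θ))` containing `η`. -/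
theorem abstract_dichotomy [CompleteSpace L] {p s : ℕ} [hp : Fact p.Prime] [CharP F p] (hqp : q = p ^ s)
    (hcard : Fintype.card F = q) (e : κ →ₐ[F] L) (he : ∀ x, ‖e x‖ = ‖x‖) {θ : κ} (hθ : 1 < ‖θ‖)
    (hround : ∀ x : κ, ∃ a : F[X], ‖x - aeval θ a‖ < 1) {η : L} (hη : η ^ (q - 1) = -e θ)
    {n : ℕ} (hn : 1 ≤ n) (hodd : ¬ (q - 1) ∣ n) {ζ ζ2 ϖ : κ}
    (hϖ : Tendsto (fun m => ∏ i ∈ Finset.range m, (1 - (θ ^ q ^ (i + 1))⁻¹ * θ)) atTop (𝓝 ϖ))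
    (hζ : Tendsto (fun m => ∑ d ∈ Finset.range m, powerSum F θ d n) atTop (𝓝 ζ))
    (hζ2 : Tendsto (fun m => ∑ d ∈ Finset.range m, powerSum F θ d n *
      (ζ - ∑ i ∈ Finset.range (d + 1), powerSum F θ i n)) atTop (𝓝 ζ2)) :
    (∀ P : MvPolynomial (Fin 3) F[X], MvPolynomial.eval₂ (aeval (e θ) : F[X] →ₐ[F] L).toRingHom
      ![η ^ q * e ϖ⁻¹, e ζ, e ζ2] P = 0 → P = 0) ∨
    ∃ v w : F[X], v ≠ 0 ∧ w ≠ 0 ∧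
      aeval (e θ) v * (e ζ ^ 2 - 2 * e ζ2) = aeval (e θ) w * (η ^ q * e ϖ⁻¹) ^ (2 * n) := by
  have hq : 2 ≤ q := hcard ▸ Fintype.one_lt_card
  have hFκ : ∀ a : F, algebraMap F κ a ^ q = algebraMap F κ a := fun a => by
    rw [← map_pow, ← hcard, FiniteField.pow_card]
  have hFL : ∀ a : F, algebraMap F L a ^ q = algebraMap F L a := fun a => by
    rw [← map_pow, ← hcard, FiniteField.pow_card]
  have hθL : 1 < ‖e θ‖ := by rwa [he]
  have : CharP L p := charP_of_injective_algebraMap (algebraMap F L).injective p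
  have : CharP κ p := charP_of_injective_algebraMap (algebraMap F κ).injective p
  have hcont : Continuous e := (AddMonoidHomClass.isometry_of_norm e he).continuous
  have hae : ∀ v : F[X], aeval (e θ) v = e (aeval θ v) := fun v => aeval_algHom_apply e θ v
  have hpow : ∀ d, e (powerSum F θ d n) = powerSum F (e θ) d n := fun d => by
    simp only [powerSum, map_sum, map_inv₀, map_pow, hae]
  have hθ0 : θ ≠ 0 := fun h => by rw [h, norm_zero] at hθ; linarith
  have heθ0 : e θ ≠ 0 := (map_ne_zero e).mpr hθ0
  have hη0 : η ≠ 0 := by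
    rintro rfl
    rw [zero_pow (by omega)] at hη
    exact heθ0 (by simpa using hη.symm)
  let fr : ℕ → L →+* L := fun ν => iterateFrobenius L p (s * ν)
  have hfr : ∀ ν x, fr ν x = x ^ q ^ ν := fun ν x => by
    simp only [fr, iterateFrobenius_def, hqp, pow_mul]
  obtain ⟨U, Γ, Ω, X₀, Y₀, ϖ', hΓ, hΩ0, hΩ, hX, hY, eΩ, eX, eY, hϖ1, hϖ', hΩθ, hXθ, hYθ⟩ :=
    exists_period_functions hcard hfr hq hFL hθL hη hn
  have hϖe : ϖ' = e ϖ := by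
    refine tendsto_nhds_unique hϖ' (((hcont.tendsto _).comp hϖ).congr fun m => ?_)
    simp [map_prod, Function.comp]
  subst hϖe
  have hϖn : ‖ϖ‖ = 1 := by rw [← he]; exact hϖ1
  have hϖ0 : ϖ ≠ 0 := fun h => by rw [h, norm_zero] at hϖn; exact zero_ne_one hϖn
  have hϖe0 : e ϖ ≠ 0 := (map_ne_zero e).mpr hϖ0
  obtain ⟨hζn, hδn⟩ := norm_zeta hq hFκ hθ hn hζ hζ2
  set ω := evalAt (e θ) Ω with hω
  have hω0 : ω ≠ 0 := by rw [hΩθ]; exact mul_ne_zero (inv_ne_zero (pow_ne_zero _ hη0)) hϖe0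
  have hg0 : aeval (e θ) Γ ≠ 0 := fun h =>
    hΓ (aeval_injective hq hFL hθL (h.trans (map_zero _).symm))
  have hX1 : evalAt (e θ) X₀ = ω ^ n * aeval (e θ) Γ * e ζ := by
    refine tendsto_nhds_unique hXθ ((((hcont.tendsto _).comp hζ).const_mul (ω ^ n * aeval (e θ) Γ)).congr
      fun m => ?_)
    simp only [Function.comp, map_sum, hpow, Finset.mul_sum]
  have hY1 : evalAt (e θ) Y₀ = (ω ^ n * aeval (e θ) Γ) ^ 2 * e ζ2 := by
    refine tendsto_nhds_unique hYθ
      ((((hcont.tendsto _).comp hζ2).const_mul ((ω ^ n * aeval (e θ) Γ) ^ 2)).congr fun m => ?_)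
    simp only [Function.comp, map_sum, map_mul, map_sub, hpow, Finset.mul_sum]
    refine Finset.sum_congr rfl fun d _ => ?_
    rw [hX1, ← Finset.mul_sum]
    ring
  have hωn : ‖ω‖ = (‖η‖ ^ q)⁻¹ := by rw [hΩθ, norm_mul, hϖ1, mul_one, norm_inv, norm_pow]
  have hXne : ∀ (i : ℕ) (v w : F[X]), v ≠ 0 → aeval (e θ) v * evalAt (e θ) X₀ ^ p ^ i ≠ aeval (e θ) w := by
    intro i v w hv h
    have hw : w ≠ 0 := by
      rintro rfl
      rw [map_zero, hX1] at h
      have hv0 : aeval (e θ) v ≠ 0 := fun h => hv (aeval_injective hq hFL hθL (h.trans (map_zero _).symm))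
      have hζ0 : e ζ ≠ 0 := by rw [← norm_ne_zero_iff, he, hζn]; exact one_ne_zero
      exact mul_ne_zero hv0 (pow_ne_zero _ (mul_ne_zero (mul_ne_zero (pow_ne_zero _ hω0) hg0) hζ0)) h
    refine hodd (dvd_of_norm_eq (i := i) hqp hq hFL hθL hη hv hw hΓ ?_)
    rw [← h, hX1, norm_mul, norm_pow, norm_mul, norm_mul, norm_pow, hωn, he ζ, hζn, mul_one]
  by_cases hYne : ∀ (i : ℕ) (v w : F[X]), v ≠ 0 →
      aeval (e θ) v * (evalAt (e θ) X₀ ^ 2 - 2 * evalAt (e θ) Y₀) ^ p ^ i ≠ aeval (e θ) w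
  · left
    intro P hP
    have hwinv : η ^ q * e ϖ⁻¹ = ω⁻¹ := by rw [hΩθ, map_inv₀, mul_inv, inv_inv]
    rw [hwinv] at hP
    refine weighted_transfer _ hω0 hΓ n (fun Q hQ => ?_) P hP
    refine values_algIndep_or hcard hfr hq hFL hθL hn hΩ0 hΩ hX hY eΩ eX eY hXne hYne Q ?_
    rw [hX1, hY1]
    exact hQ
  · right
    push Not at hYne
    obtain ⟨i, v, w, hv, h⟩ := hYne
    have hδ : evalAt (e θ) X₀ ^ 2 - 2 * evalAt (e θ) Y₀ =
        ω ^ (2 * n) * aeval (e θ) (Γ ^ 2) * e (ζ ^ 2 - 2 * ζ2) := by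
      rw [hX1, hY1, map_sub, map_mul, map_pow, map_pow, map_ofNat]
      ring
    have hδ0 : ζ ^ 2 - 2 * ζ2 ≠ 0 := by rw [← norm_ne_zero_iff, hδn]; exact one_ne_zero
    have hΓ2 : Γ ^ 2 ≠ 0 := pow_ne_zero _ hΓ
    have hinj := aeval_injective hq hFL hθL
    have hne : ∀ u : F[X], u ≠ 0 → aeval (e θ) u ≠ 0 := fun u hu h => hu (hinj (h.trans (map_zero _).symm))
    rw [hδ] at h
    have hw : w ≠ 0 := by
      rintro rfl
      rw [map_zero] at h
      exact mul_ne_zero (hne v hv) (pow_ne_zero _ (mul_ne_zero (mul_ne_zero (pow_ne_zero _ hω0)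
        (hne _ hΓ2)) ((map_ne_zero e).mpr hδ0))) h
    obtain ⟨r, hr⟩ : (q - 1) ∣ 2 * n := by
      refine dvd_of_norm_eq (i := i) hqp hq hFL hθL hη hv hw hΓ2 ?_
      rw [← h, norm_mul, norm_pow, norm_mul, norm_mul, norm_pow, hωn, he (ζ ^ 2 - _), hδn, mul_one]
    have hωe : ω ^ (2 * n) = e (((-θ) ^ (r * q))⁻¹ * ϖ ^ (2 * n)) := by
      rw [hΩθ, map_mul, map_inv₀, map_pow, map_neg, ← hη, map_pow, mul_pow, ← pow_mul, inv_pow, ← pow_mul,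
        ← mul_assoc (q - 1), ← hr, mul_comm q]
    set ω₀ := ((-θ) ^ (r * q))⁻¹ * ϖ ^ (2 * n) with hω₀
    have hω₀0 : ω₀ ≠ 0 :=
      mul_ne_zero (inv_ne_zero (pow_ne_zero _ (neg_ne_zero.mpr hθ0))) (pow_ne_zero _ hϖ0)
    have h' : aeval θ (v * (Γ ^ 2) ^ p ^ i) * (ω₀ * (ζ ^ 2 - 2 * ζ2)) ^ p ^ i = aeval θ w := by
      apply (e : κ →+* L).injective
      change e _ = e _
      rw [← hae w, ← h, hωe, hae, hae]
      simp only [map_mul, map_pow]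
      ring
    obtain ⟨a, ha⟩ := rational_of_pow hq hFκ hθ hround h'
    refine ⟨v * (Γ ^ 2) ^ p ^ i, a, mul_ne_zero hv (pow_ne_zero _ hΓ2), ?_, ?_⟩
    · rintro rfl
      rw [map_zero] at ha
      refine mul_ne_zero ?_ (mul_ne_zero hω₀0 hδ0) ha
      intro h0
      exact mul_ne_zero hv (pow_ne_zero _ hΓ2) (aeval_injective hq hFκ hθ (h0.trans (map_zero _).symm))
    · have hwinv : η ^ q * e ϖ⁻¹ = ω⁻¹ := by rw [hΩθ, map_inv₀, mul_inv, inv_inv]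
      rw [hwinv, inv_pow, hωe, hae a, ← ha, map_mul e, map_mul e, ← hae]
      have : e ω₀ ≠ 0 := (map_ne_zero e).mpr hω₀0
      rw [map_sub, map_mul e 2, map_pow, map_ofNat]
      field_simp

end AbstractDichotomy

/-! ### Algebraic extensions of the base field -/

section AlgebraicExtension

open Polynomial Filter Topology

set_option linter.unusedSectionVars false

variable {F : Type*} [Field F] [Fintype F] {κ : Type*} [NontriviallyNormedField κ] [Algebra F κ]
  [IsUltrametricDist κ] [CompleteSpace κ] {q : ℕ}

/-- The dichotomy for a finite extension `L / κ`, normed by the spectral norm. -/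
theorem finite_dichotomy {L : Type*} [Field L] [Algebra κ L] [FiniteDimensional κ L] [Algebra F L]
    [IsScalarTower F κ L] {p s : ℕ} [hp : Fact p.Prime] [CharP F p] (hqp : q = p ^ s)
    (hcard : Fintype.card F = q) {θ : κ} (hθ : 1 < ‖θ‖)
    (hround : ∀ x : κ, ∃ a : F[X], ‖x - aeval θ a‖ < 1) {η : L} (hη : η ^ (q - 1) = -algebraMap κ L θ)
    {n : ℕ} (hn : 1 ≤ n) (hodd : ¬ (q - 1) ∣ n) {ζ ζ2 ϖ : κ}
    (hϖ : Tendsto (fun m => ∏ i ∈ Finset.range m, (1 - (θ ^ q ^ (i + 1))⁻¹ * θ)) atTop (𝓝 ϖ))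
    (hζ : Tendsto (fun m => ∑ d ∈ Finset.range m, powerSum F θ d n) atTop (𝓝 ζ))
    (hζ2 : Tendsto (fun m => ∑ d ∈ Finset.range m, powerSum F θ d n *
      (ζ - ∑ i ∈ Finset.range (d + 1), powerSum F θ i n)) atTop (𝓝 ζ2)) :
    (∀ P : MvPolynomial (Fin 3) F[X],
      MvPolynomial.eval₂ (aeval (algebraMap κ L θ) : F[X] →ₐ[F] L).toRingHom
      ![η ^ q * algebraMap κ L ϖ⁻¹, algebraMap κ L ζ, algebraMap κ L ζ2] P = 0 → P = 0) ∨
    ∃ v w : F[X], v ≠ 0 ∧ w ≠ 0 ∧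
      aeval (algebraMap κ L θ) v * (algebraMap κ L ζ ^ 2 - 2 * algebraMap κ L ζ2) =
        aeval (algebraMap κ L θ) w * (η ^ q * algebraMap κ L ϖ⁻¹) ^ (2 * n) := by
  let _ : NormedField L := spectralNorm.normedField κ L
  have : CompleteSpace L := spectralNorm.completeSpace κ L
  have : IsUltrametricDist L :=
    IsUltrametricDist.isUltrametricDist_of_isNonarchimedean_norm isNonarchimedean_spectralNorm
  exact abstract_dichotomy hqp hcard (IsScalarTower.toAlgHom F κ L) (fun x => spectralNorm_extends x)
    hθ hround hη hn hodd hϖ hζ hζ2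

/-- The dichotomy in an arbitrary algebraic extension `M` of `κ`. -/
theorem algebraic_dichotomy {M : Type*} [Field M] [Algebra κ M] [Algebra.IsAlgebraic κ M] [Algebra F M]
    [IsScalarTower F κ M] {p s : ℕ} [hp : Fact p.Prime] [CharP F p] (hqp : q = p ^ s)
    (hcard : Fintype.card F = q) {θ : κ} (hθ : 1 < ‖θ‖)
    (hround : ∀ x : κ, ∃ a : F[X], ‖x - aeval θ a‖ < 1) {η : M} (hη : η ^ (q - 1) = -algebraMap κ M θ)
    {n : ℕ} (hn : 1 ≤ n) (hodd : ¬ (q - 1) ∣ n) {ζ ζ2 ϖ : κ}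
    (hϖ : Tendsto (fun m => ∏ i ∈ Finset.range m, (1 - (θ ^ q ^ (i + 1))⁻¹ * θ)) atTop (𝓝 ϖ))
    (hζ : Tendsto (fun m => ∑ d ∈ Finset.range m, powerSum F θ d n) atTop (𝓝 ζ))
    (hζ2 : Tendsto (fun m => ∑ d ∈ Finset.range m, powerSum F θ d n *
      (ζ - ∑ i ∈ Finset.range (d + 1), powerSum F θ i n)) atTop (𝓝 ζ2)) :
    (∀ P : MvPolynomial (Fin 3) F[X],
      MvPolynomial.eval₂ (aeval (algebraMap κ M θ) : F[X] →ₐ[F] M).toRingHom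
      ![η ^ q * algebraMap κ M ϖ⁻¹, algebraMap κ M ζ, algebraMap κ M ζ2] P = 0 → P = 0) ∨
    ∃ v w : F[X], v ≠ 0 ∧ w ≠ 0 ∧
      aeval (algebraMap κ M θ) v * (algebraMap κ M ζ ^ 2 - 2 * algebraMap κ M ζ2) =
        aeval (algebraMap κ M θ) w * (η ^ q * algebraMap κ M ϖ⁻¹) ^ (2 * n) := by
  let L := IntermediateField.adjoin κ {η}
  have : FiniteDimensional κ L :=
    IntermediateField.adjoin.finiteDimensional (Algebra.IsIntegral.isIntegral η)
  let _ : Algebra F L := ((algebraMap κ L).comp (algebraMap F κ)).toAlgebra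
  have : IsScalarTower F κ L := IsScalarTower.of_algebraMap_eq fun _ => rfl
  let j : L →+* M := L.val
  have hj : ∀ x : κ, j (algebraMap κ L x) = algebraMap κ M x := fun x => L.val.commutes x
  have hae : ∀ v : F[X], j (aeval (algebraMap κ L θ) v) = aeval (algebraMap κ M θ) v := by
    intro v
    rw [aeval_algebraMap_apply, aeval_algebraMap_apply, hj]
  let η' : L := ⟨η, IntermediateField.mem_adjoin_simple_self κ η⟩
  have hη' : η' ^ (q - 1) = -algebraMap κ L θ := by
    apply j.injective
    rw [map_neg, hj, ← hη, map_pow]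
    rfl
  have hval : ∀ x, j (η' ^ q * algebraMap κ L x) = η ^ q * algebraMap κ M x := fun x => by
    rw [map_mul, map_pow, hj]; rfl
  rcases finite_dichotomy hqp hcard hθ hround hη' hn hodd hϖ hζ hζ2 with h | ⟨v, w, hv, hw, h⟩
  · left
    intro P hP
    apply h
    apply j.injective
    rw [map_zero, ← hP, MvPolynomial.eval₂_comp_left]
    congr 1
    · ext x
      · simp only [RingHom.comp_apply]
        exact hae _
      · simp only [RingHom.comp_apply]
        exact hae _
    · funext i
      fin_cases i
      · exact hval _
      · exact hj _
      · exact hj _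
  · right
    refine ⟨v, w, hv, hw, ?_⟩
    have := congrArg j h
    rw [map_mul, map_mul, hae, hae, map_pow, hval, map_sub, map_mul, map_pow, hj, hj, map_ofNat] at this
    exact this

end AlgebraicExtension

/-! ### Regrouping multizeta sums by degree -/

section Regrouping

open Polynomial Filter Topology

set_option linter.unusedSectionVars false

variable {F : Type*} [Field F] [Fintype F]

/-- The monic polynomials of degree less than `m`. -/
noncomputable def monicsLT (F : Type*) [Field F] [Fintype F] (m : ℕ) : Finset F[X] :=
  open scoped Classical in (Finset.range m).biUnion (monics F)

lemma mem_monicsLT {m : ℕ} {a : F[X]} : a ∈ monicsLT F m ↔ a.Monic ∧ a.natDegree < m := by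
  classical
  simp only [monicsLT, Finset.mem_biUnion, Finset.mem_range, mem_monics]
  constructor
  · rintro ⟨d, hd, h1, rfl⟩
    exact ⟨h1, hd⟩
  · rintro ⟨h1, h2⟩
    exact ⟨_, h2, h1, rfl⟩

lemma sum_monicsLT {A : Type*} [AddCommMonoid A] (m : ℕ) (g : F[X] → A) :
    ∑ a ∈ monicsLT F m, g a = ∑ d ∈ Finset.range m, ∑ a ∈ monics F d, g a := by
  classical
  unfold monicsLT
  rw [Finset.sum_biUnion]
  intro i _ j _ hij
  rw [Function.onFun, Finset.disjoint_left]
  intro a ha hb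
  exact hij ((mem_monics.mp ha).2.symm.trans (mem_monics.mp hb).2)

/-- The index set of a depth `d` multizeta value: tuples of monic polynomials of strictly decreasing
degrees. -/
abbrev MonicTuples (F : Type*) [Field F] (d : ℕ) : Type _ :=
  {a : Fin d → Polynomial F // (∀ i, (a i).Monic) ∧ ∀ i j : Fin d, i < j → (a j).degree < (a i).degree}

/-- The tuples all of whose entries have degree less than `m`. -/
noncomputable def tuplesLT (F : Type*) [Field F] [Fintype F] (d m : ℕ) : Finset (MonicTuples F d) :=
  open scoped Classical in (Fintype.piFinset fun _ : Fin d => monicsLT F m).subtype _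

lemma mem_tuplesLT {d m : ℕ} {a : MonicTuples F d} :
    a ∈ tuplesLT F d m ↔ ∀ i, (a.1 i).natDegree < m := by
  classical
  simp only [tuplesLT, Finset.mem_subtype, Fintype.mem_piFinset, mem_monicsLT]
  exact ⟨fun h i => (h i).2, fun h i => ⟨a.2.1 i, h i⟩⟩

lemma tendsto_tuplesLT (d : ℕ) : Tendsto (tuplesLT F d) atTop atTop := by
  refine tendsto_atTop_finset_of_monotone (fun m m' h a ha => ?_) fun a => ?_
  · rw [mem_tuplesLT] at ha ⊢
    exact fun i => (ha i).trans_le h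
  · refine ⟨∑ i, (a.1 i).natDegree + 1, mem_tuplesLT.mpr fun i => Nat.lt_succ_of_le ?_⟩
    exact Finset.single_le_sum (f := fun i => (a.1 i).natDegree) (fun _ _ => Nat.zero_le _)
      (Finset.mem_univ i)

variable {κ : Type*} [NormedField κ] [Algebra F κ] [IsUltrametricDist κ] [CompleteSpace κ]
  {θ : κ} {q : ℕ}

/-- A multizeta value is the limit of its partial sums over bounded degrees. -/
lemma tendsto_mzv (hq : 2 ≤ q) (hF : ∀ a : F, algebraMap F κ a ^ q = algebraMap F κ a)
    (hθ : 1 < ‖θ‖) {d : ℕ} {n : Fin d → ℕ} (hn : ∀ i, 1 ≤ n i) :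
    Tendsto (fun m => ∑ a ∈ tuplesLT F d m, (∏ i, aeval θ (a.1 i) ^ n i)⁻¹) atTop
      (𝓝 (∑' a : MonicTuples F d, (∏ i, aeval θ (a.1 i) ^ n i)⁻¹)) := by
  have hlt : ‖θ‖⁻¹ < 1 := inv_lt_one_of_one_lt₀ hθ
  have hsum : Summable fun a : MonicTuples F d => (∏ i, aeval θ (a.1 i) ^ n i)⁻¹ := by
    refine NonarchimedeanAddGroup.summable_of_tendsto_cofinite_zero ?_
    rw [Metric.tendsto_nhds]
    intro ε hε
    obtain ⟨m, hm⟩ := exists_pow_lt_of_lt_one hε hlt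
    refine (Finset.finite_toSet (tuplesLT F d m)).subset fun a ha => ?_
    rw [Finset.mem_coe, mem_tuplesLT]
    by_contra hcon
    push Not at hcon
    obtain ⟨i, hi⟩ := hcon
    refine ha ?_
    change dist _ _ < ε
    rw [dist_zero_right, norm_inv, norm_prod]
    refine lt_of_le_of_lt ?_ hm
    rw [inv_pow]
    refine inv_anti₀ (pow_pos (by linarith) m) ?_
    have h1 : ∀ j, 1 ≤ ‖aeval θ (a.1 j) ^ n j‖ := fun j => by
      rw [norm_pow]
      exact one_le_pow₀ (one_le_norm_aeval hq hF hθ (a.2.1 j).ne_zero)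
    calc ‖θ‖ ^ m ≤ ‖θ‖ ^ (a.1 i).natDegree := pow_le_pow_right₀ hθ.le hi
      _ = ‖aeval θ (a.1 i)‖ ^ 1 := by rw [pow_one, norm_aeval hq hF hθ (a.2.1 i).ne_zero]
      _ ≤ ‖aeval θ (a.1 i)‖ ^ n i :=
        pow_le_pow_right₀ (one_le_norm_aeval hq hF hθ (a.2.1 i).ne_zero) (hn i)
      _ = ‖aeval θ (a.1 i) ^ n i‖ := (norm_pow _ _).symm
      _ = ∏ j, if j = i then ‖aeval θ (a.1 j) ^ n j‖ else 1 := by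
        rw [Finset.prod_ite_eq' Finset.univ i, if_pos (Finset.mem_univ i)]
      _ ≤ ∏ j, ‖aeval θ (a.1 j) ^ n j‖ :=
        Finset.prod_le_prod (fun j _ => by split_ifs <;> positivity) fun j _ => by
          split_ifs
          · exact le_rfl
          · exact h1 j
  exact hsum.hasSum.comp (tendsto_tuplesLT d)

/-- `ζ(n)` is the sum over `d` of the power sums `S_d(n)`. -/
lemma tendsto_zeta_one (hq : 2 ≤ q) (hF : ∀ a : F, algebraMap F κ a ^ q = algebraMap F κ a)
    (hθ : 1 < ‖θ‖) {n : ℕ} (hn : 1 ≤ n) :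
    Tendsto (fun m => ∑ d ∈ Finset.range m, powerSum F θ d n) atTop
      (𝓝 (∑' a : MonicTuples F 1, (∏ i, aeval θ (a.1 i) ^ (![n] : Fin 1 → ℕ) i)⁻¹)) := by
  refine (tendsto_mzv (n := ![n]) hq hF hθ (by simpa using hn)).congr fun m => ?_
  simp only [powerSum]
  rw [← sum_monicsLT]
  refine Finset.sum_bij' (fun a _ => a.1 0)
    (fun b hb => ⟨fun _ => b, fun _ => (mem_monicsLT.mp hb).1, fun i j h =>
      absurd h (by rw [Subsingleton.elim i j]; exact lt_irrefl _)⟩) ?_ ?_ ?_ ?_ ?_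
  · exact fun a ha => mem_monicsLT.mpr ⟨a.2.1 0, mem_tuplesLT.mp ha 0⟩
  · exact fun b hb => mem_tuplesLT.mpr fun _ => (mem_monicsLT.mp hb).2
  · intro a ha
    apply Subtype.ext
    funext i
    rw [Subsingleton.elim i 0]
  · exact fun _ _ => rfl
  · intro a ha
    simp

/-- Interchange of summations: `Σ_d S_d (ζ - Z_{d+1}) = Z_m (ζ - Z_m) + Σ_d S_d Z_d`. -/
lemma sum_tail_eq {R : Type*} [CommRing R] (S : ℕ → R) (ζ : R) (m : ℕ) :
    ∑ d ∈ Finset.range m, S d * (ζ - ∑ i ∈ Finset.range (d + 1), S i) =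
      (∑ i ∈ Finset.range m, S i) * (ζ - ∑ i ∈ Finset.range m, S i) +
        ∑ d ∈ Finset.range m, S d * ∑ i ∈ Finset.range d, S i := by
  induction m with
  | zero => simp
  | succ m ih =>
    rw [Finset.sum_range_succ, ih, Finset.sum_range_succ S m, Finset.sum_range_succ]
    ring

/-- `ζ(n,n)` summed over the degree `d` of the second polynomial: the first one then contributes
the tail of `ζ(n)` beyond degree `d`. -/
lemma tendsto_zeta_two (hq : 2 ≤ q) (hF : ∀ a : F, algebraMap F κ a ^ q = algebraMap F κ a)
    (hθ : 1 < ‖θ‖) {n : ℕ} (hn : 1 ≤ n) {ζ : κ}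
    (hζ : Tendsto (fun m => ∑ d ∈ Finset.range m, powerSum F θ d n) atTop (𝓝 ζ)) :
    Tendsto (fun m => ∑ d ∈ Finset.range m, powerSum F θ d n *
      (ζ - ∑ i ∈ Finset.range (d + 1), powerSum F θ i n)) atTop
      (𝓝 (∑' a : MonicTuples F 2, (∏ i, aeval θ (a.1 i) ^ (![n, n] : Fin 2 → ℕ) i)⁻¹)) := by
  have h0 : Tendsto (fun m => (∑ d ∈ Finset.range m, powerSum F θ d n) *
      (ζ - ∑ d ∈ Finset.range m, powerSum F θ d n)) atTop (𝓝 0) := by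
    have := hζ.mul (hζ.const_sub ζ)
    rwa [sub_self, mul_zero] at this
  have h1 := h0.add (tendsto_mzv (F := F) (n := ![n, n]) hq hF hθ (by intro i; fin_cases i <;> simpa using hn))
  rw [zero_add] at h1
  refine h1.congr fun m => ?_
  rw [sum_tail_eq]
  congr 1
  have h2 : ∑ d ∈ Finset.range m, powerSum F θ d n * ∑ i ∈ Finset.range d, powerSum F θ i n =
      ∑ b ∈ monicsLT F m, ∑ c ∈ monicsLT F b.natDegree, ((aeval θ b) ^ n)⁻¹ * ((aeval θ c) ^ n)⁻¹ := by
    rw [sum_monicsLT]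
    refine Finset.sum_congr rfl fun d _ => ?_
    rw [powerSum, Finset.sum_mul]
    refine Finset.sum_congr rfl fun b hb => ?_
    rw [← Finset.mul_sum, sum_monicsLT, (mem_monics.mp hb).2]
    rfl
  rw [h2, Finset.sum_sigma']
  refine Finset.sum_bij' (fun a _ => ⟨a.1 0, a.1 1⟩)
    (fun b hb => ⟨![b.1, b.2], ?_, ?_⟩) ?_ ?_ ?_ ?_ ?_
  · rw [Finset.mem_sigma] at hb
    intro i
    fin_cases i
    · exact (mem_monicsLT.mp hb.1).1
    · exact (mem_monicsLT.mp hb.2).1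
  · rw [Finset.mem_sigma] at hb
    have hlt : b.2.degree < b.1.degree :=
      degree_lt_degree (mem_monicsLT.mp hb.2).2
    intro i j hij
    fin_cases i <;> fin_cases j
    · exact absurd hij (lt_irrefl _)
    · exact hlt
    · exact absurd hij (by decide)
    · exact absurd hij (lt_irrefl _)
  · intro a ha
    rw [Finset.mem_sigma]
    exact ⟨mem_monicsLT.mpr ⟨a.2.1 0, mem_tuplesLT.mp ha 0⟩, mem_monicsLT.mpr ⟨a.2.1 1,
      (natDegree_lt_natDegree_iff (a.2.1 1).ne_zero).mpr (a.2.2 0 1 (by decide))⟩⟩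
  · intro b hb
    rw [Finset.mem_sigma] at hb
    rw [mem_tuplesLT]
    have h3 := (mem_monicsLT.mp hb.1).2
    have h4 := (mem_monicsLT.mp hb.2).2
    intro i
    fin_cases i
    · exact h3
    · exact h4.trans h3
  · intro a ha
    apply Subtype.ext
    funext i
    fin_cases i <;> rfl
  · exact fun _ _ => rfl
  · intro a ha
    simp [Fin.prod_univ_two, mul_comm]

/-- The infinite product of the Carlitz period, as a limit of partial products. -/
lemma exists_period_product (hq : 2 ≤ q) (hθ : 1 < ‖θ‖) :
    ∃ ϖ : κ, Tendsto (fun m => ∏ i ∈ Finset.range m, (1 - (θ ^ q ^ (i + 1))⁻¹ * θ)) atTop (𝓝 ϖ) ∧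
      ∏' i : ℕ, (1 - θ ^ ((1 : ℤ) - (q : ℤ) ^ (i + 1)))⁻¹ = ϖ⁻¹ := by
  have hθ0 : θ ≠ 0 := fun h => by rw [h, norm_zero] at hθ; linarith
  have hlt : ‖θ‖⁻¹ < 1 := inv_lt_one_of_one_lt₀ hθ
  have hpos : (0 : ℝ) ≤ ‖θ‖⁻¹ := by positivity
  let g : ℕ → κ := fun i => -((θ ^ q ^ (i + 1))⁻¹ * θ)
  have hgn : ∀ i, ‖g i‖ ≤ ‖θ‖⁻¹ ^ (i + 1) := by
    intro i
    have h2 : i + 1 + 1 ≤ q ^ (i + 1) := Nat.lt_pow_self (by omega)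
    obtain ⟨r, hr⟩ := Nat.exists_eq_add_of_le h2
    simp only [g, norm_neg, norm_mul, norm_inv, norm_pow]
    rw [hr, show i + 1 + 1 + r = (i + 1 + r) + 1 by ring, pow_succ, mul_inv, mul_assoc,
      inv_mul_cancel₀ (by positivity), mul_one, ← inv_pow]
    exact pow_le_pow_of_le_one hpos hlt.le (by omega)
  have hg1 : ∀ i, ‖g i‖ < 1 := fun i => (hgn i).trans_lt (pow_lt_one₀ hpos hlt (by omega))
  have h1g : ∀ i, ‖1 + g i‖ = 1 := by
    intro i
    rw [IsUltrametricDist.norm_add_eq_max_of_norm_ne_norm (by rw [norm_one]; exact (hg1 i).ne'), norm_one,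
      max_eq_left (hg1 i).le]
  have h1g0 : ∀ i, 1 + g i ≠ 0 := fun i => norm_ne_zero_iff.mp (by rw [h1g]; exact one_ne_zero)
  let h : ℕ → κ := fun i => -(g i) / (1 + g i)
  have hh : ∀ i, 1 + h i = (1 + g i)⁻¹ := fun i => by
    have := h1g0 i
    simp only [h]
    field_simp
    ring
  have hgeo : Summable fun i : ℕ => ‖θ‖⁻¹ ^ (i + 1) :=
    (summable_nat_add_iff 1).mpr (summable_geometric_of_lt_one hpos hlt)
  have mg : Multipliable fun i => 1 + g i := multipliable_one_add_of_summable
    (Summable.of_nonneg_of_le (fun _ => norm_nonneg _) hgn hgeo)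
  have mh : Multipliable fun i => 1 + h i := multipliable_one_add_of_summable
    (Summable.of_nonneg_of_le (fun _ => norm_nonneg _) (fun i => by
      simp only [h, norm_div, norm_neg, h1g, div_one]; exact hgn i) hgeo)
  have tg := mg.hasProd.tendsto_prod_nat
  have th := mh.hasProd.tendsto_prod_nat
  have hmul : (∏' i, (1 + g i)) * ∏' i, (1 + h i) = 1 := by
    refine tendsto_nhds_unique (tg.mul th) (tendsto_const_nhds.congr fun m => ?_)
    rw [← Finset.prod_mul_distrib]
    refine (Finset.prod_eq_one fun i _ => ?_).symm
    rw [hh, mul_inv_cancel₀ (h1g0 i)]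
  refine ⟨∏' i, (1 + g i), tg.congr fun m => Finset.prod_congr rfl fun i _ => ?_, ?_⟩
  · simp only [g, sub_eq_add_neg]
  · rw [← eq_inv_of_mul_eq_one_right hmul]
    refine tprod_congr fun i => ?_
    rw [hh]
    simp only [g, ← sub_eq_add_neg]
    rw [zpow_sub₀ hθ0, zpow_one, div_eq_mul_inv, mul_comm θ, ← Nat.cast_pow, zpow_natCast]

end Regrouping

/-! ### The field of Laurent series and the algebraic closure of `k` -/

section LaurentSeriesField

open Polynomial Filter Topology WithZero

set_option linter.unusedSectionVars false

/-- The `1/θ`-adic valuation of `k_∞` has rank one: an embedding of its value group into the reals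
provides an absolute value on `k_∞`. -/
lemma nonempty_kinfRankOne : Nonempty (Valued.v : Valuation (Kinf Fq) ℤᵐ⁰).RankOne :=
  have : (Valued.v : Valuation (Kinf Fq) ℤᵐ⁰).IsNontrivial := by
    refine ⟨theta Fq, ?_, ?_⟩ <;> rw [theta, LaurentSeries.valuation_single_zpow] <;> simp
  Valuation.nonempty_rankOne_iff_mulArchimedean.mpr
    (MulArchimedean.comap MonoidWithZeroHom.ValueGroup₀.embedding.toMonoidHom
      MonoidWithZeroHom.ValueGroup₀.embedding_strictMono)

lemma theta_pow (i : ℕ) : theta Fq ^ i = HahnSeries.single (-(i : ℤ)) (1 : Fq) := by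
  rw [theta, HahnSeries.single_pow]
  simp

/-- The polynomial part of a Laurent series in `1/θ`. -/
lemma exists_polynomial_part (x : Kinf Fq) :
    ∃ a : Fq[X], Valued.v (x - aeval (theta Fq) a) < (1 : ℤᵐ⁰) := by
  let N := x.order.natAbs + 1
  let a : Fq[X] := ∑ i ∈ Finset.range N, monomial i (x.coeff (-(i : ℤ)))
  have ha : ∀ m : ℤ, (aeval (theta Fq) a).coeff m =
      ∑ i ∈ Finset.range N, if m = -(i : ℤ) then x.coeff (-(i : ℤ)) else 0 := by
    intro m
    simp only [a, map_sum, aeval_monomial, theta_pow]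
    rw [HahnSeries.coeff_sum]
    refine Finset.sum_congr rfl fun i _ => ?_
    rw [LaurentSeries.algebraMap_apply, HahnSeries.C_apply, HahnSeries.single_mul_single, HahnSeries.coeff_single]
    simp
  refine ⟨a, lt_of_le_of_lt ((LaurentSeries.valuation_le_iff_coeff_lt_eq_zero Fq (D := 1)).mpr fun m hm => ?_) ?_⟩
  · rw [HahnSeries.coeff_sub, ha, sub_eq_zero]
    by_cases hmN : -m < (N : ℤ)
    · rw [Finset.sum_eq_single (-m).toNat]
      · rw [Int.toNat_of_nonneg (by omega), neg_neg, if_pos rfl]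
      · intro i _ hi
        rw [if_neg]
        omega
      · intro h
        exact absurd (Finset.mem_range.mpr (by omega)) h
    · rw [Finset.sum_eq_zero]
      · apply HahnSeries.coeff_eq_zero_of_lt_order
        omega
      · intro i hi
        rw [Finset.mem_range] at hi
        rw [if_neg]
        omega
  · rw [← exp_zero, exp_lt_exp]
    norm_num

lemma one_lt_valuation_theta : (1 : ℤᵐ⁰) < Valued.v (theta Fq) := by
  rw [theta, LaurentSeries.valuation_single_zpow, neg_neg, ← exp_zero, exp_lt_exp]
  norm_num

lemma aeval_thetaBar_injective :
    Function.Injective (aeval (thetaBar Fq) : Fq[X] →ₐ[Fq] KinfBar Fq) := by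
  let _ := (nonempty_kinfRankOne Fq).some
  let _ : NontriviallyNormedField (Kinf Fq) := Valued.toNontriviallyNormedField (Kinf Fq) ℤᵐ⁰
  have : IsUltrametricDist (Kinf Fq) :=
    IsUltrametricDist.isUltrametricDist_of_isNonarchimedean_norm (Valued.isNonarchimedean_norm _ _)
  have hθ : 1 < ‖theta Fq‖ := Valued.toNormedField.one_lt_norm_iff.mpr (one_lt_valuation_theta Fq)
  have hF : ∀ a : Fq, algebraMap Fq (Kinf Fq) a ^ Fintype.card Fq = algebraMap Fq (Kinf Fq) a := fun a => by
    rw [← map_pow, FiniteField.pow_card]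
  have h := aeval_injective (q := Fintype.card Fq) Fintype.one_lt_card hF hθ
  intro a b hab
  apply h
  apply (algebraMap (Kinf Fq) (KinfBar Fq)).injective
  rwa [thetaBar, aeval_algebraMap_apply, aeval_algebraMap_apply] at hab

/-- The dichotomy over `𝔽_q[θ]` for the period and the zeta values in `k̄_∞`. -/
theorem kinfBar_dichotomy (n : ℕ) (hn : 1 ≤ n) (hodd : ¬ (Fintype.card Fq - 1) ∣ n)
    (η : KinfBar Fq) (hη : η ^ (Fintype.card Fq - 1) = -thetaBar Fq) :
    (∀ P : MvPolynomial (Fin 3) Fq[X],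
      MvPolynomial.eval₂ (aeval (thetaBar Fq) : Fq[X] →ₐ[Fq] KinfBar Fq).toRingHom
      ![pitilde Fq η, algebraMap (Kinf Fq) (KinfBar Fq) (mzv Fq 1 ![n]),
        algebraMap (Kinf Fq) (KinfBar Fq) (mzv Fq 2 ![n, n])] P = 0 → P = 0) ∨
    ∃ v w : Fq[X], v ≠ 0 ∧ w ≠ 0 ∧
      aeval (thetaBar Fq) v * (algebraMap (Kinf Fq) (KinfBar Fq) (mzv Fq 1 ![n]) ^ 2 -
          2 * algebraMap (Kinf Fq) (KinfBar Fq) (mzv Fq 2 ![n, n])) =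
        aeval (thetaBar Fq) w * pitilde Fq η ^ (2 * n) := by
  let _ := (nonempty_kinfRankOne Fq).some
  let _ : NontriviallyNormedField (Kinf Fq) := Valued.toNontriviallyNormedField (Kinf Fq) ℤᵐ⁰
  have : IsUltrametricDist (Kinf Fq) :=
    IsUltrametricDist.isUltrametricDist_of_isNonarchimedean_norm (Valued.isNonarchimedean_norm _ _)
  have : CompleteSpace (Kinf Fq) := LaurentSeries.instLaurentSeriesComplete
  have hθ : 1 < ‖theta Fq‖ := Valued.toNormedField.one_lt_norm_iff.mpr (one_lt_valuation_theta Fq)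
  have hround : ∀ x : Kinf Fq, ∃ a : Fq[X], ‖x - aeval (theta Fq) a‖ < 1 := fun x => by
    obtain ⟨a, ha⟩ := exists_polynomial_part Fq x
    exact ⟨a, Valued.toNormedField.norm_lt_one_iff.mpr ha⟩
  obtain ⟨p, hp⟩ := CharP.exists Fq
  obtain ⟨s, hpp, hs⟩ := FiniteField.card Fq p
  have : Fact p.Prime := ⟨hpp⟩
  have hq : 2 ≤ Fintype.card Fq := Fintype.one_lt_card
  have hF : ∀ a : Fq, algebraMap Fq (Kinf Fq) a ^ Fintype.card Fq = algebraMap Fq (Kinf Fq) a := fun a => by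
    rw [← map_pow, FiniteField.pow_card]
  obtain ⟨ϖ, hϖ, hϖ'⟩ := exists_period_product (q := Fintype.card Fq) hq hθ
  have hζ := tendsto_zeta_one hq hF hθ hn
  have hζ2 := tendsto_zeta_two hq hF hθ hn hζ
  have hpi : pitilde Fq η = η ^ Fintype.card Fq * algebraMap (Kinf Fq) (KinfBar Fq) ϖ⁻¹ := by
    rw [← hϖ']; rfl
  rw [hpi]
  exact algebraic_dichotomy hs rfl hθ hround hη hn hodd hϖ hζ hζ2

/-- Algebraic independence over a domain passes to the algebraic closure of its fraction field. -/
lemma algIndep_algebraicClosure {R M ι : Type*} [CommRing R] [IsDomain R] [Field M] (s : R →+* M)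
    (k : Subfield M) (hks : ∀ r, s r ∈ k)
    (hk : ∀ x ∈ k, ∃ v w : R, v ≠ 0 ∧ s v * x = s w) (x : ι → M)
    (H : ∀ P : MvPolynomial ι R, MvPolynomial.eval₂ s x P = 0 → P = 0) :
    AlgebraicIndependent (algebraicClosure k M) x := by
  let _ : Algebra R M := s.toAlgebra
  let _ : Algebra R k := (s.codRestrict k hks).toAlgebra
  have : IsScalarTower R k M := IsScalarTower.of_algebraMap_eq fun _ => rfl
  have h0 : AlgebraicIndependent R x := by
    rw [algebraicIndependent_iff]
    exact H
  have : Algebra.IsAlgebraic R k := by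
    refine ⟨fun x => ?_⟩
    obtain ⟨v, w, hv, hvw⟩ := hk x.1 x.2
    refine ⟨Polynomial.C v * Polynomial.X - Polynomial.C w, ?_, ?_⟩
    · intro h
      have := congrArg (fun f => Polynomial.coeff f 1) h
      simp [Polynomial.coeff_C] at this
      exact hv this
    · apply Subtype.ext
      simp only [map_sub, map_mul, aeval_C, aeval_X]
      exact sub_eq_zero.mpr hvw
  have h1 : AlgebraicIndependent k x := h0.extendScalars k
  exact h1.extendScalars (algebraicClosure k M)

lemma aeval_thetaBar_mem (a : Fq[X]) : aeval (thetaBar Fq) a ∈ kSub Fq := by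
  have h1 : thetaBar Fq ∈ kSub Fq := Subfield.subset_closure (Or.inr rfl)
  rw [aeval_eq_sum_range]
  refine Subfield.sum_mem _ fun i _ => ?_
  rw [Algebra.smul_def]
  exact Subfield.mul_mem _ (Subfield.subset_closure (Or.inl ⟨_, rfl⟩)) (Subfield.pow_mem _ h1 _)

/-- `k` is the fraction field of `𝔽_q[θ]`. -/
lemma exists_fraction (x : KinfBar Fq) (hx : x ∈ kSub Fq) :
    ∃ v w : Fq[X], v ≠ 0 ∧ aeval (thetaBar Fq) v * x = aeval (thetaBar Fq) w := by
  induction hx using Subfield.closure_induction with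
  | mem x hx =>
    rcases hx with ⟨a, rfl⟩ | rfl
    · exact ⟨1, C a, one_ne_zero, by rw [map_one, one_mul, aeval_C]; rfl⟩
    · exact ⟨1, X, one_ne_zero, by rw [map_one, one_mul, aeval_X]⟩
  | one => exact ⟨1, 1, one_ne_zero, by rw [mul_one]⟩
  | add x y _ _ ihx ihy =>
    obtain ⟨v, w, hv, h⟩ := ihx
    obtain ⟨v', w', hv', h'⟩ := ihy
    exact ⟨v * v', w * v' + v * w', mul_ne_zero hv hv', by
      rw [map_add, map_mul, map_mul, map_mul, ← h, ← h']; ring⟩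
  | neg x _ ih =>
    obtain ⟨v, w, hv, h⟩ := ih
    exact ⟨v, -w, hv, by rw [map_neg, ← h]; ring⟩
  | inv x _ ih =>
    obtain ⟨v, w, hv, h⟩ := ih
    by_cases hx : x = 0
    · exact ⟨1, 0, one_ne_zero, by rw [hx, inv_zero, mul_zero, map_zero]⟩
    · refine ⟨w, v, ?_, by rw [← h, mul_assoc, mul_inv_cancel₀ hx, mul_one]⟩
      rintro rfl
      rw [map_zero, mul_eq_zero] at h
      exact h.elim (fun h => hv (aeval_thetaBar_injective Fq (h.trans (map_zero _).symm))) hx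
  | mul x y _ _ ihx ihy =>
    obtain ⟨v, w, hv, h⟩ := ihx
    obtain ⟨v', w', hv', h'⟩ := ihy
    exact ⟨v * v', w * w', mul_ne_zero hv hv', by
      rw [map_mul, map_mul, ← h, ← h']; ring⟩

end LaurentSeriesField

/-- For an "odd" integer `n ≥ 1` (i.e. `q − 1 ∤ n`): either `π̃`, `ζ(n)`
and `ζ(n,n)` are algebraically independent over `k̄`, or there is `c ∈ k^×` with
`ζ(n)² − 2ζ(n,n) = c·π̃^{2n}`. -/
theorem pitilde_zeta_algIndep_or_simple_relation
    (n : ℕ) (hn : 1 ≤ n) (hodd : ¬ (Fintype.card Fq - 1) ∣ n)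
    (η : KinfBar Fq) (hη : η ^ (Fintype.card Fq - 1) = -thetaBar Fq) :
    AlgebraicIndependent (kbar Fq)
      ![pitilde Fq η,
        algebraMap (Kinf Fq) (KinfBar Fq) (mzv Fq 1 ![n]),
        algebraMap (Kinf Fq) (KinfBar Fq) (mzv Fq 2 ![n, n])] ∨
      ∃ c ∈ kSub Fq, c ≠ 0 ∧
        algebraMap (Kinf Fq) (KinfBar Fq) (mzv Fq 1 ![n]) ^ 2 -
            2 * algebraMap (Kinf Fq) (KinfBar Fq) (mzv Fq 2 ![n, n]) =
          c * pitilde Fq η ^ (2 * n) := by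
  rcases kinfBar_dichotomy Fq n hn hodd η hη with h | ⟨v, w, hv, hw, h⟩
  · left
    exact algIndep_algebraicClosure _ (kSub Fq) (aeval_thetaBar_mem Fq)
      (exists_fraction Fq) _ h
  · right
    have hne : ∀ u : Polynomial Fq, u ≠ 0 → Polynomial.aeval (thetaBar Fq) u ≠ 0 := fun u hu h =>
      hu (aeval_thetaBar_injective Fq (h.trans (map_zero _).symm))
    refine ⟨Polynomial.aeval (thetaBar Fq) w / Polynomial.aeval (thetaBar Fq) v,
      Subfield.div_mem _ (aeval_thetaBar_mem Fq w) (aeval_thetaBar_mem Fq v),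
      div_ne_zero (hne w hw) (hne v hv), ?_⟩
    rw [div_mul_eq_mul_div, ← h, mul_div_cancel_left₀ _ (hne v hv)]
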